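/- Let p ∈ (7/3, 8/3), σ ≥ 0 and ε > 0, and let γ ∈ W^{(3p−4)/2+σ,2}(ℝ/ℤ,ℝⁿ) be injective and parametrized by arc-length. Then the remainder functional R^p(γ;h) := (1/12) δE_{p,2}(γ;h) − Q^{(p)}(γ,h), defined for h ∈ W^{3p/2−2,2}(ℝ/ℤ,ℝⁿ), satisfies |R^p(γ;h)| ≤ C ‖h‖_{W^{3/2−σ+ε,2}} for a constant C independent of h; in particular R^p(γ;·) extends to a bounded linear functional on W^{3/2−σ+ε,2}(ℝ/ℤ,ℝⁿ). -/

import Mathlib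

open MeasureTheory Set Filter Topology
open scoped ENNReal

noncomputable section

/-- The area `|a ∧ b|` of the parallelogram spanned by `a, b ∈ ℝⁿ`. -/
def wedgeNorm {n : ℕ} (a b : EuclideanSpace ℝ (Fin n)) : ℝ :=
  Real.sqrt (‖a‖ ^ 2 * ‖b‖ ^ 2 - (inner ℝ a b : ℝ) ^ 2)

/-- `1 / R^{p,q}(x,y,z) = |(y-x) ∧ (z-x)|^q / (|y-z| |y-x| |z-x|)^p`. -/
def invR {n : ℕ} (p q : ℝ) (x y z : EuclideanSpace ℝ (Fin n)) : ℝ :=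
  wedgeNorm (y - x) (z - x) ^ q / (‖y - z‖ * ‖y - x‖ * ‖z - x‖) ^ p

/-- The generalized integral Menger curvature `E_{p,q}` of a closed curve,
modelled by a `1`-periodic function together with its derivative,
the parameter domain `ℝ/ℤ` being represented by `[0,1)`; values in `[0,∞]`. -/
def menger {n : ℕ} (p q : ℝ) (γ γ' : ℝ → EuclideanSpace ℝ (Fin n)) : ℝ≥0∞ :=
  ∫⁻ u₁ in Ico (0:ℝ) 1, ∫⁻ u₂ in Ico (0:ℝ) 1, ∫⁻ u₃ in Ico (0:ℝ) 1,
    ENNReal.ofReal (‖γ' u₁‖ * ‖γ' u₂‖ * ‖γ' u₃‖ * invR p q (γ u₁) (γ u₂) (γ u₃))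

/-- Injectivity of a `1`-periodic curve as a map on `ℝ/ℤ`. -/
def InjCircle {n : ℕ} (γ : ℝ → EuclideanSpace ℝ (Fin n)) : Prop :=
  ∀ u v : ℝ, γ u = γ v → ∃ k : ℤ, v = u + k

/-- Distance on `ℝ/ℤ`. -/
def circleDist (u v : ℝ) : ℝ := ⨅ k : ℤ, |u - v - (k : ℝ)|

/-- The `ρ`-th power of the Sobolev–Slobodeckiĭ seminorm `[f]_{W^{1+s,ρ}}`
of a periodic function with derivative `f'`; values in `[0,∞]`. -/
def sobSemiPow {n : ℕ} (s ρ : ℝ) (f' : ℝ → EuclideanSpace ℝ (Fin n)) : ℝ≥0∞ :=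
  ∫⁻ u in Ico (0:ℝ) 1, ∫⁻ w in Icc (-(1/2) : ℝ) (1/2),
    ENNReal.ofReal (‖f' (u + w) - f' u‖ ^ ρ / |w| ^ (1 + ρ * s))

/-- The norm `‖f‖_{W^{1+s,ρ}} = ‖f‖_{W^{1,ρ}} + [f]_{W^{1+s,ρ}}`. -/
def sobNorm {n : ℕ} (s ρ : ℝ) (f f' : ℝ → EuclideanSpace ℝ (Fin n)) : ℝ :=
  (∫ u in Ico (0:ℝ) 1, ‖f u‖ ^ ρ) ^ (1/ρ) + (∫ u in Ico (0:ℝ) 1, ‖f' u‖ ^ ρ) ^ (1/ρ)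
    + (sobSemiPow s ρ f').toReal ^ (1/ρ)

/-- `γ` is a closed `W^{1,1}` curve with weak derivative `γ'`:
both are `1`-periodic, `γ'` is measurable and `γ` is the primitive of `γ'`. -/
structure CurvePair {n : ℕ} (γ γ' : ℝ → EuclideanSpace ℝ (Fin n)) : Prop where
  periodic : Function.Periodic γ 1
  periodic' : Function.Periodic γ' 1
  meas' : Measurable γ'
  primitive : ∀ u, γ u = γ 0 + ∫ t in (0:ℝ)..u, γ' t

/-- The range of integration `D ⊆ (-1/2,0) × (0,1/2)`. -/
def domainD : Set (ℝ × ℝ) :=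
  {x | x.1 ∈ Set.Ioo (-(1/2) : ℝ) 0 ∧ x.2 ∈ Set.Ioo (0 : ℝ) (1/2) ∧
    x.2 ≤ 1 + 2 * x.1 ∧ -1 + 2 * x.2 ≤ x.1}

/-- The `k`-th Fourier coefficient `f̂_k ∈ ℂⁿ` of a `1`-periodic function. -/
def fourierCoef {n : ℕ} (f : ℝ → EuclideanSpace ℝ (Fin n)) (k : ℤ) :
    EuclideanSpace ℂ (Fin n) :=
  (WithLp.equiv 2 (Fin n → ℂ)).symm fun j =>
    ∫ x in Ico (0:ℝ) 1, (f x j : ℂ) *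
      Complex.exp (-(((2 * Real.pi * (k : ℝ) * x : ℝ) : ℂ) * Complex.I))

/-- The Bessel-potential Sobolev norm `‖f‖_{W^{t,2}}` defined via Fourier
coefficients. -/
def fourierSobNorm {n : ℕ} (t : ℝ) (f : ℝ → EuclideanSpace ℝ (Fin n)) : ℝ :=
  Real.sqrt (∑' k : ℤ, (1 + (k:ℝ)^2) ^ t * ‖fourierCoef f k‖^2)

/-- The bilinear form `Q^{(p)}`. -/
def Qform {n : ℕ} (p : ℝ) (f g : ℝ → EuclideanSpace ℝ (Fin n)) : ℝ :=
  ∫ u in Ico (0:ℝ) 1, ∫ x in domainD,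
    (inner ℝ (x.2⁻¹ • (f (u + x.2) - f u) - x.1⁻¹ • (f (u + x.1) - f u))
           (x.2⁻¹ • (g (u + x.2) - g u) - x.1⁻¹ • (g (u + x.1) - g u)) : ℝ) /
      (|x.1 - x.2| ^ p * |x.1| ^ (p - 2) * |x.2| ^ (p - 2))

section Development

/-- The character `u ↦ e^{2πiku}`. -/
def ch (k : ℤ) (u : ℝ) : ℂ :=
  Complex.exp (((2 * Real.pi * (k : ℝ) * u : ℝ) : ℂ) * Complex.I)

lemma norm_ch (k : ℤ) (u : ℝ) : ‖ch k u‖ = 1 := Complex.norm_exp_ofReal_mul_I _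

lemma ch_add_freq (j k : ℤ) (u : ℝ) : ch (j + k) u = ch j u * ch k u := by
  simp only [ch, ← Complex.exp_add]; congr 1; push_cast; ring

lemma ch_add (k : ℤ) (u v : ℝ) : ch k (u + v) = ch k u * ch k v := by
  simp only [ch, ← Complex.exp_add]; congr 1; push_cast; ring

lemma ch_zero (u : ℝ) : ch 0 u = 1 := by simp [ch]

@[fun_prop]
lemma continuous_ch (k : ℤ) : Continuous (ch k) := by unfold ch; fun_prop

lemma ch_int (k : ℤ) : ch k 1 = 1 := by
  have := Complex.exp_int_mul_two_pi_mul_I k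
  rw [← this, ch]; congr 1; push_cast; ring

lemma hasDerivAt_ch (k : ℤ) (u : ℝ) :
    HasDerivAt (ch k) (2 * Real.pi * k * Complex.I * ch k u) u := by
  have h1 : HasDerivAt (fun u : ℝ => (((2 * Real.pi * (k : ℝ) * u : ℝ) : ℂ) * Complex.I))
      (2 * Real.pi * k * Complex.I) u := by
    have h0 : HasDerivAt (fun u : ℝ => 2 * Real.pi * (k : ℝ) * u) (2 * Real.pi * k) u := by
      simpa using (hasDerivAt_id u).const_mul (2 * Real.pi * (k : ℝ))
    simpa using h0.ofReal_comp.mul_const Complex.I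
  have h2 : HasDerivAt (ch k) (ch k u * (2 * Real.pi * k * Complex.I)) u := h1.cexp
  rwa [mul_comm (ch k u)] at h2

lemma integral_ch (k : ℤ) : ∫ u in (0:ℝ)..1, ch k u = if k = 0 then 1 else 0 := by
  split_ifs with h
  · simp [h, ch_zero]
  · have hc : (2 * Real.pi * k * Complex.I : ℂ) ≠ 0 := by
      simp [Real.pi_ne_zero, h]
    have h2 := intervalIntegral.integral_eq_sub_of_hasDerivAt (a := 0) (b := 1)
      (f := fun u => (2 * Real.pi * k * Complex.I : ℂ)⁻¹ * ch k u) (f' := ch k)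
      (fun u _ => by
        have := (hasDerivAt_ch k u).const_mul (2 * Real.pi * k * Complex.I : ℂ)⁻¹
        rwa [← mul_assoc, inv_mul_cancel₀ hc, one_mul] at this)
      ((continuous_ch k).intervalIntegrable _ _)
    rw [h2, ch_int]
    have : ch k 0 = 1 := by simp [ch]
    rw [this, sub_self]

/-- The bound `min (2, 2π|k|r)` for the oscillation of `ch k` on an interval of length `r`. -/
def osc (k : ℤ) (r : ℝ) : ℝ := min 2 (2 * Real.pi * |(k : ℝ)| * r)

lemma osc_nonneg (k : ℤ) {r : ℝ} (hr : 0 ≤ r) : 0 ≤ osc k r := by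
  unfold osc; have := Real.pi_pos; positivity

lemma osc_mono (k : ℤ) {r r' : ℝ} (h : r ≤ r') : osc k r ≤ osc k r' := by
  unfold osc; have := Real.pi_pos
  exact min_le_min le_rfl (by gcongr)

lemma norm_ch_sub_le (k : ℤ) (u v : ℝ) : ‖ch k u - ch k v‖ ≤ osc k |u - v| := by
  refine le_min ?_ ?_
  · calc _ ≤ ‖ch k u‖ + ‖ch k v‖ := norm_sub_le _ _
      _ = 2 := by rw [norm_ch, norm_ch]; norm_num
  · have := Convex.norm_image_sub_le_of_norm_hasDerivWithin_le (s := univ) (f := ch k)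
      (C := 2 * Real.pi * |(k:ℝ)|)
      (fun x _ => (hasDerivAt_ch k x).hasDerivWithinAt) (fun x _ => by
        simp [norm_ch, abs_of_pos Real.pi_pos]) convex_univ (mem_univ v) (mem_univ u)
    simpa using this

/-- The submultiplicative weight `(1+|k|)^σ`. -/
def wt (σ : ℝ) (k : ℤ) : ℝ := (1 + |(k : ℝ)|) ^ σ

lemma wt_pos (σ : ℝ) (k : ℤ) : 0 < wt σ k := by unfold wt; positivity

lemma wt_zero (σ : ℝ) : wt σ 0 = 1 := by simp [wt]

lemma wt_exp_zero (k : ℤ) : wt 0 k = 1 := by simp [wt]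

lemma one_le_wt {σ : ℝ} (hσ : 0 ≤ σ) (k : ℤ) : 1 ≤ wt σ k :=
  Real.one_le_rpow (by simp) hσ

lemma wt_add_le {σ : ℝ} (hσ : 0 ≤ σ) (j k : ℤ) : wt σ (j + k) ≤ wt σ j * wt σ k := by
  unfold wt
  rw [← Real.mul_rpow (by positivity) (by positivity)]
  refine Real.rpow_le_rpow (by positivity) ?_ hσ
  push_cast
  nlinarith [abs_add_le (j:ℝ) k, mul_nonneg (abs_nonneg (j:ℝ)) (abs_nonneg (k:ℝ))]

/-- `φ` lies in the weighted Wiener algebra with norm at most `M`. -/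
def InA (σ M : ℝ) (φ : ℝ → ℂ) : Prop :=
  ∃ (ι : Type) (_ : Countable ι) (c : ι → ℂ) (m : ι → ℤ),
    Summable (fun i => ‖c i‖ * wt σ (m i)) ∧ ∑' i, ‖c i‖ * wt σ (m i) ≤ M ∧
      ∀ u, HasSum (fun i => c i * ch (m i) u) (φ u)

/-- The Fourier coefficient of `φ`, viewed as a function on `[0,1]`. -/
def hat (φ : ℝ → ℂ) (k : ℤ) : ℂ := ∫ u in (0:ℝ)..1, φ u * ch (-k) u

/-- `φ` is continuous with Fourier coefficients bounded by `M (1+|k|)^{-σ}`. -/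
def InX (σ M : ℝ) (φ : ℝ → ℂ) : Prop := Continuous φ ∧ ∀ k, wt σ k * ‖hat φ k‖ ≤ M

lemma InA.mono {σ M M' : ℝ} {φ : ℝ → ℂ} (h : InA σ M φ) (hM : M ≤ M') : InA σ M' φ := by
  obtain ⟨ι, hι, c, m, h1, h2, h3⟩ := h
  exact ⟨ι, hι, c, m, h1, h2.trans hM, h3⟩

lemma InA.nonneg {σ M : ℝ} {φ : ℝ → ℂ} (h : InA σ M φ) : 0 ≤ M := by
  obtain ⟨ι, hι, c, m, h1, h2, h3⟩ := h
  exact (tsum_nonneg fun i => mul_nonneg (norm_nonneg _) (wt_pos _ _).le).trans h2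

lemma InA.summable_norm {σ : ℝ} (hσ : 0 ≤ σ) {ι : Type} {c : ι → ℂ} {m : ι → ℤ}
    (h : Summable (fun i => ‖c i‖ * wt σ (m i))) : Summable (fun i => ‖c i‖) :=
  h.of_nonneg_of_le (fun _ => norm_nonneg _)
    fun _ => le_mul_of_one_le_right (norm_nonneg _) (one_le_wt hσ _)

lemma InA.continuous {σ M : ℝ} (hσ : 0 ≤ σ) {φ : ℝ → ℂ} (h : InA σ M φ) : Continuous φ := by
  obtain ⟨ι, hι, c, m, h1, h2, h3⟩ := h
  have : φ = fun u => ∑' i, c i * ch (m i) u := funext fun u => (h3 u).tsum_eq.symm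
  rw [this]
  exact continuous_tsum (fun i => by fun_prop) (InA.summable_norm hσ h1)
    fun i u => by simp [norm_ch]

lemma InA.const (σ : ℝ) (z : ℂ) : InA σ ‖z‖ (fun _ => z) :=
  ⟨Unit, inferInstance, fun _ => z, fun _ => 0, by simp [wt_zero, Summable.of_finite],
    by simp [wt_zero], fun u => by simp [ch_zero]⟩

lemma InA.add {σ M N : ℝ} {φ ψ : ℝ → ℂ} (h : InA σ M φ) (h' : InA σ N ψ) :
    InA σ (M + N) (fun u => φ u + ψ u) := by
  obtain ⟨ι, hι, c, m, h1, h2, h3⟩ := h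
  obtain ⟨κ, hκ, d, l, k1, k2, k3⟩ := h'
  have hs : HasSum (fun i : ι ⊕ κ => ‖Sum.elim c d i‖ * wt σ (Sum.elim m l i)) _ :=
    HasSum.sum (by exact h1.hasSum) (by exact k1.hasSum)
  exact ⟨ι ⊕ κ, inferInstance, Sum.elim c d, Sum.elim m l, hs.summable,
    hs.tsum_eq.trans_le (add_le_add h2 k2), fun u => HasSum.sum (by exact h3 u) (by exact k3 u)⟩

lemma InA.mul {σ M N : ℝ} (hσ : 0 ≤ σ) {φ ψ : ℝ → ℂ} (h : InA σ M φ) (h' : InA σ N ψ) :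
    InA σ (M * N) (fun u => φ u * ψ u) := by
  have hM := h.nonneg
  obtain ⟨ι, hι, c, m, h1, h2, h3⟩ := h
  obtain ⟨κ, hκ, d, l, k1, k2, k3⟩ := h'
  have hs := h1.mul_of_nonneg k1 (fun i => mul_nonneg (norm_nonneg _) (wt_pos _ _).le)
    (fun i => mul_nonneg (norm_nonneg _) (wt_pos _ _).le)
  have hle : ∀ x : ι × κ, ‖c x.1 * d x.2‖ * wt σ (m x.1 + l x.2) ≤
      ‖c x.1‖ * wt σ (m x.1) * (‖d x.2‖ * wt σ (l x.2)) := fun x => by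
    rw [norm_mul]
    calc _ ≤ ‖c x.1‖ * ‖d x.2‖ * (wt σ (m x.1) * wt σ (l x.2)) := by
          gcongr; exact wt_add_le hσ _ _
      _ = _ := by ring
  have hs' : Summable fun x : ι × κ => ‖c x.1 * d x.2‖ * wt σ (m x.1 + l x.2) :=
    hs.of_nonneg_of_le (fun x => mul_nonneg (norm_nonneg _) (wt_pos _ _).le) hle
  refine ⟨ι × κ, inferInstance, fun x => c x.1 * d x.2, fun x => m x.1 + l x.2, hs', ?_, ?_⟩
  · calc _ ≤ ∑' x : ι × κ, ‖c x.1‖ * wt σ (m x.1) * (‖d x.2‖ * wt σ (l x.2)) :=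
          hs'.tsum_le_tsum hle hs
      _ = _ := (h1.tsum_mul_tsum k1 hs).symm
      _ ≤ M * N := mul_le_mul h2 k2
          (tsum_nonneg fun i => mul_nonneg (norm_nonneg _) (wt_pos _ _).le) hM
  · intro u
    have hsum : Summable fun x : ι × κ => c x.1 * ch (m x.1) u * (d x.2 * ch (l x.2) u) :=
      summable_mul_of_summable_norm (f := fun i => c i * ch (m i) u)
        (g := fun i => d i * ch (l i) u)
        (by simpa [norm_ch] using InA.summable_norm hσ h1)
        (by simpa [norm_ch] using InA.summable_norm hσ k1)
    convert! (h3 u).mul (k3 u) hsum using 2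
    rw [ch_add_freq]; ring

lemma InA.const_mul {σ M : ℝ} (hσ : 0 ≤ σ) {φ : ℝ → ℂ} (z : ℂ) (h : InA σ M φ) :
    InA σ (‖z‖ * M) (fun u => z * φ u) := (InA.const σ z).mul hσ h

lemma InA.sub {σ M N : ℝ} (hσ : 0 ≤ σ) {φ ψ : ℝ → ℂ} (h : InA σ M φ) (h' : InA σ N ψ) :
    InA σ (M + N) (fun u => φ u - ψ u) := by
  simpa [sub_eq_add_neg] using h.add (h'.const_mul hσ (-1))

lemma InA.finset_sum {σ : ℝ} {κ : Type*} (s : Finset κ) {M : κ → ℝ} {φ : κ → ℝ → ℂ}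
    (h : ∀ i ∈ s, InA σ (M i) (φ i)) : InA σ (∑ i ∈ s, M i) (fun u => ∑ i ∈ s, φ i u) := by
  classical
  induction s using Finset.induction_on with
  | empty => simpa using InA.const σ 0
  | insert i s hi ih =>
    simp only [Finset.sum_insert hi]
    exact (h i (by simp)).add (ih fun j hj => h j (by simp [hj]))

lemma InA.pow {σ M : ℝ} (hσ : 0 ≤ σ) {φ : ℝ → ℂ} (h : InA σ M φ) (k : ℕ) :
    InA σ (M ^ k) (fun u => φ u ^ k) := by
  induction k with
  | zero => simpa using InA.const σ 1
  | succ k ih => simpa [pow_succ] using ih.mul hσ h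

lemma InA.tsum {σ : ℝ} {N : ℕ → ℝ} (hσ : 0 ≤ σ) {φ : ℕ → ℝ → ℂ} {ψ : ℝ → ℂ}
    (h : ∀ i, InA σ (N i) (φ i)) (hN : Summable N) (hψ : ∀ u, HasSum (fun i => φ i u) (ψ u)) :
    InA σ (∑' i, N i) ψ := by
  choose ι hι c m h1 h2 h3 using h
  have hnn : ∀ (i) (j : ι i), 0 ≤ ‖c i j‖ * wt σ (m i j) :=
    fun i j => mul_nonneg (norm_nonneg _) (wt_pos _ _).le
  have hs2 : Summable fun i => ∑' j : ι i, ‖c i j‖ * wt σ (m i j) :=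
    hN.of_nonneg_of_le (fun i => tsum_nonneg (hnn i)) h2
  have hs : Summable fun x : Σ i, ι i => ‖c x.1 x.2‖ * wt σ (m x.1 x.2) :=
    (summable_sigma_of_nonneg (fun x => hnn x.1 x.2)).2 ⟨h1, hs2⟩
  refine ⟨Σ i, ι i, inferInstance, fun x => c x.1 x.2, fun x => m x.1 x.2, hs, ?_, ?_⟩
  · rw [hs.tsum_sigma' h1]
    exact hs2.tsum_le_tsum h2 hN
  · intro u
    have hsum : Summable fun x : Σ i, ι i => c x.1 x.2 * ch (m x.1 x.2) u :=
      .of_norm (by simpa [norm_ch] using InA.summable_norm hσ hs)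
    have h4 := hsum.hasSum.sigma (fun i => h3 i u)
    rw [← h4.unique (hψ u)]
    exact hsum.hasSum

/-- Fourier coefficients of a product with an absolutely convergent trigonometric series. -/
lemma hasSum_integral_mul {ι : Type} [Countable ι] {c : ι → ℂ} {m : ι → ℤ}
    (hc : Summable (fun i => ‖c i‖)) {φ ψ : ℝ → ℂ} (hφ : ∀ u, HasSum (fun i => c i * ch (m i) u) (φ u))
    (hψ : Continuous ψ) :
    HasSum (fun i => c i * hat ψ (-m i)) (∫ u in (0:ℝ)..1, φ u * ψ u) := by
  obtain ⟨B, hB⟩ := (isCompact_Icc (a := (0:ℝ)) (b := 1)).exists_bound_of_continuousOn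
    hψ.continuousOn
  have := intervalIntegral.hasSum_integral_of_dominated_convergence (a := 0) (b := 1)
    (μ := volume) (F := fun i u => c i * ch (m i) u * ψ u) (f := fun u => φ u * ψ u)
    (fun i _ => ‖c i‖ * B)
    (fun i => (by fun_prop : Continuous fun u => c i * ch (m i) u * ψ u).aestronglyMeasurable)
    (fun i => Eventually.of_forall fun u hu => by
      rw [uIoc_of_le zero_le_one] at hu
      rw [norm_mul, norm_mul, norm_ch, mul_one]
      gcongr
      exact hB u ⟨hu.1.le, hu.2⟩)
    (Eventually.of_forall fun u _ => hc.mul_right B)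
    (by simp)
    (Eventually.of_forall fun u _ => (hφ u).mul_right _)
  convert! this using 1
  ext i
  rw [hat, ← intervalIntegral.integral_const_mul]
  congr 1; ext u; simp; ring

lemma hat_mul_ch (φ : ℝ → ℂ) (k l : ℤ) : hat (fun u => φ u * ch (-k) u) l = hat φ (k + l) := by
  unfold hat; congr 1; ext u; rw [mul_assoc, ← ch_add_freq, neg_add]

/-- The Wiener algebra acts on functions with decaying Fourier coefficients. -/
lemma InA.mul_inX {σ M N : ℝ} (hσ : 0 ≤ σ) {φ ψ : ℝ → ℂ} (h : InA σ M φ) (h' : InX σ N ψ) :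
    InX σ (M * N) (fun u => φ u * ψ u) := by
  have hN : 0 ≤ N := (mul_nonneg (wt_pos σ 0).le (norm_nonneg _)).trans (h'.2 0)
  have hφ := h.continuous hσ
  refine ⟨hφ.mul h'.1, fun k => ?_⟩
  obtain ⟨ι, hι, c, m, h1, h2, h3⟩ := h
  have hs := hasSum_integral_mul (InA.summable_norm hσ h1) h3
    (ψ := fun u => ψ u * ch (-k) u) (by have := h'.1; fun_prop)
  have he : hat (fun u => φ u * ψ u) k = ∑' i, c i * hat ψ (k + -m i) := by
    simp only [hat_mul_ch] at hs
    rw [hs.tsum_eq, hat]; congr 1; ext u; ring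
  have hb : ∀ i, ‖wt σ k * (c i * hat ψ (k + -m i))‖ ≤ ‖c i‖ * wt σ (m i) * N := fun i => by
    have h5 := wt_add_le hσ (m i) (k + -m i)
    rw [show m i + (k + -m i) = k by ring] at h5
    simp only [norm_mul, Complex.norm_real, Real.norm_of_nonneg (wt_pos σ k).le]
    calc _ ≤ wt σ (m i) * wt σ (k + -m i) * (‖c i‖ * ‖hat ψ (k + -m i)‖) := by gcongr
      _ = ‖c i‖ * wt σ (m i) * (wt σ (k + -m i) * ‖hat ψ (k + -m i)‖) := by ring
      _ ≤ _ := by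
        gcongr
        · exact mul_nonneg (norm_nonneg _) (wt_pos _ _).le
        · exact h'.2 _
  have := tsum_of_norm_bounded (h1.hasSum.mul_right N) hb
  rw [tsum_mul_left, ← he, norm_mul, Complex.norm_real, Real.norm_of_nonneg (wt_pos σ k).le] at this
  exact this.trans (by gcongr)

lemma InX.add {σ M N : ℝ} {φ ψ : ℝ → ℂ} (h : InX σ M φ) (h' : InX σ N ψ) :
    InX σ (M + N) (fun u => φ u + ψ u) := by
  have hφ := h.1
  have hψ := h'.1
  refine ⟨hφ.add hψ, fun k => ?_⟩
  have : hat (fun u => φ u + ψ u) k = hat φ k + hat ψ k := by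
    unfold hat
    simp only [add_mul]
    exact intervalIntegral.integral_add (Continuous.intervalIntegrable (by fun_prop) _ _)
      (Continuous.intervalIntegrable (by fun_prop) _ _)
  rw [this]
  have := norm_add_le (hat φ k) (hat ψ k)
  nlinarith [h.2 k, h'.2 k, wt_pos σ k]

lemma InX.const_mul {σ M : ℝ} {φ : ℝ → ℂ} (z : ℂ) (h : InX σ M φ) :
    InX σ (‖z‖ * M) (fun u => z * φ u) := by
  have hφ := h.1
  refine ⟨by fun_prop, fun k => ?_⟩
  have : hat (fun u => z * φ u) k = z * hat φ k := by
    unfold hat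
    simp only [mul_assoc]
    exact intervalIntegral.integral_const_mul _ _
  rw [this, norm_mul]
  calc _ = ‖z‖ * (wt σ k * ‖hat φ k‖) := by ring
    _ ≤ _ := by gcongr; exact h.2 k

lemma InX.sub {σ M N : ℝ} {φ ψ : ℝ → ℂ} (h : InX σ M φ) (h' : InX σ N ψ) :
    InX σ (M + N) (fun u => φ u - ψ u) := by
  simpa [sub_eq_add_neg] using h.add (h'.const_mul (-1))

lemma InX.finset_sum {σ : ℝ} {κ : Type*} (s : Finset κ) {M : κ → ℝ} {φ : κ → ℝ → ℂ}
    (h : ∀ i ∈ s, InX σ (M i) (φ i)) : InX σ (∑ i ∈ s, M i) (fun u => ∑ i ∈ s, φ i u) := by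
  classical
  induction s using Finset.induction_on with
  | empty => exact ⟨by simp [continuous_const], fun k => by simp [hat]⟩
  | insert i s hi ih =>
    simp only [Finset.sum_insert hi]
    exact (h i (by simp)).add (ih fun j hj => h j (by simp [hj]))

/-- Averages over a parameter preserve the decay of Fourier coefficients. -/
lemma InX.integral {σ M : ℝ} {φ : ℝ → ℝ → ℂ} (hφ : Continuous fun x : ℝ × ℝ => φ x.1 x.2)
    (h : ∀ θ ∈ Icc (0:ℝ) 1, InX σ M (φ θ)) :
    InX σ M (fun u => ∫ θ in (0:ℝ)..1, φ θ u) := by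
  refine ⟨intervalIntegral.continuous_parametric_intervalIntegral_of_continuous'
    (f := fun u θ => φ θ u) (hφ.comp continuous_swap) 0 1,
    fun k => ?_⟩
  have : hat (fun u => ∫ θ in (0:ℝ)..1, φ θ u) k = ∫ θ in (0:ℝ)..1, hat (φ θ) k := by
    unfold hat
    simp only [← intervalIntegral.integral_mul_const]
    simp only [intervalIntegral.integral_of_le zero_le_one]
    refine integral_integral_swap (f := fun u θ => φ θ u * ch (-k) u) ?_
    rw [Measure.prod_restrict]
    have hc : Continuous fun x : ℝ × ℝ => φ x.2 x.1 * ch (-k) x.1 :=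
      (hφ.comp continuous_swap).mul ((continuous_ch _).comp continuous_fst)
    exact (hc.continuousOn.integrableOn_compact (isCompact_Icc.prod isCompact_Icc)).mono_set
      (prod_mono Ioc_subset_Icc_self Ioc_subset_Icc_self)
  rw [this]
  have h2 : ‖∫ θ in (0:ℝ)..1, hat (φ θ) k‖ ≤ M / wt σ k * |1 - 0| :=
    intervalIntegral.norm_integral_le_of_norm_le_const fun θ hθ => by
      rw [uIoc_of_le zero_le_one] at hθ
      rw [le_div_iff₀ (wt_pos σ k), mul_comm]
      exact (h θ ⟨hθ.1.le, hθ.2⟩).2 k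
  rw [sub_zero, abs_one, mul_one, le_div_iff₀ (wt_pos σ k), mul_comm] at h2
  exact h2

/-- Duality between decaying Fourier coefficients and weighted trigonometric series. -/
lemma InX.norm_integral_mul_le {σ M : ℝ} {φ g : ℝ → ℂ} (h : InX σ M φ) {c : ℤ → ℂ} {H : ℤ → ℝ}
    (hcH : ∀ k, ‖c k‖ ≤ H k) (hH : Summable H) (hg : ∀ u, HasSum (fun k => c k * ch k u) (g u))
    (hs : Summable fun k => H k * wt (-σ) k) :
    ‖∫ u in (0:ℝ)..1, φ u * g u‖ ≤ M * ∑' k, H k * wt (-σ) k := by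
  have h1 := hasSum_integral_mul (hH.of_nonneg_of_le (fun _ => norm_nonneg _) hcH) hg h.1
  simp only [mul_comm (φ _)]
  rw [← h1.tsum_eq, ← tsum_mul_left]
  refine tsum_of_norm_bounded (hs.mul_left M).hasSum fun k => ?_
  have h2 := h.2 (-k)
  have h3 : wt (-σ) k * wt σ (-k) = 1 := by
    unfold wt
    simp only [Int.cast_neg, abs_neg]
    rw [← Real.rpow_add (by positivity)]; simp
  have h4 : ‖hat φ (-k)‖ = wt (-σ) k * (wt σ (-k) * ‖hat φ (-k)‖) := by
    rw [← mul_assoc, h3, one_mul]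
  rw [norm_mul, h4]
  have := wt_pos (-σ) k
  calc _ ≤ H k * (wt (-σ) k * M) := by
        have := (norm_nonneg _).trans (hcH k)
        exact mul_le_mul (hcH k) (mul_le_mul_of_nonneg_left h2 (wt_pos _ _).le)
          (mul_nonneg (wt_pos _ _).le (mul_nonneg (wt_pos _ _).le (norm_nonneg _))) this
    _ = _ := by ring

/-- The square of a function in the weighted `ℓ²` space. -/
lemma inX_sq {σ : ℝ} (hσ : 0 ≤ σ) {φ : ℝ → ℂ} {c : ℤ → ℂ} {H : ℤ → ℝ} (hcH : ∀ k, ‖c k‖ ≤ H k)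
    (hH : Summable H) (hφ : ∀ u, HasSum (fun k => c k * ch k u) (φ u))
    (hs : Summable fun k => (wt σ k * H k) ^ 2) :
    InX σ (∑' k, (wt σ k * H k) ^ 2) (fun u => φ u ^ 2) := by
  have hc : Summable fun k => ‖c k‖ := hH.of_nonneg_of_le (fun _ => norm_nonneg _) hcH
  have hcont : Continuous φ := by
    have : φ = fun u => ∑' i, c i * ch i u := funext fun u => (hφ u).tsum_eq.symm
    rw [this]
    exact continuous_tsum (fun i => by fun_prop) hc fun i u => by simp [norm_ch]
  have hhat : ∀ k, hat φ k = c k := fun k => by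
    have h1 := hasSum_integral_mul hc hφ (continuous_ch (-k))
    have h2 := h1.unique (hasSum_single k fun j hj => ?_)
    · rw [hat, h2]
      simp only [hat, ← ch_add_freq, integral_ch]; simp
    · simp only [hat, ← ch_add_freq, integral_ch]
      rw [if_neg, mul_zero]
      omega
  refine ⟨hcont.pow 2, fun n => ?_⟩
  have h1 := hasSum_integral_mul hc hφ (ψ := fun u => φ u * ch (-n) u) (by fun_prop)
  simp only [hat_mul_ch, hhat] at h1
  have he : hat (fun u => φ u ^ 2) n = ∑' k, c k * c (n + -k) := by
    rw [h1.tsum_eq, hat]; congr 1; ext u; ring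
  have hs' : Summable fun k => (wt σ (n + -k) * H (n + -k)) ^ 2 :=
    ((Equiv.subLeft n).summable_iff (f := fun k => (wt σ k * H k) ^ 2)).2 hs |>.congr
      fun k => by simp [sub_eq_add_neg]
  have hs'' : ∑' k, (wt σ (n + -k) * H (n + -k)) ^ 2 = ∑' k, (wt σ k * H k) ^ 2 := by
    rw [← (Equiv.subLeft n).tsum_eq (fun k => (wt σ k * H k) ^ 2)]
    simp [sub_eq_add_neg]
  have hb : ∀ k, ‖wt σ n * (c k * c (n + -k))‖ ≤
      (1/2) * (wt σ k * H k) ^ 2 + (1/2) * (wt σ (n + -k) * H (n + -k)) ^ 2 := fun k => by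
    have h5 := wt_add_le hσ k (n + -k)
    rw [show k + (n + -k) = n by ring] at h5
    simp only [norm_mul, Complex.norm_real, Real.norm_of_nonneg (wt_pos σ n).le]
    have hk := hcH k
    have hk' := hcH (n + -k)
    have := (norm_nonneg _).trans hk
    have := wt_pos σ k
    have := wt_pos σ (n + -k)
    calc _ ≤ wt σ k * wt σ (n + -k) * (H k * H (n + -k)) := by gcongr
      _ ≤ _ := by nlinarith [sq_nonneg (wt σ k * H k - wt σ (n + -k) * H (n + -k))]
  have h6 := tsum_of_norm_bounded
    ((hs.mul_left (1/2)).add (hs'.mul_left (1/2))).hasSum hb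
  rw [(hs.mul_left (1/2)).tsum_add (hs'.mul_left (1/2)), tsum_mul_left, tsum_mul_left,
    tsum_mul_left, hs'', ← he, norm_mul, Complex.norm_real, Real.norm_of_nonneg (wt_pos σ n).le] at h6
  linarith

/-- Trigonometric polynomials of degree at most `K`. -/
def trigPoly (K : ℕ) : Submodule ℂ (ℝ → ℂ) :=
  Submodule.span ℂ {φ | ∃ m : ℤ, m ∈ Finset.Icc (-(K:ℤ)) K ∧ φ = ch m}

lemma trigPoly_mul {K L : ℕ} {φ ψ : ℝ → ℂ} (hφ : φ ∈ trigPoly K) (hψ : ψ ∈ trigPoly L) :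
    φ * ψ ∈ trigPoly (K + L) := by
  have h := Submodule.mul_mem_mul hφ hψ
  rw [trigPoly, trigPoly, Submodule.span_mul_span] at h
  refine Submodule.span_mono ?_ h
  rintro _ ⟨_, ⟨m, hm, rfl⟩, _, ⟨l, hl, rfl⟩, rfl⟩
  rw [Finset.mem_Icc] at hm hl
  refine ⟨m + l, ?_, ?_⟩
  · rw [Finset.mem_Icc]; push_cast; omega
  · ext u; simp [ch_add_freq]

lemma trigPoly_pow {K : ℕ} {φ : ℝ → ℂ} (hφ : φ ∈ trigPoly K) (j : ℕ) :
    φ ^ j ∈ trigPoly (K * j) := by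
  induction j with
  | zero => exact Submodule.subset_span ⟨0, by simp, by ext u; simp [ch_zero]⟩
  | succ j ih => rw [pow_succ, mul_add, mul_one]; exact trigPoly_mul ih hφ

lemma hat_ch (m k : ℤ) : hat (ch m) k = if m = k then 1 else 0 := by
  simp only [hat, ← ch_add_freq, integral_ch]
  congr 1
  exact propext ⟨by omega, by omega⟩

lemma trigPoly_eq {K : ℕ} {φ : ℝ → ℂ} (hφ : φ ∈ trigPoly K) :
    Continuous φ ∧ ∀ u, φ u = ∑ m ∈ Finset.Icc (-(K:ℤ)) K, hat φ m * ch m u := by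
  induction hφ using Submodule.span_induction with
  | mem φ h =>
    obtain ⟨m, hm, rfl⟩ := h
    refine ⟨continuous_ch m, fun u => ?_⟩
    rw [Finset.sum_eq_single m (fun k _ hk => by rw [hat_ch, if_neg hk.symm, zero_mul])
      (fun h => absurd hm h), hat_ch, if_pos rfl, one_mul]
  | zero => exact ⟨continuous_const, fun u => by simp [hat]⟩
  | add φ ψ _ _ h1 h2 =>
    have hφ := h1.1
    have hψ := h2.1
    refine ⟨hφ.add hψ, fun u => ?_⟩
    have : ∀ k, hat (φ + ψ) k = hat φ k + hat ψ k := fun k => by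
      unfold hat
      simp only [Pi.add_apply, add_mul]
      exact intervalIntegral.integral_add (Continuous.intervalIntegrable (by fun_prop) _ _)
        (Continuous.intervalIntegrable (by fun_prop) _ _)
    simp only [this, add_mul, Finset.sum_add_distrib, Pi.add_apply]
    rw [← h1.2, ← h2.2]
  | smul z φ _ h1 =>
    refine ⟨h1.1.const_smul z, fun u => ?_⟩
    have : ∀ k, hat (z • φ) k = z * hat φ k := fun k => by
      unfold hat
      simp only [Pi.smul_apply, smul_eq_mul, mul_assoc]
      exact intervalIntegral.integral_const_mul _ _
    simp only [this, mul_assoc, ← Finset.mul_sum, Pi.smul_apply, smul_eq_mul]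
    rw [← h1.2]

lemma trigPoly_inA {σ B : ℝ} (hσ : 0 ≤ σ) {K : ℕ} {φ : ℝ → ℂ} (hφ : φ ∈ trigPoly K)
    (hB : ∀ u, ‖φ u‖ ≤ B) : InA σ ((2 * K + 1) * (1 + K) ^ σ * B) φ := by
  obtain ⟨hc, he⟩ := trigPoly_eq hφ
  have hB0 : 0 ≤ B := (norm_nonneg _).trans (hB 0)
  have hhat : ∀ k, ‖hat φ k‖ ≤ B := fun k => by
    have := intervalIntegral.norm_integral_le_of_norm_le_const (a := 0) (b := 1) (C := B)
      (f := fun u => φ u * ch (-k) u) fun u _ => by rw [norm_mul, norm_ch, mul_one]; exact hB u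
    simpa [hat] using this
  refine ⟨Finset.Icc (-(K:ℤ)) K, inferInstance, fun m => hat φ m, fun m => m,
    Summable.of_finite, ?_, fun u => ?_⟩
  · rw [Finset.tsum_subtype (Finset.Icc (-(K:ℤ)) K) (fun m => ‖hat φ m‖ * wt σ m)]
    calc _ ≤ ∑ m ∈ Finset.Icc (-(K:ℤ)) K, B * (1 + K) ^ σ := by
          refine Finset.sum_le_sum fun m hm => ?_
          have hm' : |(m:ℝ)| ≤ K := by
            rw [Finset.mem_Icc] at hm
            have : |m| ≤ (K:ℤ) := abs_le.2 hm
            exact_mod_cast this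
          refine mul_le_mul (hhat m) ?_ (wt_pos _ _).le hB0
          exact Real.rpow_le_rpow (by positivity) (by linarith) hσ
      _ = _ := by
          rw [Finset.sum_const, Int.card_Icc, nsmul_eq_mul]
          have : ((K:ℤ) + 1 - -(K:ℤ)).toNat = 2 * K + 1 := by omega
          rw [this]; push_cast; ring
  · have := Finset.hasSum (Finset.Icc (-(K:ℤ)) K) (fun m => hat φ m * ch m u)
    rwa [← he] at this

lemma InA.norm_le {σ M : ℝ} (hσ : 0 ≤ σ) {φ : ℝ → ℂ} (h : InA σ M φ) (u : ℝ) : ‖φ u‖ ≤ M := by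
  obtain ⟨ι, hι, c, m, h1, h2, h3⟩ := h
  rw [← (h3 u).tsum_eq]
  refine (tsum_of_norm_bounded h1.hasSum fun i => ?_).trans h2
  rw [norm_mul, norm_ch, mul_one]
  exact le_mul_of_one_le_right (norm_nonneg _) (one_le_wt hσ _)

/-- Powers of a perturbed trigonometric polynomial grow like powers of its supremum. -/
lemma InA.pow_of_trigPoly_add {σ ρ η : ℝ} (hσ : 0 ≤ σ) {K : ℕ} {q e : ℝ → ℂ}
    (hq : q ∈ trigPoly K) (hρ : ∀ u, ‖q u‖ ≤ ρ) (he : InA σ η e) (k : ℕ) :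
    InA σ ((2 * (K * k) + 1) * (1 + K * k) ^ σ * (ρ + η) ^ k) (fun u => (q u + e u) ^ k) := by
  have hρ0 : 0 ≤ ρ := (norm_nonneg _).trans (hρ 0)
  have hη0 := he.nonneg
  simp only [add_pow]
  rw [Finset.mul_sum]
  refine InA.finset_sum _ fun j hj => ?_
  have hj' : j ≤ k := by simpa [Nat.lt_succ_iff] using hj
  have h1 : InA σ ((2 * ((K * j : ℕ) : ℝ) + 1) * (1 + ((K * j : ℕ) : ℝ)) ^ σ * ρ ^ j) (q ^ j) :=
    trigPoly_inA hσ (trigPoly_pow hq j) fun u => by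
      simpa using pow_le_pow_left₀ (norm_nonneg _) (hρ u) j
  have h2 := (h1.mul hσ (he.pow hσ (k - j))).mul hσ (InA.const σ (k.choose j : ℂ))
  refine h2.mono ?_
  simp only [Complex.norm_natCast]
  push_cast
  have hjk : (j:ℝ) ≤ k := by exact_mod_cast hj'
  have : (2 * ((K:ℝ) * j) + 1) * (1 + K * j) ^ σ ≤ (2 * ((K:ℝ) * k) + 1) * (1 + K * k) ^ σ := by
    gcongr
  calc _ ≤ (2 * ((K:ℝ) * k) + 1) * (1 + K * k) ^ σ * ρ ^ j * η ^ (k - j) * (k.choose j) := by gcongr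
    _ = _ := by ring

lemma exists_poly_mul_pow_le {σ R R' : ℝ} (hR : 0 < R) (hRR : R < R') (K : ℕ) :
    ∃ C : ℝ, ∀ k : ℕ, (2 * ((K:ℝ) * k) + 1) * (1 + K * k) ^ σ * R ^ k ≤ C * R' ^ k := by
  have hR' : 0 < R' := hR.trans hRR
  set r := R / R' with hr
  have hr0 : 0 < r := div_pos hR hR'
  have hr1 : r < 1 := (div_lt_one hR').2 hRR
  set N := ⌈σ⌉₊ + 1 with hN
  have ht := tendsto_pow_const_mul_const_pow_of_abs_lt_one N
    (by rwa [abs_of_pos hr0] : |r| < 1)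
  obtain ⟨B, hB⟩ := ht.bddAbove_range
  refine ⟨2 * (1 + K) ^ N * (B / r), fun k => ?_⟩
  have hBk : ((k+1 : ℕ):ℝ) ^ N * r ^ (k+1) ≤ B := hB ⟨k+1, rfl⟩
  have h1 : (1 + (K:ℝ) * k) ^ σ ≤ (1 + K * k) ^ ⌈σ⌉₊ := by
    rw [← Real.rpow_natCast]
    exact Real.rpow_le_rpow_of_exponent_le (by nlinarith [(Nat.cast_nonneg K : (0:ℝ) ≤ K), (Nat.cast_nonneg k : (0:ℝ) ≤ k)]) (Nat.le_ceil σ)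
  have h2 : (1 + (K:ℝ) * k) ≤ (1 + K) * (k + 1 : ℕ) := by
    push_cast; nlinarith [(Nat.cast_nonneg K : (0:ℝ) ≤ K), (Nat.cast_nonneg k : (0:ℝ) ≤ k)]
  have h3 : R ^ k = r ^ k * R' ^ k := by rw [hr, div_pow]; field_simp
  calc _ ≤ 2 * (1 + (K:ℝ) * k) * (1 + K * k) ^ ⌈σ⌉₊ * R ^ k := by
        gcongr; linarith
    _ = 2 * (1 + (K:ℝ) * k) ^ N * R ^ k := by rw [hN, pow_succ]; ring
    _ ≤ 2 * ((1 + (K:ℝ)) * (k + 1 : ℕ)) ^ N * R ^ k := by gcongr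
    _ = 2 * (1 + (K:ℝ)) ^ N * ((((k+1 : ℕ):ℝ) ^ N * r ^ (k+1)) / r) * R' ^ k := by
        rw [mul_pow, h3, pow_succ r]; field_simp
    _ ≤ _ := by gcongr

/-- `φ` is a trigonometric series with frequencies `m` and coefficients dominated by `C`. -/
def DomBy {ι : Type} (C : ι → ℝ) (m : ι → ℤ) (φ : ℝ → ℂ) : Prop :=
  ∃ c : ι → ℂ, (∀ i, ‖c i‖ ≤ C i) ∧ ∀ u, HasSum (fun i => c i * ch (m i) u) (φ u)

lemma DomBy.inA {ι : Type} [Countable ι] {C : ι → ℝ} {m : ι → ℤ} {φ : ℝ → ℂ} {σ : ℝ}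
    (h : DomBy C m φ) (hC : Summable fun i => C i * wt σ (m i)) :
    InA σ (∑' i, C i * wt σ (m i)) φ := by
  obtain ⟨c, h1, h2⟩ := h
  have hle : ∀ i, ‖c i‖ * wt σ (m i) ≤ C i * wt σ (m i) := fun i =>
    mul_le_mul_of_nonneg_right (h1 i) (wt_pos _ _).le
  have hs : Summable fun i => ‖c i‖ * wt σ (m i) :=
    hC.of_nonneg_of_le (fun i => mul_nonneg (norm_nonneg _) (wt_pos _ _).le) hle
  exact ⟨ι, inferInstance, c, m, hs, hs.tsum_le_tsum hle hC, h2⟩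

/-- Uniform functional calculus in the weighted Wiener algebra. -/
lemma exists_inA_powerSeries {σ ρ : ℝ} (hσ : 0 ≤ σ) (hρ : ρ < 1) {ι : Type} [Countable ι]
    {C : ι → ℝ} {m : ι → ℤ} (hC : Summable fun i => C i * wt σ (m i)) {b : ℕ → ℝ}
    (hb : ∀ R : ℝ, 0 ≤ R → R < 1 → Summable fun k => |b k| * R ^ k) :
    ∃ M : ℝ, ∀ y : ℝ → ℂ, DomBy C m y → (∀ u, ‖y u‖ ≤ ρ) → ∀ ψ : ℝ → ℂ,
      (∀ u, HasSum (fun k => (b k : ℂ) * y u ^ k) (ψ u)) → InA σ M ψ := by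
  classical
  by_cases hC0 : ∀ i, 0 ≤ C i
  swap
  · push Not at hC0
    obtain ⟨i, hi⟩ := hC0
    exact ⟨0, fun y ⟨c, hc, _⟩ => absurd ((norm_nonneg _).trans (hc i)) (not_le.2 hi)⟩
  by_cases hρ0 : 0 ≤ ρ
  swap
  · exact ⟨0, fun y _ h => absurd ((norm_nonneg _).trans (h 0)) hρ0⟩
  set η := (1 - ρ) / 4 with hη
  have hη0 : 0 < η := by rw [hη]; linarith
  obtain ⟨s, hs⟩ : ∃ s : Finset ι, ∑' i : {i // i ∉ s}, C i * wt σ (m i) ≤ η := by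
    have := tendsto_tsum_compl_atTop_zero fun i => C i * wt σ (m i)
    obtain ⟨s, hs⟩ := (this.eventually (gt_mem_nhds hη0)).exists
    exact ⟨s, hs.le⟩
  obtain ⟨K, hK⟩ : ∃ K : ℕ, ∀ i ∈ s, m i ∈ Finset.Icc (-(K:ℤ)) K := by
    refine ⟨s.sup fun i => (m i).natAbs, fun i hi => ?_⟩
    have := Finset.le_sup (f := fun i => (m i).natAbs) hi
    rw [Finset.mem_Icc]
    omega
  obtain ⟨B, hB⟩ := exists_poly_mul_pow_le (R := ρ + η + η) (R' := ρ + 3 * η) (σ := σ)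
    (by linarith) (by linarith) K
  have hsum : Summable fun k => |b k| * (B * (ρ + 3 * η) ^ k) := by
    convert! (hb (ρ + 3 * η) (by linarith) (by linarith)).mul_left B using 2
    ring
  refine ⟨∑' k, |b k| * (B * (ρ + 3 * η) ^ k), fun y ⟨c, hc, hy⟩ hyρ ψ hψ => ?_⟩
  set q : ℝ → ℂ := ∑ i ∈ s, c i • ch (m i) with hq
  have hqT : q ∈ trigPoly K := Submodule.sum_mem _ fun i hi =>
    Submodule.smul_mem _ _ (Submodule.subset_span ⟨m i, hK i hi, rfl⟩)
  have heD : DomBy (fun i : {i // i ∉ s} => C i) (fun i => m i) (fun u => y u - q u) := by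
    refine ⟨fun i => c i, fun i => hc i, fun u => ?_⟩
    have h1 := (Finset.hasSum_compl_iff s (f := fun i => c i * ch (m i) u) (a := y u - q u)).2
    refine h1 ?_
    simpa [hq] using hy u
  have he : InA σ η (fun u => y u - q u) :=
    (heD.inA (hC.subtype _)).mono hs
  have hqρ : ∀ u, ‖q u‖ ≤ ρ + η := fun u => by
    have h1 := he.norm_le hσ u
    calc ‖q u‖ = ‖y u - (y u - q u)‖ := by simp
      _ ≤ _ := norm_sub_le _ _
      _ ≤ _ := add_le_add (hyρ u) h1
  refine InA.tsum hσ (φ := fun k u => (b k : ℂ) * y u ^ k) (fun k => ?_) hsum hψ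
  have h1 := (InA.pow_of_trigPoly_add hσ hqT hqρ he k).mono (hB k)
  simpa using h1.const_mul hσ (b k : ℂ)

/-- The expansion of `(1-y)^{-α}` at `y = 0`. -/
lemma exists_powerSeries_rpow (α : ℝ) : ∃ b : ℕ → ℝ,
    (∀ R : ℝ, 0 ≤ R → R < 1 → Summable fun k => |b k| * R ^ k) ∧
      ∀ y : ℝ, |y| < 1 → HasSum (fun k => b k * y ^ k) ((1 - y) ^ (-α)) := by
  have h := Real.one_div_one_sub_rpow_hasFPowerSeriesOnBall_zero α
  refine ⟨fun n => Ring.choose (α + n - 1) n, fun R hR hR1 => ?_, fun y hy => ?_⟩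
  · lift R to NNReal using hR
    have := FormalMultilinearSeries.summable_norm_mul_pow _ (r := R)
      (lt_of_lt_of_le (by exact_mod_cast hR1) h.r_le)
    simpa [FormalMultilinearSeries.ofScalars_norm] using this
  · have := h.hasSum (y := y) (by simpa [enorm_eq_nnnorm, ← NNReal.coe_lt_coe] using hy)
    rw [zero_add] at this
    rw [Real.rpow_neg (by linarith [abs_lt.1 hy]), ← one_div]
    simpa [FormalMultilinearSeries.ofScalars_apply_eq, mul_comm] using this

variable {n : ℕ}

/-- The mean of `f` over the segment from `u + x` to `u + y`. -/
def avg (f : ℝ → EuclideanSpace ℝ (Fin n)) (u x y : ℝ) : EuclideanSpace ℝ (Fin n) :=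
  ∫ θ in (0:ℝ)..1, f (u + (x + θ * (y - x)))

/-- All components of `f` are Fourier series with coefficients dominated by `G`. -/
def HasCoef (G : ℤ → ℝ) (f : ℝ → EuclideanSpace ℝ (Fin n)) : Prop :=
  ∀ i, DomBy G id (fun u => ((f u i : ℝ) : ℂ))

lemma DomBy.continuous {G : ℤ → ℝ} (hG : Summable G) {φ : ℝ → ℂ} (h : DomBy G id φ) :
    Continuous φ := by
  have := h.inA (σ := 0) (by simpa [wt_exp_zero] using hG)
  exact this.continuous le_rfl

lemma HasCoef.continuous {G : ℤ → ℝ} (hG : Summable G) {f : ℝ → EuclideanSpace ℝ (Fin n)}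
    (h : HasCoef G f) : Continuous f := by
  refine (PiLp.continuous_toLp 2 _).comp (continuous_pi fun i => ?_)
  exact Complex.continuous_re.comp ((h i).continuous hG)

lemma continuous_avg {f : ℝ → EuclideanSpace ℝ (Fin n)} (hf : Continuous f) :
    Continuous fun q : ℝ × ℝ × ℝ => avg f q.1 q.2.1 q.2.2 :=
  intervalIntegral.continuous_parametric_intervalIntegral_of_continuous' (by fun_prop) 0 1

lemma avg_self (f : ℝ → EuclideanSpace ℝ (Fin n)) (u x : ℝ) : avg f u x x = f (u + x) := by
  simp [avg]

lemma avg_apply {f : ℝ → EuclideanSpace ℝ (Fin n)} (hf : Continuous f) (u x y : ℝ) (i : Fin n) :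
    avg f u x y i = ∫ θ in (0:ℝ)..1, f (u + (x + θ * (y - x))) i := by
  have := (EuclideanSpace.proj i : EuclideanSpace ℝ (Fin n) →L[ℝ] ℝ).intervalIntegral_comp_comm
    (μ := volume) (a := 0) (b := 1) (f := fun θ => f (u + (x + θ * (y - x))))
    ((by fun_prop : Continuous _).intervalIntegrable _ _)
  exact this.symm

lemma norm_avg_le {f : ℝ → EuclideanSpace ℝ (Fin n)} {B : ℝ} (hB : ∀ u, ‖f u‖ ≤ B) (u x y : ℝ) :
    ‖avg f u x y‖ ≤ B := by
  simpa [avg] using intervalIntegral.norm_integral_le_of_norm_le_const (a := 0) (b := 1)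
    (f := fun θ => f (u + (x + θ * (y - x)))) (C := B) fun θ _ => hB _

lemma avg_add_smul {f g : ℝ → EuclideanSpace ℝ (Fin n)} (hf : Continuous f) (hg : Continuous g)
    (τ u x y : ℝ) : avg (fun t => f t + τ • g t) u x y = avg f u x y + τ • avg g u x y := by
  unfold avg
  rw [intervalIntegral.integral_add (Continuous.intervalIntegrable (by fun_prop) _ _)
    (Continuous.intervalIntegrable (by fun_prop) _ _), intervalIntegral.integral_smul]

/-- The Fourier multiplier of `avg`. -/
def avgMul (k : ℤ) (x y : ℝ) : ℂ := ∫ θ in (0:ℝ)..1, ch k (x + θ * (y - x))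

lemma norm_avgMul_le (k : ℤ) (x y : ℝ) : ‖avgMul k x y‖ ≤ 1 := by
  simpa [avgMul] using intervalIntegral.norm_integral_le_of_norm_le_const (a := 0) (b := 1)
    (f := fun θ => ch k (x + θ * (y - x))) (C := 1) fun θ _ => (norm_ch _ _).le

lemma norm_ch_sub_avgMul_le (k : ℤ) {x y θ r : ℝ} (hθ : θ ∈ Icc (0:ℝ) 1) (hr : |y - x| ≤ r) :
    ‖ch k (x + θ * (y - x)) - avgMul k x y‖ ≤ osc k r := by
  have h : ch k (x + θ * (y - x)) - avgMul k x y =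
      ∫ t in (0:ℝ)..1, (ch k (x + θ * (y - x)) - ch k (x + t * (y - x))) := by
    rw [intervalIntegral.integral_sub (by simp) (Continuous.intervalIntegrable (by fun_prop) _ _)]
    simp [avgMul]
  rw [h]
  have := intervalIntegral.norm_integral_le_of_norm_le_const (a := 0) (b := 1) (C := osc k r)
    (f := fun t => ch k (x + θ * (y - x)) - ch k (x + t * (y - x))) fun t ht => by
      rw [uIoc_of_le zero_le_one] at ht
      refine (norm_ch_sub_le _ _ _).trans (osc_mono k ?_)
      rw [show x + θ * (y - x) - (x + t * (y - x)) = (θ - t) * (y - x) by ring, abs_mul]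
      have : |θ - t| ≤ 1 := abs_le.2 ⟨by linarith [hθ.1, ht.2], by linarith [hθ.2, ht.1]⟩
      nlinarith [abs_nonneg (y - x), abs_nonneg (θ - t)]
  simpa using this

lemma norm_avgMul_sub_le (k : ℤ) {v w : ℝ} (hvw : v ≤ w) :
    ‖avgMul k 0 w - avgMul k 0 v‖ ≤ osc k (w - v) := by
  unfold avgMul
  rw [← intervalIntegral.integral_sub (Continuous.intervalIntegrable (by fun_prop) _ _)
    (Continuous.intervalIntegrable (by fun_prop) _ _)]
  have := intervalIntegral.norm_integral_le_of_norm_le_const (a := 0) (b := 1)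
    (C := osc k (w - v))
    (f := fun t => ch k (0 + t * (w - 0)) - ch k (0 + t * (v - 0))) fun t ht => by
      rw [uIoc_of_le zero_le_one] at ht
      refine (norm_ch_sub_le _ _ _).trans (osc_mono k ?_)
      rw [show 0 + t * (w - 0) - (0 + t * (v - 0)) = t * (w - v) by ring, abs_mul,
        abs_of_nonneg ht.1.le, abs_of_nonneg (sub_nonneg.2 hvw)]
      nlinarith [ht.2]
  simpa using this

lemma hasSum_avg {G : ℤ → ℝ} (hG : Summable G) {f : ℝ → EuclideanSpace ℝ (Fin n)}
    (hf : Continuous f) {i : Fin n} {c : ℤ → ℂ} (hc : ∀ k, ‖c k‖ ≤ G k)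
    (h : ∀ u, HasSum (fun k => c k * ch (id k) u) ((f u i : ℝ) : ℂ)) (u x y : ℝ) :
    HasSum (fun k => c k * avgMul k x y * ch k u) ((avg f u x y i : ℝ) : ℂ) := by
  have := intervalIntegral.hasSum_integral_of_dominated_convergence (a := 0) (b := 1)
    (μ := volume) (F := fun (k : ℤ) θ => c k * ch k (u + (x + θ * (y - x))))
    (f := fun θ => ((f (u + (x + θ * (y - x))) i : ℝ) : ℂ))
    (fun k _ => G k)
    (fun i => (by fun_prop : Continuous _).aestronglyMeasurable)
    (fun k => Eventually.of_forall fun u hu => by simpa [norm_ch] using hc k)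
    (Eventually.of_forall fun u _ => hG)
    (by simp)
    (Eventually.of_forall fun θ _ => h _)
  rw [avg_apply hf, ← intervalIntegral.integral_ofReal]
  convert! this using 1
  ext k
  rw [intervalIntegral.integral_const_mul]
  simp only [ch_add k u]
  rw [intervalIntegral.integral_const_mul, avgMul]
  simp only [ch_add]
  ring

lemma HasCoef.avg {G : ℤ → ℝ} (hG : Summable G) {f : ℝ → EuclideanSpace ℝ (Fin n)}
    (h : HasCoef G f) (x y : ℝ) : HasCoef G (fun u => avg f u x y) := fun i => by
  obtain ⟨c, hc, hs⟩ := h i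
  refine ⟨fun k => c k * avgMul k x y, fun k => ?_,
    fun u => hasSum_avg hG (h.continuous hG) hc hs u x y⟩
  rw [norm_mul]
  calc _ ≤ ‖c k‖ * 1 := by gcongr; exact norm_avgMul_le _ _ _
    _ ≤ _ := by rw [mul_one]; exact hc k

lemma HasCoef.sub_avg {G : ℤ → ℝ} (hG : Summable G) {f : ℝ → EuclideanSpace ℝ (Fin n)}
    (h : HasCoef G f) {x y r θ : ℝ} (hr : |y - x| ≤ r) (hθ : θ ∈ Icc (0:ℝ) 1) :
    HasCoef (fun k => G k * osc k r) (fun u => f (u + (x + θ * (y - x))) - _root_.avg f u x y) :=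
  fun i => by
  obtain ⟨c, hc, hs⟩ := h i
  refine ⟨fun k => c k * (ch k (x + θ * (y - x)) - avgMul k x y), fun k => ?_, fun u => ?_⟩
  · rw [norm_mul]
    exact mul_le_mul (hc k) (norm_ch_sub_avgMul_le k hθ hr) (norm_nonneg _)
      ((norm_nonneg _).trans (hc k))
  · have := (hs (u + (x + θ * (y - x)))).sub (hasSum_avg hG (h.continuous hG) hc hs u x y)
    simp only [PiLp.sub_apply, Complex.ofReal_sub]
    convert! this using 2
    simp only [id, ch_add]; ring

lemma HasCoef.avg_sub_avg {G : ℤ → ℝ} (hG : Summable G) {f : ℝ → EuclideanSpace ℝ (Fin n)}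
    (h : HasCoef G f) {v w : ℝ} (hvw : v ≤ w) :
    HasCoef (fun k => G k * osc k (w - v)) (fun u => _root_.avg f u 0 w - _root_.avg f u 0 v) :=
  fun i => by
  obtain ⟨c, hc, hs⟩ := h i
  refine ⟨fun k => c k * (avgMul k 0 w - avgMul k 0 v), fun k => ?_, fun u => ?_⟩
  · rw [norm_mul]
    exact mul_le_mul (hc k) (norm_avgMul_sub_le k hvw) (norm_nonneg _)
      ((norm_nonneg _).trans (hc k))
  · have := (hasSum_avg hG (h.continuous hG) hc hs u 0 w).sub
      (hasSum_avg hG (h.continuous hG) hc hs u 0 v)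
    simp only [PiLp.sub_apply, Complex.ofReal_sub]
    convert! this using 2
    simp only [id]; ring

/-- The squared weighted `ℓ²` modulus of continuity. -/
def modSq (σ : ℝ) (G : ℤ → ℝ) (r : ℝ) : ℝ := ∑' k, (wt σ k * (G k * osc k r)) ^ 2

lemma modSq_nonneg (σ : ℝ) (G : ℤ → ℝ) (r : ℝ) : 0 ≤ modSq σ G r :=
  tsum_nonneg fun _ => sq_nonneg _

lemma osc_le_two (k : ℤ) (r : ℝ) : osc k r ≤ 2 := min_le_left _ _

lemma summable_modSq {σ : ℝ} {G : ℤ → ℝ} (hG2 : Summable fun k => (wt σ k * G k) ^ 2) {r : ℝ}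
    (hr : 0 ≤ r) : Summable fun k => (wt σ k * (G k * osc k r)) ^ 2 := by
  refine (hG2.mul_left 4).of_nonneg_of_le (fun k => sq_nonneg _) fun k => ?_
  have h1 := osc_le_two k r
  have h2 := osc_nonneg k hr
  have : osc k r ^ 2 ≤ 4 := by nlinarith
  calc _ = osc k r ^ 2 * (wt σ k * G k) ^ 2 := by ring
    _ ≤ _ := by gcongr

lemma summable_mul_osc {G : ℤ → ℝ} (hG0 : ∀ k, 0 ≤ G k) (hG : Summable G) {r : ℝ}
    (hr : 0 ≤ r) : Summable fun k => G k * osc k r :=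
  (hG.mul_right 2).of_nonneg_of_le (fun k => mul_nonneg (hG0 k) (osc_nonneg k hr))
    fun k => mul_le_mul_of_nonneg_left (osc_le_two k r) (hG0 k)

lemma HasCoef.inX_norm_sq {σ : ℝ} (hσ : 0 ≤ σ) {H : ℤ → ℝ} (hH : Summable H)
    (hH2 : Summable fun k => (wt σ k * H k) ^ 2) {f : ℝ → EuclideanSpace ℝ (Fin n)}
    (h : HasCoef H f) :
    InX σ (n * ∑' k, (wt σ k * H k) ^ 2) (fun u => ((‖f u‖ ^ 2 : ℝ) : ℂ)) := by
  have : InX σ (∑ _i : Fin n, ∑' k, (wt σ k * H k) ^ 2)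
      (fun u => ∑ i : Fin n, ((f u i : ℝ) : ℂ) ^ 2) :=
    InX.finset_sum _ fun i _ => by
      obtain ⟨c, hc, hs⟩ := h i
      exact inX_sq hσ hc hH hs hH2
  simpa [EuclideanSpace.norm_sq_eq] using this

lemma one_sub_norm_avg_sq {f : ℝ → EuclideanSpace ℝ (Fin n)} (hf : Continuous f)
    (h1 : ∀ u, ‖f u‖ = 1) (u x y : ℝ) :
    1 - ‖avg f u x y‖ ^ 2 =
      ∫ θ in (0:ℝ)..1, ‖f (u + (x + θ * (y - x))) - avg f u x y‖ ^ 2 := by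
  simp only [norm_sub_sq_real, h1]
  have hi : ∫ θ in (0:ℝ)..1, (inner ℝ (f (u + (x + θ * (y - x)))) (avg f u x y) : ℝ) =
      ‖avg f u x y‖ ^ 2 := by
    rw [← real_inner_self_eq_norm_sq]
    have := (innerSL ℝ (avg f u x y)).intervalIntegral_comp_comm
      (μ := volume) (a := 0) (b := 1) (f := fun θ => f (u + (x + θ * (y - x))))
      ((by fun_prop : Continuous _).intervalIntegrable _ _)
    simp only [innerSL_apply_apply] at this
    simp only [real_inner_comm (avg f u x y)]
    exact this
  rw [intervalIntegral.integral_add (Continuous.intervalIntegrable (by fun_prop) _ _) (by simp),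
    intervalIntegral.integral_sub (by simp) (Continuous.intervalIntegrable (by fun_prop) _ _),
    intervalIntegral.integral_const_mul, hi]
  simp; ring

lemma HasCoef.inX_one_sub {σ : ℝ} (hσ : 0 ≤ σ) {G : ℤ → ℝ} (hG0 : ∀ k, 0 ≤ G k)
    (hG : Summable G) (hG2 : Summable fun k => (wt σ k * G k) ^ 2)
    {f : ℝ → EuclideanSpace ℝ (Fin n)} (h : HasCoef G f) (h1 : ∀ u, ‖f u‖ = 1) {x y r : ℝ}
    (hr : |y - x| ≤ r) :
    InX σ (n * modSq σ G r) (fun u => ((1 - ‖_root_.avg f u x y‖ ^ 2 : ℝ) : ℂ)) := by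
  have hf := h.continuous hG
  have hr0 : 0 ≤ r := (abs_nonneg _).trans hr
  have hc := continuous_avg hf
  have ha : Continuous fun u => _root_.avg f u x y :=
    hc.comp (by fun_prop : Continuous fun u : ℝ => (u, x, y))
  have := InX.integral (σ := σ) (M := n * modSq σ G r)
    (φ := fun θ u => ((‖f (u + (x + θ * (y - x))) - _root_.avg f u x y‖ ^ 2 : ℝ) : ℂ))
    (by
      have : Continuous fun q : ℝ × ℝ => _root_.avg f q.2 x y := ha.comp continuous_snd
      fun_prop)
    fun θ hθ => (h.sub_avg hG hr hθ).inX_norm_sq hσ (summable_mul_osc hG0 hG hr0)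
      (summable_modSq hG2 hr0)
  convert! this using 2 with u
  rw [one_sub_norm_avg_sq hf h1, intervalIntegral.integral_ofReal]

lemma HasCoef.inX_sub {σ : ℝ} (hσ : 0 ≤ σ) {G : ℤ → ℝ} (hG0 : ∀ k, 0 ≤ G k)
    (hG : Summable G) (hG2 : Summable fun k => (wt σ k * G k) ^ 2)
    {f : ℝ → EuclideanSpace ℝ (Fin n)} (h : HasCoef G f) {v w : ℝ} (hvw : v ≤ w) :
    InX σ (n * modSq σ G (w - v))
      (fun u => ((‖_root_.avg f u 0 w - _root_.avg f u 0 v‖ ^ 2 : ℝ) : ℂ)) :=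
  (h.avg_sub_avg hG hvw).inX_norm_sq hσ (summable_mul_osc hG0 hG (sub_nonneg.2 hvw))
    (summable_modSq hG2 (sub_nonneg.2 hvw))

/-- Dominating coefficients for `1 - ‖avg‖²`. -/
def defectCoef (n : ℕ) (G : ℤ → ℝ) : Unit ⊕ (Fin n × ℤ × ℤ) → ℝ :=
  Sum.elim (fun _ => 1) fun x => G x.2.1 * G x.2.2

/-- Frequencies of `1 - ‖avg‖²`. -/
def defectFreq (n : ℕ) : Unit ⊕ (Fin n × ℤ × ℤ) → ℤ :=
  Sum.elim (fun _ => 0) fun x => x.2.1 + x.2.2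

lemma summable_defectCoef {σ : ℝ} (hσ : 0 ≤ σ) {G : ℤ → ℝ} (hG0 : ∀ k, 0 ≤ G k)
    (hG : Summable fun k => G k * wt σ k) :
    Summable fun i => defectCoef n G i * wt σ (defectFreq n i) := by
  have hnn : ∀ k, 0 ≤ G k * wt σ k := fun k => mul_nonneg (hG0 k) (wt_pos _ _).le
  have h2 := hG.mul_of_nonneg hG hnn hnn
  have h3 : Summable fun x : Fin n × ℤ × ℤ =>
      G x.2.1 * wt σ x.2.1 * (G x.2.2 * wt σ x.2.2) := by
    rw [summable_prod_of_nonneg (fun x => mul_nonneg (hnn _) (hnn _))]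
    exact ⟨fun _ => h2, Summable.of_finite⟩
  have h4 : Summable fun x : Fin n × ℤ × ℤ => G x.2.1 * G x.2.2 * wt σ (x.2.1 + x.2.2) := by
    refine h3.of_nonneg_of_le
      (fun x => mul_nonneg (mul_nonneg (hG0 _) (hG0 _)) (wt_pos _ _).le) fun x => ?_
    have := mul_le_mul_of_nonneg_left (wt_add_le hσ x.2.1 x.2.2)
      (mul_nonneg (hG0 x.2.1) (hG0 x.2.2))
    linarith
  have h0 : HasSum (fun _ : Unit => (1:ℝ) * wt σ 0) (1 * wt σ 0) := hasSum_unique _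
  exact (HasSum.sum (f := fun i => defectCoef n G i * wt σ (defectFreq n i)) (by exact h0)
    (by exact h4.hasSum)).summable

lemma HasCoef.domBy_one_sub {G : ℤ → ℝ} (hG0 : ∀ k, 0 ≤ G k) (hG : Summable G)
    {f : ℝ → EuclideanSpace ℝ (Fin n)} (h : HasCoef G f) :
    DomBy (defectCoef n G) (defectFreq n) (fun u => ((1 - ‖f u‖ ^ 2 : ℝ) : ℂ)) := by
  choose c hc hs using h
  refine ⟨Sum.elim (fun _ => 1) fun x => -(c x.1 x.2.1 * c x.1 x.2.2), fun x => ?_, fun u => ?_⟩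
  · rcases x with _ | x
    · simp [defectCoef]
    · simpa [defectCoef] using mul_le_mul (hc _ _) (hc _ _) (norm_nonneg _) (hG0 _)
  · have hn : ∀ i, Summable fun k => ‖c i k * ch (id k) u‖ := fun i =>
      hG.of_nonneg_of_le (fun _ => norm_nonneg _) fun k => by simpa [norm_ch] using hc i k
    have h1 : ∀ i, HasSum (fun x : ℤ × ℤ => -(c i x.1 * c i x.2) * ch (x.1 + x.2) u)
        (-((f u i : ℝ) : ℂ) ^ 2) := fun i => by
      have hm := summable_mul_of_summable_norm (hn i) (hn i)
      have := (HasSum.mul (hs i u) (hs i u) (by exact hm)).neg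
      simp only [id] at this
      refine (congrArg₂ HasSum (funext fun x => ?_) ?_).mp this
      · rw [ch_add_freq]; ring
      · ring
    have hnn := hG.mul_of_nonneg hG hG0 hG0
    have h2 : Summable fun x : Fin n × ℤ × ℤ =>
        -(c x.1 x.2.1 * c x.1 x.2.2) * ch (x.2.1 + x.2.2) u := by
      refine Summable.of_norm ?_
      rw [summable_prod_of_nonneg (fun x => norm_nonneg _)]
      refine ⟨fun i => hnn.of_nonneg_of_le (fun _ => norm_nonneg _) fun x => ?_,
        Summable.of_finite⟩
      simpa [norm_ch] using mul_le_mul (hc _ _) (hc _ _) (norm_nonneg _) (hG0 _)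
    have h3 := h2.hasSum.prod_fiberwise h1
    have h4 := h3.unique (hasSum_fintype _)
    have h5 := h2.hasSum
    rw [h4] at h5
    have h0 : HasSum (fun _ : Unit => (1:ℂ) * ch 0 u) (1 * ch 0 u) := hasSum_unique _
    have := HasSum.sum (f := fun i => Sum.elim (fun _ => 1)
      (fun x : Fin n × ℤ × ℤ => -(c x.1 x.2.1 * c x.1 x.2.2)) i * ch (defectFreq n i) u)
      (a := 1 * ch 0 u) (by exact h0) (by exact h5)
    convert! this using 1
    simp [EuclideanSpace.norm_sq_eq, Finset.sum_neg_distrib, sub_eq_add_neg, ch_zero]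

/-- A family of real functions bounded in the weighted Wiener algebra. -/
def UA {T : Type*} (σ : ℝ) (φ : T → ℝ → ℝ) : Prop :=
  ∃ M, 0 ≤ M ∧ ∀ t, InA σ M (fun u => (φ t u : ℂ))

/-- A family of real functions whose `InX`-bounds are controlled by `ω`. -/
def UX {T : Type*} (σ : ℝ) (ω : T → ℝ) (φ : T → ℝ → ℝ) : Prop :=
  ∃ M, 0 ≤ M ∧ ∀ t, InX σ (M * ω t) (fun u => (φ t u : ℂ))

section Families

variable {T : Type*} {σ : ℝ} {ω : T → ℝ} {φ ψ : T → ℝ → ℝ}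

lemma UA.const (z : ℝ) : UA σ (fun (_ : T) _ => z) :=
  ⟨‖(z:ℂ)‖, norm_nonneg _, fun _ => InA.const σ _⟩

lemma UA.add (h : UA σ φ) (h' : UA σ ψ) : UA σ (fun t u => φ t u + ψ t u) := by
  obtain ⟨M, hM, h⟩ := h
  obtain ⟨N, hN, h'⟩ := h'
  exact ⟨M + N, add_nonneg hM hN, fun t => by simpa using (h t).add (h' t)⟩

lemma UA.mul (hσ : 0 ≤ σ) (h : UA σ φ) (h' : UA σ ψ) : UA σ (fun t u => φ t u * ψ t u) := by
  obtain ⟨M, hM, h⟩ := h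
  obtain ⟨N, hN, h'⟩ := h'
  exact ⟨M * N, mul_nonneg hM hN, fun t => by simpa using (h t).mul hσ (h' t)⟩

lemma UA.sub (hσ : 0 ≤ σ) (h : UA σ φ) (h' : UA σ ψ) : UA σ (fun t u => φ t u - ψ t u) := by
  obtain ⟨M, hM, h⟩ := h
  obtain ⟨N, hN, h'⟩ := h'
  exact ⟨M + N, add_nonneg hM hN, fun t => by simpa using (h t).sub hσ (h' t)⟩

lemma UX.add (h : UX σ ω φ) (h' : UX σ ω ψ) : UX σ ω (fun t u => φ t u + ψ t u) := by
  obtain ⟨M, hM, h⟩ := h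
  obtain ⟨N, hN, h'⟩ := h'
  exact ⟨M + N, add_nonneg hM hN, fun t => by simpa [add_mul] using (h t).add (h' t)⟩

lemma UX.sub (h : UX σ ω φ) (h' : UX σ ω ψ) : UX σ ω (fun t u => φ t u - ψ t u) := by
  obtain ⟨M, hM, h⟩ := h
  obtain ⟨N, hN, h'⟩ := h'
  exact ⟨M + N, add_nonneg hM hN, fun t => by simpa [add_mul] using (h t).sub (h' t)⟩

lemma UA.mul_ux (hσ : 0 ≤ σ) (h : UA σ φ) (h' : UX σ ω ψ) :
    UX σ ω (fun t u => φ t u * ψ t u) := by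
  obtain ⟨M, hM, h⟩ := h
  obtain ⟨N, hN, h'⟩ := h'
  exact ⟨M * N, mul_nonneg hM hN, fun t => by
    simpa [mul_assoc] using (h t).mul_inX hσ (h' t)⟩

lemma UX.congr (h : UX σ ω φ) (he : ∀ t u, ψ t u = φ t u) : UX σ ω ψ := by
  obtain rfl : ψ = φ := by ext; exact he _ _
  exact h

lemma UX.continuous (h : UX σ ω φ) (t : T) : Continuous (φ t) := by
  obtain ⟨M, _, h⟩ := h
  simpa [Function.comp_def] using Complex.continuous_re.comp (h t).1

lemma UX.exists_pairing (hσ : 0 ≤ σ) (h : UX σ ω φ) {P : T → ℝ → EuclideanSpace ℝ (Fin n)}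
    (hP : ∀ i, UA σ (fun t u => P t u i)) :
    ∃ K, 0 ≤ K ∧ ∀ t, ∀ (H : ℤ → ℝ) (g : ℝ → EuclideanSpace ℝ (Fin n)), HasCoef H g →
      Summable H → (Summable fun k => H k * wt (-σ) k) →
      |∫ u in (0:ℝ)..1, φ t u * inner ℝ (P t u) (g u)| ≤
        K * ω t * ∑' k, H k * wt (-σ) k := by
  have h1 : ∀ i, UX σ ω (fun t u => P t u i * φ t u) := fun i => (hP i).mul_ux hσ h
  have hcont : ∀ i t, Continuous fun u => P t u i * φ t u := fun i => (h1 i).continuous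
  choose K hK hb using h1
  refine ⟨∑ i, K i, Finset.sum_nonneg fun i _ => hK i, fun t H g hg hH hs => ?_⟩
  have hgc := hg.continuous hH
  have e : ∀ u, φ t u * inner ℝ (P t u) (g u) = ∑ i, (P t u i * φ t u) * g u i := fun u => by
    simp only [PiLp.inner_apply, Finset.mul_sum, RCLike.inner_apply, conj_trivial]
    exact Finset.sum_congr rfl fun i _ => by ring
  simp only [e]
  rw [intervalIntegral.integral_finsetSum fun i _ => ?_]
  swap
  · exact ((hcont i t).mul (by fun_prop)).intervalIntegrable _ _
  refine (Finset.abs_sum_le_sum_abs _ _).trans ?_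
  rw [Finset.sum_mul, Finset.sum_mul]
  refine Finset.sum_le_sum fun i _ => ?_
  obtain ⟨c, hc, hsum⟩ := hg i
  have := (hb i t).norm_integral_mul_le hc hH hsum hs
  rw [← Real.norm_eq_abs, ← Complex.norm_real, ← intervalIntegral.integral_ofReal]
  simpa using this

lemma exists_inA_rpow {ρ : ℝ} (hσ : 0 ≤ σ) (hρ : ρ < 1) {ι : Type} [Countable ι]
    {C : ι → ℝ} {m : ι → ℤ} (hC : Summable fun i => C i * wt σ (m i)) (α : ℝ)
    {y : T → ℝ → ℝ} (hy : ∀ t, DomBy C m (fun u => (y t u : ℂ))) (hyρ : ∀ t u, |y t u| ≤ ρ) :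
    UA σ (fun t u => (1 - y t u) ^ (-α)) ∧
      ∃ q : T → ℝ → ℝ, UA σ q ∧ ∀ t u, (1 - y t u) ^ (-α) - 1 = q t u * y t u := by
  obtain ⟨b, hb, hbs⟩ := exists_powerSeries_rpow α
  have hb0 : b 0 = 1 := by
    have h1 := hbs 0 (by simp)
    have h2 : HasSum (fun k => b k * (0:ℝ) ^ k) (b 0) := by
      simpa using hasSum_single (f := fun k => b k * (0:ℝ) ^ k) 0 fun k hk => by simp [hk]
    simpa using h2.unique h1
  have hb1 : ∀ R : ℝ, 0 ≤ R → R < 1 → Summable fun k => |b (k + 1)| * R ^ k := fun R hR hR1 => by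
    obtain ⟨R', hR', hR'1⟩ := exists_between hR1
    have h := (summable_nat_add_iff 1).2 (hb R' (hR.trans hR'.le) hR'1)
    refine (h.mul_left R'⁻¹).of_nonneg_of_le (fun k => by positivity) fun k => ?_
    have h0 : 0 < R' := hR.trans_lt hR'
    rw [pow_succ]
    field_simp
    gcongr
  have hlt : ∀ t u, |y t u| < 1 := fun t u => (hyρ t u).trans_lt hρ
  constructor
  · obtain ⟨M, hM⟩ := exists_inA_powerSeries hσ hρ hC hb
    refine ⟨max M 0, le_max_right _ _, fun t => (hM _ (hy t) (fun u => ?_) _ fun u => ?_).mono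
      (le_max_left _ _)⟩
    · simpa using hyρ t u
    · exact_mod_cast hbs _ (hlt t u)
  · obtain ⟨M, hM⟩ := exists_inA_powerSeries hσ hρ hC hb1
    have hs : ∀ t u, Summable fun k => b (k + 1) * y t u ^ k := fun t u => by
      refine Summable.of_norm ((hb1 |y t u| (abs_nonneg _) (hlt t u)).congr fun k => ?_)
      simp
    refine ⟨fun t u => ∑' k, b (k + 1) * y t u ^ k, ⟨max M 0, le_max_right _ _, fun t =>
      (hM _ (hy t) (fun u => ?_) _ fun u => ?_).mono (le_max_left _ _)⟩, fun t u => ?_⟩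
    · simpa using hyρ t u
    · exact_mod_cast (hs t u).hasSum
    · have h1 := (hasSum_nat_add_iff' 1).2 (hbs _ (hlt t u))
      have h2 := (hs t u).hasSum.mul_right (y t u)
      simp only [Finset.range_one, Finset.sum_singleton, hb0, pow_zero, mul_one] at h1
      refine h1.unique ?_
      simpa [pow_succ, mul_assoc] using h2

end Families

/-- The squared area of the parallelogram spanned by `a, b`. -/
def wedgeSq (a b : EuclideanSpace ℝ (Fin n)) : ℝ := ‖a‖ ^ 2 * ‖b‖ ^ 2 - inner ℝ a b ^ 2

/-- The derivative of `wedgeSq` at `(a, b)` in direction `(A, B)`. -/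
def dWedgeSq (a b A B : EuclideanSpace ℝ (Fin n)) : ℝ :=
  2 * inner ℝ a A * ‖b‖ ^ 2 + 2 * ‖a‖ ^ 2 * inner ℝ b B
    - 2 * inner ℝ a b * (inner ℝ a B + inner ℝ b A)

/-- The product of the inverse powers of the chord-arc quotients. -/
def zfac (p : ℝ) (a b d : EuclideanSpace ℝ (Fin n)) : ℝ :=
  (‖a‖ ^ 2) ^ (-(p / 2)) * (‖b‖ ^ 2) ^ (-(p / 2)) * (‖d‖ ^ 2) ^ (-(p / 2))

/-- The logarithmic derivative of the speed and chord factors. -/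
def logDens (p : ℝ) (f g : ℝ → EuclideanSpace ℝ (Fin n)) (u v w : ℝ) : ℝ :=
  inner ℝ (f u) (g u) / ‖f u‖ ^ 2 + inner ℝ (f (u + v)) (g (u + v)) / ‖f (u + v)‖ ^ 2
    + inner ℝ (f (u + w)) (g (u + w)) / ‖f (u + w)‖ ^ 2
    - p * (inner ℝ (avg f u 0 w) (avg g u 0 w) / ‖avg f u 0 w‖ ^ 2
      + inner ℝ (avg f u 0 v) (avg g u 0 v) / ‖avg f u 0 v‖ ^ 2
      + inner ℝ (avg f u v w) (avg g u v w) / ‖avg f u v w‖ ^ 2)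

/-- The nonsingular part of the energy density of a curve with tangent `f` at the points
`u`, `u + v`, `u + w`. -/
def dens (p : ℝ) (f : ℝ → EuclideanSpace ℝ (Fin n)) (u v w : ℝ) : ℝ :=
  ‖f u‖ * ‖f (u + v)‖ * ‖f (u + w)‖ * zfac p (avg f u 0 w) (avg f u 0 v) (avg f u v w)
    * wedgeSq (avg f u 0 w) (avg f u 0 v)

/-- The first variation of `dens` in direction `g`. -/
def dDens (p : ℝ) (f g : ℝ → EuclideanSpace ℝ (Fin n)) (u v w : ℝ) : ℝ :=
  ‖f u‖ * ‖f (u + v)‖ * ‖f (u + w)‖ * zfac p (avg f u 0 w) (avg f u 0 v) (avg f u v w)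
    * (dWedgeSq (avg f u 0 w) (avg f u 0 v) (avg g u 0 w) (avg g u 0 v)
      + wedgeSq (avg f u 0 w) (avg f u 0 v) * logDens p f g u v w)

lemma wedgeSq_eq (a b : EuclideanSpace ℝ (Fin n)) :
    wedgeSq a b = ‖a - b‖ ^ 2 * ((‖a‖ ^ 2 + ‖b‖ ^ 2) / 2 - ‖a - b‖ ^ 2 / 4)
      - (‖a‖ ^ 2 - ‖b‖ ^ 2) ^ 2 / 4 := by
  rw [wedgeSq, norm_sub_sq_real]; ring

lemma dWedgeSq_eq (a b A B : EuclideanSpace ℝ (Fin n)) :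
    dWedgeSq a b A B = inner ℝ a A * (‖b‖ ^ 2 - ‖a‖ ^ 2 + ‖a - b‖ ^ 2)
      + inner ℝ b B * (‖a‖ ^ 2 - ‖b‖ ^ 2 + ‖a - b‖ ^ 2)
      + (‖a‖ ^ 2 + ‖b‖ ^ 2 - ‖a - b‖ ^ 2) * inner ℝ (a - b) (A - B) := by
  rw [dWedgeSq, norm_sub_sq_real]
  simp only [inner_sub_left, inner_sub_right]
  ring

lemma HasCoef.mono {G G' : ℤ → ℝ} {f : ℝ → EuclideanSpace ℝ (Fin n)} (h : HasCoef G f)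
    (hle : ∀ k, G k ≤ G' k) : HasCoef G' f := fun i => by
  obtain ⟨c, hc, hs⟩ := h i
  exact ⟨c, fun k => (hc k).trans (hle k), hs⟩

lemma HasCoef.ua {T : Type*} {σ : ℝ} {G : ℤ → ℝ} (hG0 : ∀ k, 0 ≤ G k)
    (hG : Summable fun k => G k * wt σ k) {P : T → ℝ → EuclideanSpace ℝ (Fin n)}
    (h : ∀ t, HasCoef G (P t)) (i : Fin n) : UA σ (fun t u => P t u i) :=
  ⟨∑' k, G k * wt σ k, tsum_nonneg fun k => mul_nonneg (hG0 k) (wt_pos _ _).le,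
    fun t => (h t i).inA hG⟩

lemma HasCoef.avg_sub_avg_two {G : ℤ → ℝ} (hG0 : ∀ k, 0 ≤ G k) (hG : Summable G)
    {f : ℝ → EuclideanSpace ℝ (Fin n)}
    (h : HasCoef G f) {v w : ℝ} (hvw : v ≤ w) :
    HasCoef (fun k => 2 * G k) (fun u => _root_.avg f u 0 w - _root_.avg f u 0 v) :=
  (h.avg_sub_avg hG hvw).mono fun k => by
    rw [mul_comm]; exact mul_le_mul_of_nonneg_right (osc_le_two k _) (hG0 k)

lemma HasCoef.shift {G : ℤ → ℝ} (hG : Summable G) {f : ℝ → EuclideanSpace ℝ (Fin n)}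
    (h : HasCoef G f) (x : ℝ) : HasCoef G (fun u => f (u + x)) := by
  simpa [avg_self] using h.avg hG x x

/-- The first variation differs from the leading quadratic form by terms whose
coefficients are quadratically small. -/
lemma dDens_sub_inner (p : ℝ) (f g : ℝ → EuclideanSpace ℝ (Fin n)) (h1 : ∀ u, ‖f u‖ = 1)
    (u v w : ℝ) :
    dDens p f g u v w / 2
      - inner ℝ (avg f u 0 w - avg f u 0 v) (avg g u 0 w - avg g u 0 v) =
    let a := avg f u 0 w
    let b := avg f u 0 v
    let d := avg f u v w
    let Z := zfac p a b d
    let E := 1 / 2 * Z * wedgeSq a b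
    1 / 2 * Z * (‖b‖ ^ 2 - ‖a‖ ^ 2 + ‖a - b‖ ^ 2) * inner ℝ a (avg g u 0 w)
      + 1 / 2 * Z * (‖a‖ ^ 2 - ‖b‖ ^ 2 + ‖a - b‖ ^ 2) * inner ℝ b (avg g u 0 v)
      + (1 / 2 * Z * (‖a‖ ^ 2 + ‖b‖ ^ 2 - ‖a - b‖ ^ 2) - 1)
        * inner ℝ (a - b) (avg g u 0 w - avg g u 0 v)
      + E * inner ℝ (f u) (g (u + 0)) + E * inner ℝ (f (u + v)) (g (u + v))
      + E * inner ℝ (f (u + w)) (g (u + w))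
      + -p * (‖a‖ ^ 2) ^ (-1 : ℝ) * E * inner ℝ a (avg g u 0 w)
      + -p * (‖b‖ ^ 2) ^ (-1 : ℝ) * E * inner ℝ b (avg g u 0 v)
      + -p * (‖d‖ ^ 2) ^ (-1 : ℝ) * E * inner ℝ d (avg g u v w) := by
  simp only [dDens, dWedgeSq_eq, logDens, h1, Real.rpow_neg_one, add_zero]
  ring

/-- A family of functionals of `g`, linear in its Fourier coefficients, of order `-σ`. -/
def RB {T : Type*} (σ : ℝ) (ω : T → ℝ)
    (F : T → (ℝ → EuclideanSpace ℝ (Fin n)) → ℝ → ℝ) : Prop :=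
  ∃ K, 0 ≤ K ∧ ∀ t, ∀ (H : ℤ → ℝ) (g : ℝ → EuclideanSpace ℝ (Fin n)), (∀ k, 0 ≤ H k) →
    HasCoef H g → Summable H → (Summable fun k => H k * wt (-σ) k) →
    Continuous (F t g) ∧ |∫ u in (0:ℝ)..1, F t g u| ≤ K * ω t * ∑' k, H k * wt (-σ) k

section

variable {T : Type*} {σ : ℝ} {ω : T → ℝ}

lemma RB.add {F F' : T → (ℝ → EuclideanSpace ℝ (Fin n)) → ℝ → ℝ} (h : RB σ ω F)
    (h' : RB σ ω F') : RB σ ω (fun t g u => F t g u + F' t g u) := by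
  obtain ⟨K, hK, h⟩ := h
  obtain ⟨K', hK', h'⟩ := h'
  refine ⟨K + K', add_nonneg hK hK', fun t H g hH0 hg hH hs => ?_⟩
  obtain ⟨c, b⟩ := h t H g hH0 hg hH hs
  obtain ⟨c', b'⟩ := h' t H g hH0 hg hH hs
  refine ⟨c.add c', ?_⟩
  rw [intervalIntegral.integral_add (c.intervalIntegrable _ _) (c'.intervalIntegrable _ _),
    add_mul, add_mul]
  exact (abs_add_le _ _).trans (add_le_add b b')

lemma UX.rb (hσ : 0 ≤ σ) {φ : T → ℝ → ℝ} (h : UX σ ω φ)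
    {P : T → ℝ → EuclideanSpace ℝ (Fin n)} (hP : ∀ i, UA σ (fun t u => P t u i))
    {Q : T → (ℝ → EuclideanSpace ℝ (Fin n)) → ℝ → EuclideanSpace ℝ (Fin n)}
    (hQ : ∀ t H g, (∀ k, 0 ≤ H k) → Summable H → HasCoef H g →
      HasCoef (fun k => 2 * H k) (Q t g)) :
    RB σ ω (fun t g u => φ t u * inner ℝ (P t u) (Q t g u)) := by
  obtain ⟨K, hK, hb⟩ := h.exists_pairing hσ hP
  refine ⟨K * 2, by positivity, fun t H g hH0 hg hH hs => ?_⟩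
  have hs2 : Summable fun k => 2 * H k * wt (-σ) k := by
    simpa [mul_assoc] using hs.mul_left 2
  have hQ' := hQ t H g hH0 hH hg
  have h1 := hb t _ _ hQ' (hH.mul_left 2) hs2
  have hPc : Continuous (P t) := by
    refine (PiLp.continuous_toLp 2 _).comp (continuous_pi fun i => ?_)
    obtain ⟨M, _, hM⟩ := hP i
    exact Complex.continuous_re.comp ((hM t).continuous hσ)
  refine ⟨(h.continuous t).mul (hPc.inner (hQ'.continuous (hH.mul_left 2))), h1.trans_eq ?_⟩
  simp only [mul_assoc, tsum_mul_left]
  ring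

lemma RB.congr {F F' : T → (ℝ → EuclideanSpace ℝ (Fin n)) → ℝ → ℝ} (h : RB σ ω F)
    (he : ∀ t g u, F' t g u = F t g u) : RB σ ω F' := by
  obtain rfl : F' = F := by ext; exact he _ _ _
  exact h

end

lemma HasCoef.le_two {H : ℤ → ℝ} {f : ℝ → EuclideanSpace ℝ (Fin n)} (h : HasCoef H f)
    (hH0 : ∀ k, 0 ≤ H k) : HasCoef (fun k => 2 * H k) f :=
  h.mono fun k => by linarith [hH0 k]

/-- The remainder of the first variation is quadratically small. -/
theorem rb_dDens_sub_inner {σ : ℝ} (hσ : 0 ≤ σ) (p : ℝ) {G : ℤ → ℝ} (hG0 : ∀ k, 0 ≤ G k)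
    (hGs : Summable fun k => G k * wt σ k) (hG2 : Summable fun k => (wt σ k * G k) ^ 2)
    {f : ℝ → EuclideanSpace ℝ (Fin n)} (hf : HasCoef G f) (h1 : ∀ u, ‖f u‖ = 1)
    {c₀ : ℝ} (hc₀ : 0 < c₀) (hc : ∀ x ∈ domainD, ∀ u, c₀ ≤ ‖avg f u 0 x.2‖ ∧
      c₀ ≤ ‖avg f u 0 x.1‖ ∧ c₀ ≤ ‖avg f u x.1 x.2‖) :
    RB σ (fun x : domainD => modSq σ G (x.1.2 - x.1.1)) (fun (x : domainD) g u =>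
      dDens p f g u x.1.1 x.1.2 / 2
        - inner ℝ (avg f u 0 x.1.2 - avg f u 0 x.1.1) (avg g u 0 x.1.2 - avg g u 0 x.1.1)) := by
  have hG : Summable G := hGs.of_nonneg_of_le hG0 fun k =>
    le_mul_of_one_le_right (hG0 k) (one_le_wt hσ k)
  have hD1 : ∀ x : domainD, x.1.1 < 0 := fun x => x.2.1.2
  have hD2 : ∀ x : domainD, 0 < x.1.2 := fun x => x.2.2.1.1
  have hvw : ∀ x : domainD, x.1.1 ≤ x.1.2 := fun x => ((hD1 x).trans (hD2 x)).le
  have hna : ∀ u x y, ‖avg f u x y‖ ≤ 1 := norm_avg_le fun u => (h1 u).le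
  have hρ : ∀ u x y, c₀ ≤ ‖avg f u x y‖ → |1 - ‖avg f u x y‖ ^ 2| ≤ 1 - c₀ ^ 2 := by
    intro u x y h
    have := hna u x y
    rw [abs_of_nonneg (by nlinarith)]
    nlinarith
  have hρ1 : 1 - c₀ ^ 2 < 1 := by nlinarith
  have hcal : ∀ (l r : domainD → ℝ), (∀ x u, c₀ ≤ ‖avg f u (l x) (r x)‖) → ∀ α : ℝ,
      UA σ (fun x u => (‖avg f u (l x) (r x)‖ ^ 2) ^ (-α)) ∧
      ∃ q : domainD → ℝ → ℝ, UA σ q ∧ ∀ x u,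
        (‖avg f u (l x) (r x)‖ ^ 2) ^ (-α) - 1 = q x u * (1 - ‖avg f u (l x) (r x)‖ ^ 2) := by
    intro l r hlr α
    have := exists_inA_rpow hσ hρ1 (summable_defectCoef (n := n) hσ hG0 hGs) α
      (y := fun (x : domainD) u => 1 - ‖avg f u (l x) (r x)‖ ^ 2)
      (fun x => (hf.avg hG (l x) (r x)).domBy_one_sub hG0 hG) fun x u => hρ _ _ _ (hlr x u)
    simpa using this
  have hX : ∀ (l r : domainD → ℝ), (∀ x, |r x - l x| ≤ x.1.2 - x.1.1) →
      UX σ (fun x : domainD => modSq σ G (x.1.2 - x.1.1))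
        (fun x u => 1 - ‖avg f u (l x) (r x)‖ ^ 2) := fun l r hlr =>
    ⟨n, by positivity, fun x => hf.inX_one_sub hσ hG0 hG hG2 h1 (hlr x)⟩
  have hcoef : ∀ l r : domainD → ℝ, ∀ i, UA σ (fun x u => avg f u (l x) (r x) i) :=
    fun l r => HasCoef.ua hG0 hGs fun x => hf.avg hG _ _
  have ha := fun α => hcal (fun _ => 0) (fun x => x.1.2) (fun x u => (hc x.1 x.2 u).1) α
  have hb := fun α => hcal (fun _ => 0) (fun x => x.1.1) (fun x u => (hc x.1 x.2 u).2.1) α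
  have hd := fun α => hcal (fun x => x.1.1) (fun x => x.1.2) (fun x u => (hc x.1 x.2 u).2.2) α
  have hax := hX (fun _ => 0) (fun x => x.1.2) fun x => by
    rw [sub_zero, abs_of_pos (hD2 x)]; linarith [hD1 x]
  have hbx := hX (fun _ => 0) (fun x => x.1.1) fun x => by
    rw [sub_zero, abs_of_neg (hD1 x)]; linarith [hD2 x]
  have hdx := hX (fun x => x.1.1) (fun x => x.1.2) fun x =>
    (abs_of_nonneg (sub_nonneg.2 (hvw x))).le
  have hsx : UX σ (fun x : domainD => modSq σ G (x.1.2 - x.1.1))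
      (fun x u => ‖avg f u 0 x.1.2 - avg f u 0 x.1.1‖ ^ 2) :=
    ⟨n, by positivity, fun x => hf.inX_sub hσ hG0 hG hG2 (hvw x)⟩
  obtain ⟨za, qa, hqa, hqa'⟩ := ha (p / 2)
  obtain ⟨zb, qb, hqb, hqb'⟩ := hb (p / 2)
  obtain ⟨zd, qd, hqd, hqd'⟩ := hd (p / 2)
  have hsq : ∀ P : domainD → ℝ → EuclideanSpace ℝ (Fin n), (∀ i, UA σ (fun x u => P x u i)) →
      UA σ (fun x u => ‖P x u‖ ^ 2) := by
    intro P hP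
    choose M hM0 hM using fun i => (hP i).mul hσ (hP i)
    refine ⟨∑ i, M i, Finset.sum_nonneg fun i _ => hM0 i, fun x => ?_⟩
    have := InA.finset_sum Finset.univ fun i _ => hM i x
    simpa [EuclideanSpace.norm_sq_eq, ← pow_two] using this
  have hcf : ∀ i, UA σ (fun (x : domainD) u => (avg f u 0 x.1.2 - avg f u 0 x.1.1) i) :=
    fun i => by simpa using (hcoef _ _ i).sub hσ (hcoef _ _ i)
  have sa := hsq _ (hcoef (fun _ => 0) (fun x => x.1.2))
  have sb := hsq _ (hcoef (fun _ => 0) (fun x => x.1.1))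
  have ss := hsq _ hcf
  have hZ := (za.mul hσ zb).mul hσ zd
  have hZX : UX σ (fun x : domainD => modSq σ G (x.1.2 - x.1.1)) (fun x u =>
      zfac p (avg f u 0 x.1.2) (avg f u 0 x.1.1) (avg f u x.1.1 x.1.2) - 1) :=
    (((hqa.mul_ux hσ hax |> (zb.mul hσ zd).mul_ux hσ).add
      (zd.mul_ux hσ (hqb.mul_ux hσ hbx))).add (hqd.mul_ux hσ hdx)).congr fun x u => by
      simp only [← hqa', ← hqb', ← hqd', zfac]; ring
  have hW : UX σ (fun x : domainD => modSq σ G (x.1.2 - x.1.1)) (fun x u =>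
      wedgeSq (avg f u 0 x.1.2) (avg f u 0 x.1.1)) :=
    ((((UA.const (1/2)).mul hσ (sa.add sb)).sub hσ ((UA.const (1/4)).mul hσ ss)).mul_ux hσ hsx
      |>.sub (((UA.const (1/4)).mul hσ (sb.sub hσ sa)).mul_ux hσ (hax.sub hbx))).congr
      fun x u => by rw [wedgeSq_eq]; ring
  have hE := ((UA.const (1/2)).mul hσ hZ).mul_ux hσ hW
  have t1 := ((UA.const (1/2)).mul hσ hZ).mul_ux hσ ((hax.sub hbx).add hsx)
  have t2 := ((UA.const (1/2)).mul hσ hZ).mul_ux hσ ((hbx.sub hax).add hsx)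
  have t3 : UX σ (fun x : domainD => modSq σ G (x.1.2 - x.1.1)) (fun x u =>
      1 / 2 * zfac p (avg f u 0 x.1.2) (avg f u 0 x.1.1) (avg f u x.1.1 x.1.2)
        * (‖avg f u 0 x.1.2‖ ^ 2 + ‖avg f u 0 x.1.1‖ ^ 2
          - ‖avg f u 0 x.1.2 - avg f u 0 x.1.1‖ ^ 2) - 1) :=
    (hZX.sub (((UA.const (1/2)).mul hσ hZ).mul_ux hσ ((hax.add hbx).add hsx))).congr
      fun x u => by simp only [zfac]; ring
  have t7 := ((UA.const (-p)).mul hσ (ha 1).1).mul_ux hσ hE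
  have t8 := ((UA.const (-p)).mul hσ (hb 1).1).mul_ux hσ hE
  have t9 := ((UA.const (-p)).mul hσ (hd 1).1).mul_ux hσ hE
  have q : ∀ l r : domainD → ℝ, ∀ x H (g : ℝ → EuclideanSpace ℝ (Fin n)), (∀ k, 0 ≤ H k) →
      Summable H → HasCoef H g → HasCoef (fun k => 2 * H k) (fun u => avg g u (l x) (r x)) :=
    fun l r x H g h0 hH hg => (hg.avg hH _ _).le_two h0
  have q' : ∀ l : domainD → ℝ, ∀ x H (g : ℝ → EuclideanSpace ℝ (Fin n)), (∀ k, 0 ≤ H k) →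
      Summable H → HasCoef H g → HasCoef (fun k => 2 * H k) (fun u => g (u + l x)) :=
    fun l x H g h0 hH hg => (hg.shift hH _).le_two h0
  have hcs : ∀ l : domainD → ℝ, ∀ i, UA σ (fun x u => f (u + l x) i) :=
    fun l => HasCoef.ua hG0 hGs fun x => hf.shift hG _
  have hc0 := hcs (fun _ => 0)
  refine ((((((((t1.rb hσ (hcoef (fun _ => 0) (fun x => x.1.2)) (q (fun _ => 0) (fun x => x.1.2))).add
    (t2.rb hσ (hcoef (fun _ => 0) (fun x => x.1.1)) (q (fun _ => 0) (fun x => x.1.1)))).add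
    (t3.rb hσ hcf (Q := fun x g u => avg g u 0 x.1.2 - avg g u 0 x.1.1)
      fun x H g h0 hH hg => hg.avg_sub_avg_two h0 hH (hvw x))).add
    (hE.rb hσ hc0 (q' fun _ => 0))).add
    (hE.rb hσ (hcs fun x => x.1.1) (q' fun x => x.1.1))).add
    (hE.rb hσ (hcs fun x => x.1.2) (q' fun x => x.1.2))).add
    (t7.rb hσ (hcoef (fun _ => 0) (fun x => x.1.2)) (q (fun _ => 0) (fun x => x.1.2)))).add
    (t8.rb hσ (hcoef (fun _ => 0) (fun x => x.1.1)) (q (fun _ => 0) (fun x => x.1.1)))).add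
    (t9.rb hσ (hcoef (fun x => x.1.1) (fun x => x.1.2)) (q (fun x => x.1.1) (fun x => x.1.2)))
    |>.congr fun x g u => ?_
  rw [dDens_sub_inner p f g h1]
  simp only [zfac, add_zero]
  ring

/-- The singular kernel of `Qform`. -/
def kern (p : ℝ) (x : ℝ × ℝ) : ℝ := (|x.1 - x.2| ^ p * |x.1| ^ (p - 2) * |x.2| ^ (p - 2))⁻¹

lemma kern_nonneg (p : ℝ) (x : ℝ × ℝ) : 0 ≤ kern p x := by unfold kern; positivity

lemma measurable_kern (p : ℝ) : Measurable (kern p) := by unfold kern; fun_prop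

lemma measurableSet_domainD : MeasurableSet domainD := by
  unfold domainD
  simp only [mem_Ioo, ofPred_and]
  refine ((measurableSet_lt ?_ ?_).inter (measurableSet_lt ?_ ?_)).inter
    (((measurableSet_lt ?_ ?_).inter (measurableSet_lt ?_ ?_)).inter
      ((measurableSet_le ?_ ?_).inter (measurableSet_le ?_ ?_))) <;> fun_prop

/-- The one-dimensional factor dominating the kernel. -/
def kernFactor (p m t : ℝ) : ℝ := t ^ (2 - 3 * p / 2) * min 2 (m * t)

lemma min_mul_rpow_le {p m t r : ℝ} (hp : 2 < p) (hm : 0 ≤ m) (ht : 0 < t) (htr : t ≤ r) :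
    min 2 (m * r) * r ^ (-(p / 2)) ≤ min 2 (m * t) * t ^ (-(p / 2)) := by
  have hr := ht.trans_le htr
  rw [min_mul_of_nonneg _ _ (by positivity), min_mul_of_nonneg _ _ (by positivity), mul_assoc,
    mul_assoc, ← Real.rpow_one_add' hr.le (by linarith), ← Real.rpow_one_add' ht.le (by linarith)]
  exact min_le_min
    (mul_le_mul_of_nonneg_left (Real.rpow_le_rpow_of_nonpos ht htr (by linarith)) zero_le_two)
    (mul_le_mul_of_nonneg_left (Real.rpow_le_rpow_of_nonpos ht htr (by linarith)) hm)

lemma kern_mul_osc_sq_le {p : ℝ} (hp : 2 < p) (k : ℤ) {x : ℝ × ℝ} (h1 : x.1 < 0) (h2 : 0 < x.2) :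
    kern p x * osc k (x.2 - x.1) ^ 2 ≤
      kernFactor p (2 * Real.pi * |(k:ℝ)|) (-x.1) * kernFactor p (2 * Real.pi * |(k:ℝ)|) x.2 := by
  set m := 2 * Real.pi * |(k:ℝ)| with hm
  have hm0 : 0 ≤ m := by positivity
  have hr : 0 < x.2 - x.1 := by linarith
  have h1' : 0 < -x.1 := by linarith
  have a1 := min_mul_rpow_le hp hm0 h1' (by linarith : -x.1 ≤ x.2 - x.1)
  have a2 := min_mul_rpow_le hp hm0 h2 (by linarith : x.2 ≤ x.2 - x.1)
  have hk : kern p x = ((-x.1) ^ (2 - p) * x.2 ^ (2 - p)) * ((x.2 - x.1) ^ (-(p / 2))) ^ 2 := by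
    rw [kern, abs_of_neg (by linarith : x.1 - x.2 < 0), abs_of_neg h1, abs_of_pos h2, neg_sub,
      ← Real.rpow_natCast (_ ^ _) 2, ← Real.rpow_mul hr.le, mul_inv, mul_inv, ← Real.rpow_neg hr.le,
      ← Real.rpow_neg h1'.le, ← Real.rpow_neg h2.le, neg_sub]
    push_cast
    rw [show -(p / 2) * 2 = -p by ring]
    ring
  have hf : ∀ t : ℝ, 0 < t → kernFactor p m t = t ^ (2 - p) * (min 2 (m * t) * t ^ (-(p / 2))) := by
    intro t ht
    rw [kernFactor, show 2 - 3 * p / 2 = (2 - p) + (-(p / 2)) by ring, Real.rpow_add ht]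
    ring
  rw [hk, hf _ h1', hf _ h2]
  have ho : osc k (x.2 - x.1) = min 2 (m * (x.2 - x.1)) := rfl
  rw [ho]
  have e0 : 0 ≤ min 2 (m * (x.2 - x.1)) * (x.2 - x.1) ^ (-(p / 2)) := by positivity
  calc _ = ((-x.1) ^ (2 - p) * x.2 ^ (2 - p)) *
        ((min 2 (m * (x.2 - x.1)) * (x.2 - x.1) ^ (-(p / 2))) *
          (min 2 (m * (x.2 - x.1)) * (x.2 - x.1) ^ (-(p / 2)))) := by ring
    _ ≤ ((-x.1) ^ (2 - p) * x.2 ^ (2 - p)) *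
        ((min 2 (m * (-x.1)) * (-x.1) ^ (-(p / 2))) *
          (min 2 (m * x.2) * x.2 ^ (-(p / 2)))) := by
      gcongr
    _ = _ := by ring

lemma lintegral_kernFactor_le {p m : ℝ} (hp : p ∈ Ioo (2:ℝ) (8/3)) (hm : 0 < m) :
    ∫⁻ t in Ioi (0:ℝ), ENNReal.ofReal (kernFactor p m t) ≤
      ENNReal.ofReal ((1 / (4 - 3 * p / 2) + 2 / (3 * p / 2 - 3)) * m ^ (3 * p / 2 - 3)) := by
  have hp1 := hp.1
  have hp2 := hp.2
  have hm' : 0 < m⁻¹ := inv_pos.2 hm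
  rw [← Ioc_union_Ioi_eq_Ioi hm'.le, add_mul,
    ENNReal.ofReal_add (mul_nonneg (one_div_nonneg.2 (by linarith)) (by positivity))
      (mul_nonneg (div_nonneg zero_le_two (by linarith)) (by positivity))]
  refine (lintegral_union_le _ _ _).trans (add_le_add ?_ ?_)
  · have hi : IntegrableOn (fun t : ℝ => m * t ^ (3 - 3 * p / 2)) (Ioc 0 m⁻¹) :=
      ((intervalIntegrable_iff_integrableOn_Ioc_of_le hm'.le).1
        (intervalIntegral.intervalIntegrable_rpow' (by linarith))).const_mul m
    calc _ ≤ ∫⁻ t in Ioc 0 m⁻¹, ENNReal.ofReal (m * t ^ (3 - 3 * p / 2)) := by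
          refine setLIntegral_mono' measurableSet_Ioc fun t ht => ENNReal.ofReal_le_ofReal ?_
          rw [kernFactor, show 3 - 3 * p / 2 = (2 - 3 * p / 2) + 1 by ring,
            Real.rpow_add_one ht.1.ne']
          calc _ ≤ t ^ (2 - 3 * p / 2) * (m * t) := by
                have := ht.1
                gcongr
                exact min_le_right _ _
            _ = _ := by ring
      _ = ENNReal.ofReal (∫ t in (0:ℝ)..m⁻¹, m * t ^ (3 - 3 * p / 2)) := by
          rw [intervalIntegral.integral_of_le hm'.le, ofReal_integral_eq_lintegral_ofReal hi]
          filter_upwards [ae_restrict_mem measurableSet_Ioc] with t ht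
          have := ht.1
          positivity
      _ ≤ _ := by
          refine ENNReal.ofReal_le_ofReal (le_of_eq ?_)
          rw [intervalIntegral.integral_const_mul, integral_rpow (Or.inl (by linarith)),
            Real.zero_rpow (by linarith), show 3 - 3 * p / 2 + 1 = 4 - 3 * p / 2 by ring,
            Real.inv_rpow hm.le, ← Real.rpow_neg hm.le,
            show 3 * p / 2 - 3 = 1 + (-(4 - 3 * p / 2)) by ring, Real.rpow_add hm, Real.rpow_one]
          ring
  · have hi : IntegrableOn (fun t : ℝ => 2 * t ^ (2 - 3 * p / 2)) (Ioi m⁻¹) :=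
      (integrableOn_Ioi_rpow_of_lt (by linarith) hm').const_mul 2
    calc _ ≤ ∫⁻ t in Ioi m⁻¹, ENNReal.ofReal (2 * t ^ (2 - 3 * p / 2)) := by
          refine setLIntegral_mono' measurableSet_Ioi fun t ht => ENNReal.ofReal_le_ofReal ?_
          have h0 : 0 < t := hm'.trans ht
          rw [kernFactor, mul_comm]
          gcongr
          exact min_le_left _ _
      _ = ENNReal.ofReal (∫ t in Ioi m⁻¹, 2 * t ^ (2 - 3 * p / 2)) := by
          rw [ofReal_integral_eq_lintegral_ofReal hi]
          filter_upwards [ae_restrict_mem measurableSet_Ioi] with t ht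
          have h0 : 0 < t := hm'.trans ht
          positivity
      _ ≤ _ := by
          refine ENNReal.ofReal_le_ofReal (le_of_eq ?_)
          rw [integral_const_mul, integral_Ioi_rpow_of_lt (by linarith) hm',
            show 2 - 3 * p / 2 + 1 = -(3 * p / 2 - 3) by ring,
            Real.inv_rpow hm.le, ← Real.rpow_neg hm.le, neg_neg]
          field_simp

lemma exists_lintegral_kern_le {p : ℝ} (hp : p ∈ Ioo (2:ℝ) (8/3)) :
    ∃ C, 0 ≤ C ∧ ∀ k : ℤ, ∫⁻ x in domainD, ENNReal.ofReal (kern p x * osc k (x.2 - x.1) ^ 2) ≤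
      ENNReal.ofReal (C * |(k:ℝ)| ^ (3 * p - 6)) := by
  have hp1 := hp.1
  have hp2 := hp.2
  set c := 1 / (4 - 3 * p / 2) + 2 / (3 * p / 2 - 3) with hc
  have hc0 : 0 ≤ c := add_nonneg (one_div_nonneg.2 (by linarith))
    (div_nonneg zero_le_two (by linarith))
  refine ⟨c ^ 2 * (2 * Real.pi) ^ (3 * p - 6), by positivity, fun k => ?_⟩
  rcases eq_or_ne k 0 with rfl | hk
  · simp [osc]
  set m := 2 * Real.pi * |(k:ℝ)| with hm
  have hm0 : 0 < m := by have : (k:ℝ) ≠ 0 := by exact_mod_cast hk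
                         positivity
  have hmeas : Measurable fun t => ENNReal.ofReal (kernFactor p m t) := by
    unfold kernFactor; fun_prop
  calc _ ≤ ∫⁻ x in Iio (0:ℝ) ×ˢ Ioi (0:ℝ),
        ENNReal.ofReal (kernFactor p m (-x.1)) * ENNReal.ofReal (kernFactor p m x.2) := by
        refine (setLIntegral_mono' measurableSet_domainD fun x hx => ?_).trans
          (lintegral_mono_set (s := domainD) fun x hx => ⟨hx.1.2, hx.2.1.1⟩)
        have h1 := hx.1.2
        rw [← ENNReal.ofReal_mul]
        · exact ENNReal.ofReal_le_ofReal (kern_mul_osc_sq_le hp1 k hx.1.2 hx.2.1.1)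
        · have : 0 < -x.1 := by linarith
          unfold kernFactor; positivity
    _ = (∫⁻ t in Iio (0:ℝ), ENNReal.ofReal (kernFactor p m (-t))) *
        ∫⁻ t in Ioi (0:ℝ), ENNReal.ofReal (kernFactor p m t) := by
        rw [Measure.volume_eq_prod, ← Measure.prod_restrict]
        exact lintegral_prod_mul (f := fun t => ENNReal.ofReal (kernFactor p m (-t)))
          (hmeas.comp measurable_neg).aemeasurable hmeas.aemeasurable
    _ = (∫⁻ t in Ioi (0:ℝ), ENNReal.ofReal (kernFactor p m t)) *
        ∫⁻ t in Ioi (0:ℝ), ENNReal.ofReal (kernFactor p m t) := by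
        congr 1
        have := (Measure.measurePreserving_neg (volume : Measure ℝ)).setLIntegral_comp_preimage
          (measurableSet_Ioi (a := (0:ℝ))) hmeas
        simpa using this
    _ ≤ ENNReal.ofReal (c * m ^ (3 * p / 2 - 3)) * ENNReal.ofReal (c * m ^ (3 * p / 2 - 3)) :=
        mul_le_mul' (lintegral_kernFactor_le hp hm0) (lintegral_kernFactor_le hp hm0)
    _ = _ := by
        rw [← ENNReal.ofReal_mul (by positivity)]
        congr 1
        have : m ^ (3 * p / 2 - 3) * m ^ (3 * p / 2 - 3) =
            (2 * Real.pi) ^ (3 * p - 6) * |(k:ℝ)| ^ (3 * p - 6) := by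
          rw [← Real.rpow_add hm0, hm, ← Real.mul_rpow (by positivity) (by positivity)]
          congr 1; ring
        linear_combination c ^ 2 * this

lemma continuousOn_modSq {σ : ℝ} {G : ℤ → ℝ} (hG2 : Summable fun k => (wt σ k * G k) ^ 2) :
    ContinuousOn (modSq σ G) (Ici 0) := by
  refine continuousOn_tsum (u := fun k => 4 * (wt σ k * G k) ^ 2) (fun k => ?_)
    (hG2.mul_left 4) fun k r hr => ?_
  · unfold osc; fun_prop
  · have h1 := osc_le_two k r
    have h2 := osc_nonneg k hr
    have : osc k r ^ 2 ≤ 4 := by nlinarith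
    rw [Real.norm_of_nonneg (sq_nonneg _)]
    calc _ = osc k r ^ 2 * (wt σ k * G k) ^ 2 := by ring
      _ ≤ _ := by gcongr

lemma integrableOn_kern_mul_modSq {p : ℝ} (hp : p ∈ Ioo (2:ℝ) (8/3)) {σ : ℝ} {G : ℤ → ℝ}
    (hG2 : Summable fun k => (wt σ k * G k) ^ 2)
    (hG : Summable fun k => (wt σ k * G k) ^ 2 * |(k:ℝ)| ^ (3 * p - 6)) :
    IntegrableOn (fun x => kern p x * modSq σ G (x.2 - x.1)) domainD := by
  have hpos : ∀ x ∈ domainD, 0 ≤ x.2 - x.1 := fun x hx => by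
    have := hx.1.2
    have := hx.2.1.1
    linarith
  refine ⟨(measurable_kern p).aestronglyMeasurable.mul
    (((continuousOn_modSq hG2).comp (f := fun x : ℝ × ℝ => x.2 - x.1) (by fun_prop)
      hpos).aestronglyMeasurable measurableSet_domainD), ?_⟩
  obtain ⟨C, hC, hk⟩ := exists_lintegral_kern_le hp
  rw [hasFiniteIntegral_iff_ofReal (Eventually.of_forall fun x =>
    mul_nonneg (kern_nonneg p x) (modSq_nonneg _ _ _))]
  calc _ ≤ ∫⁻ x in domainD, ∑' k : ℤ, ENNReal.ofReal ((wt σ k * G k) ^ 2) *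
        ENNReal.ofReal (kern p x * osc k (x.2 - x.1) ^ 2) := by
        refine setLIntegral_mono' measurableSet_domainD fun x hx => le_of_eq ?_
        rw [modSq, ← tsum_mul_left, ENNReal.ofReal_tsum_of_nonneg]
        · refine tsum_congr fun k => ?_
          rw [← ENNReal.ofReal_mul (sq_nonneg _)]
          congr 1; ring
        · exact fun k => mul_nonneg (kern_nonneg p x) (sq_nonneg _)
        · exact (summable_modSq hG2 (hpos x hx)).mul_left _
    _ = ∑' k : ℤ, ENNReal.ofReal ((wt σ k * G k) ^ 2) *
        ∫⁻ x in domainD, ENNReal.ofReal (kern p x * osc k (x.2 - x.1) ^ 2) := by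
        have hm : ∀ k : ℤ, Measurable fun x : ℝ × ℝ =>
            ENNReal.ofReal (kern p x * osc k (x.2 - x.1) ^ 2) := fun k => by
          have := measurable_kern p
          unfold osc; fun_prop
        rw [lintegral_tsum fun k => ((hm k).const_mul _).aemeasurable]
        exact tsum_congr fun k => lintegral_const_mul _ (hm k)
    _ ≤ ∑' k : ℤ, ENNReal.ofReal (C * ((wt σ k * G k) ^ 2 * |(k:ℝ)| ^ (3 * p - 6))) := by
        refine ENNReal.tsum_le_tsum fun k => ?_
        refine (mul_le_mul_right (hk k) _).trans_eq ?_
        rw [← ENNReal.ofReal_mul (sq_nonneg _)]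
        congr 1; ring
    _ < ∞ := by
        rw [← ENNReal.ofReal_tsum_of_nonneg (fun k => by positivity) (hG.mul_left C)]
        exact ENNReal.ofReal_lt_top

/-- The averages of `f` entering `dens` at `u, v, w` have norm at least `m`. -/
def AvgGe (m : ℝ) (f : ℝ → EuclideanSpace ℝ (Fin n)) (u v w : ℝ) : Prop :=
  m ≤ ‖avg f u 0 w‖ ∧ m ≤ ‖avg f u 0 v‖ ∧ m ≤ ‖avg f u v w‖

lemma wedgeSq_nonneg (a b : EuclideanSpace ℝ (Fin n)) : 0 ≤ wedgeSq a b := by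
  have := abs_real_inner_le_norm a b
  rw [wedgeSq, ← mul_pow, sub_nonneg, ← sq_abs (inner ℝ a b)]
  gcongr

lemma wedgeSq_le {M : ℝ} {a b : EuclideanSpace ℝ (Fin n)} (ha : ‖a‖ ≤ M) (hb : ‖b‖ ≤ M) :
    wedgeSq a b ≤ M ^ 2 * ‖a - b‖ ^ 2 := by
  rw [wedgeSq_eq]
  have h1 : ‖a‖ ^ 2 ≤ M ^ 2 := by gcongr
  have h2 : ‖b‖ ^ 2 ≤ M ^ 2 := by gcongr
  nlinarith [sq_nonneg (‖a‖ ^ 2 - ‖b‖ ^ 2), sq_nonneg (‖a - b‖), sq_nonneg (‖a - b‖ ^ 2)]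

lemma abs_dWedgeSq_le {M N : ℝ} {a b A B : EuclideanSpace ℝ (Fin n)} (hb : ‖b‖ ≤ M)
    (hB : ‖B‖ ≤ N) :
    |dWedgeSq a b A B| ≤ (2 * M ^ 2 + 4 * M * N) * (‖a - b‖ ^ 2 + ‖A - B‖ ^ 2) := by
  have e : dWedgeSq a b A B = 2 * inner ℝ (a - b) (A - B) * ‖b‖ ^ 2
      + 2 * ‖a - b‖ ^ 2 * inner ℝ b B
      - 2 * inner ℝ (a - b) b * (inner ℝ (a - b) B + inner ℝ b (A - B)) := by
    rw [dWedgeSq, norm_sub_sq_real]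
    simp only [inner_sub_left, inner_sub_right, real_inner_self_eq_norm_sq]
    rw [real_inner_comm b a]
    ring
  set c := a - b
  set C := A - B
  have hM : 0 ≤ M := (norm_nonneg _).trans hb
  have hN : 0 ≤ N := (norm_nonneg _).trans hB
  have i1 := abs_real_inner_le_norm c C
  have i2 : |inner ℝ b B| ≤ M * N := (abs_real_inner_le_norm b B).trans (by gcongr)
  have i3 : |inner ℝ c b| ≤ ‖c‖ * M := (abs_real_inner_le_norm c b).trans (by gcongr)
  have i4 : |inner ℝ c B| ≤ ‖c‖ * N := (abs_real_inner_le_norm c B).trans (by gcongr)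
  have i5 : |inner ℝ b C| ≤ M * ‖C‖ := (abs_real_inner_le_norm b C).trans (by gcongr)
  have b2 : ‖b‖ ^ 2 ≤ M ^ 2 := by gcongr
  calc |dWedgeSq a b A B| ≤ 2 * |inner ℝ c C| * ‖b‖ ^ 2 + 2 * ‖c‖ ^ 2 * |inner ℝ b B|
        + 2 * |inner ℝ c b| * (|inner ℝ c B| + |inner ℝ b C|) := by
        rw [e]
        refine (abs_sub _ _).trans (add_le_add ((abs_add_le _ _).trans ?_) ?_)
        · simp [abs_mul]
        · simp only [abs_mul, abs_two]
          gcongr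
          exact abs_add_le _ _
    _ ≤ 2 * (‖c‖ * ‖C‖) * M ^ 2 + 2 * ‖c‖ ^ 2 * (M * N)
        + 2 * (‖c‖ * M) * (‖c‖ * N + M * ‖C‖) := by gcongr
    _ ≤ _ := by
        have := sq_nonneg (‖c‖ - ‖C‖)
        have h2 : 0 ≤ M * N * ‖C‖ ^ 2 := by positivity
        nlinarith [mul_le_mul_of_nonneg_left (by linarith : 0 ≤ (‖c‖ - ‖C‖) ^ 2)
          (sq_nonneg M), sq_nonneg M]

lemma abs_inner_div_le {m M N : ℝ} (hm : 0 < m) {a A : EuclideanSpace ℝ (Fin n)} (h : m ≤ ‖a‖)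
    (hM : ‖a‖ ≤ M) (hN : ‖A‖ ≤ N) : |inner ℝ a A / ‖a‖ ^ 2| ≤ M * N / m ^ 2 := by
  have : 0 ≤ M := (norm_nonneg _).trans hM
  have : 0 ≤ N := (norm_nonneg _).trans hN
  rw [abs_div, abs_of_nonneg (sq_nonneg ‖a‖)]
  have := abs_real_inner_le_norm a A
  gcongr
  exact this.trans (by gcongr)

lemma zfac_nonneg (p : ℝ) (a b d : EuclideanSpace ℝ (Fin n)) : 0 ≤ zfac p a b d := by
  unfold zfac; positivity

lemma zfac_le {p m : ℝ} (hp : 0 ≤ p) (hm : 0 < m) {a b d : EuclideanSpace ℝ (Fin n)}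
    (ha : m ≤ ‖a‖) (hb : m ≤ ‖b‖) (hd : m ≤ ‖d‖) :
    zfac p a b d ≤ ((m ^ 2) ^ (-(p / 2))) ^ 3 := by
  have key : ∀ e : EuclideanSpace ℝ (Fin n), m ≤ ‖e‖ →
      (‖e‖ ^ 2) ^ (-(p / 2)) ≤ (m ^ 2) ^ (-(p / 2)) := fun e he =>
    Real.rpow_le_rpow_of_nonpos (by positivity) (by gcongr) (by linarith)
  calc zfac p a b d ≤ (m ^ 2) ^ (-(p / 2)) * (m ^ 2) ^ (-(p / 2)) * (m ^ 2) ^ (-(p / 2)) := by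
        exact mul_le_mul (mul_le_mul (key a ha) (key b hb) (by positivity) (by positivity))
          (key d hd) (by positivity) (by positivity)
    _ = _ := by ring

lemma abs_logDens_le {p m M N : ℝ} (hp : 0 ≤ p) (hm : 0 < m)
    {f g : ℝ → EuclideanSpace ℝ (Fin n)} {u v w : ℝ} (hfm : ∀ t, m ≤ ‖f t‖)
    (hfM : ∀ t, ‖f t‖ ≤ M) (hg : ∀ t, ‖g t‖ ≤ N) (h : AvgGe m f u v w) :
    |logDens p f g u v w| ≤ (3 + 3 * p) * (M * N / m ^ 2) := by
  have e1 := fun t => abs_inner_div_le hm (hfm t) (hfM t) (hg t)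
  have e2 := fun x y (hxy : m ≤ ‖avg f u x y‖) =>
    abs_inner_div_le hm hxy (norm_avg_le hfM u x y) (norm_avg_le hg u x y)
  rw [logDens]
  refine (abs_sub _ _).trans ?_
  rw [abs_mul, abs_of_nonneg hp]
  have a1 := (abs_add_three (inner ℝ (f u) (g u) / ‖f u‖ ^ 2)
    (inner ℝ (f (u + v)) (g (u + v)) / ‖f (u + v)‖ ^ 2)
    (inner ℝ (f (u + w)) (g (u + w)) / ‖f (u + w)‖ ^ 2))
  have a2 := (abs_add_three (inner ℝ (avg f u 0 w) (avg g u 0 w) / ‖avg f u 0 w‖ ^ 2)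
    (inner ℝ (avg f u 0 v) (avg g u 0 v) / ‖avg f u 0 v‖ ^ 2)
    (inner ℝ (avg f u v w) (avg g u v w) / ‖avg f u v w‖ ^ 2))
  have a3 := a2.trans (add_le_add (add_le_add (e2 _ _ h.1) (e2 _ _ h.2.1)) (e2 _ _ h.2.2))
  have a4 := a1.trans (add_le_add (add_le_add (e1 _) (e1 _)) (e1 _))
  have := mul_le_mul_of_nonneg_left a3 hp
  linarith

lemma prefactor_bounds {p m M : ℝ} (hp : 0 ≤ p) (hm : 0 < m)
    {f : ℝ → EuclideanSpace ℝ (Fin n)} {u v w : ℝ}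
    (hfM : ∀ t, ‖f t‖ ≤ M) (h : AvgGe m f u v w) :
    |‖f u‖ * ‖f (u + v)‖ * ‖f (u + w)‖ * zfac p (avg f u 0 w) (avg f u 0 v) (avg f u v w)| ≤
      M ^ 3 * ((m ^ 2) ^ (-(p / 2))) ^ 3 := by
  have hM : 0 ≤ M := (norm_nonneg _).trans (hfM 0)
  have hz0 := zfac_nonneg p (avg f u 0 w) (avg f u 0 v) (avg f u v w)
  rw [abs_of_nonneg (by positivity)]
  calc _ ≤ M * M * M * ((m ^ 2) ^ (-(p / 2))) ^ 3 := by
        gcongr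
        · exact hfM _
        · exact hfM _
        · exact hfM _
        · exact zfac_le hp hm h.1 h.2.1 h.2.2
    _ = _ := by ring

lemma abs_dens_le {p m M : ℝ} (hp : 0 ≤ p) (hm : 0 < m)
    {f : ℝ → EuclideanSpace ℝ (Fin n)} {u v w : ℝ}
    (hfM : ∀ t, ‖f t‖ ≤ M) (h : AvgGe m f u v w) :
    |dens p f u v w| ≤ M ^ 3 * ((m ^ 2) ^ (-(p / 2))) ^ 3 *
        (M ^ 2 * ‖avg f u 0 w - avg f u 0 v‖ ^ 2) := by
  rw [dens, abs_mul, abs_of_nonneg (wedgeSq_nonneg _ _)]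
  have hM : 0 ≤ M := (norm_nonneg _).trans (hfM 0)
  exact mul_le_mul (prefactor_bounds hp hm hfM h)
    (wedgeSq_le (norm_avg_le hfM _ _ _) (norm_avg_le hfM _ _ _)) (wedgeSq_nonneg _ _)
    (by positivity)

lemma abs_dDens_le {p m M N : ℝ} (hp : 0 ≤ p) (hm : 0 < m)
    {f g : ℝ → EuclideanSpace ℝ (Fin n)} {u v w : ℝ} (hfm : ∀ t, m ≤ ‖f t‖)
    (hfM : ∀ t, ‖f t‖ ≤ M) (hg : ∀ t, ‖g t‖ ≤ N) (h : AvgGe m f u v w) :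
    |dDens p f g u v w| ≤ M ^ 3 * ((m ^ 2) ^ (-(p / 2))) ^ 3 *
        ((2 * M ^ 2 + 4 * M * N + M ^ 2 * ((3 + 3 * p) * (M * N / m ^ 2)))
        * (‖avg f u 0 w - avg f u 0 v‖ ^ 2 + ‖avg g u 0 w - avg g u 0 v‖ ^ 2)) := by
  have hM : 0 ≤ M := (norm_nonneg _).trans (hfM 0)
  have hN : 0 ≤ N := (norm_nonneg _).trans (hg 0)
  rw [dDens, abs_mul]
  refine mul_le_mul (prefactor_bounds hp hm hfM h) ?_ (abs_nonneg _) (by positivity)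
  have h1 := abs_dWedgeSq_le (a := avg f u 0 w) (A := avg g u 0 w)
    (norm_avg_le hfM u 0 v) (norm_avg_le hg u 0 v)
  have h2 := abs_logDens_le hp hm hfm hfM hg h
  have h3 := wedgeSq_le (norm_avg_le hfM u 0 w) (norm_avg_le hfM u 0 v)
  have h4 := mul_le_mul h3 h2 (abs_nonneg _) (by positivity)
  refine (abs_add_le _ _).trans ?_
  rw [abs_mul, abs_of_nonneg (wedgeSq_nonneg _ _), add_mul]
  refine add_le_add h1 (h4.trans ?_)
  have : 0 ≤ M ^ 2 * ((3 + 3 * p) * (M * N / m ^ 2)) * ‖avg g u 0 w - avg g u 0 v‖ ^ 2 := by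
    positivity
  linarith

lemma hasDerivAt_inner_line (a b A B : EuclideanSpace ℝ (Fin n)) (τ : ℝ) :
    HasDerivAt (fun t : ℝ => inner ℝ (a + t • A) (b + t • B))
      (inner ℝ (a + τ • A) B + inner ℝ (b + τ • B) A) τ := by
  have h1 : ∀ c C : EuclideanSpace ℝ (Fin n), HasDerivAt (fun t : ℝ => c + t • C) C τ := fun c C => by
    simpa using ((hasDerivAt_id τ).smul_const C).const_add c
  have := (h1 a A).inner ℝ (h1 b B)
  rwa [real_inner_comm (b + τ • B) A] at this

lemma hasDerivAt_norm_sq_line (a A : EuclideanSpace ℝ (Fin n)) (τ : ℝ) :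
    HasDerivAt (fun t : ℝ => ‖a + t • A‖ ^ 2) (2 * inner ℝ (a + τ • A) A) τ := by
  have := hasDerivAt_inner_line a a A A τ
  simp only [real_inner_self_eq_norm_sq] at this
  convert! this using 1
  ring

lemma hasDerivAt_norm_sq_rpow_line (q : ℝ) (a A : EuclideanSpace ℝ (Fin n)) {τ : ℝ}
    (h : a + τ • A ≠ 0) :
    HasDerivAt (fun t : ℝ => (‖a + t • A‖ ^ 2) ^ q)
      ((‖a + τ • A‖ ^ 2) ^ q * (2 * q * (inner ℝ (a + τ • A) A / ‖a + τ • A‖ ^ 2))) τ := by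
  have h0 : ‖a + τ • A‖ ^ 2 ≠ 0 := by simpa using h
  have := (hasDerivAt_norm_sq_line a A τ).rpow_const (p := q) (Or.inl h0)
  convert! this using 1
  rw [Real.rpow_sub_one h0]
  field_simp

lemma hasDerivAt_norm_line (a A : EuclideanSpace ℝ (Fin n)) {τ : ℝ} (h : a + τ • A ≠ 0) :
    HasDerivAt (fun t : ℝ => ‖a + t • A‖)
      (‖a + τ • A‖ * (inner ℝ (a + τ • A) A / ‖a + τ • A‖ ^ 2)) τ := by
  have := hasDerivAt_norm_sq_rpow_line (1 / 2) a A h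
  simp only [← Real.sqrt_eq_rpow, Real.sqrt_sq (norm_nonneg _)] at this
  convert! this using 1
  ring

lemma hasDerivAt_wedgeSq_line (a b A B : EuclideanSpace ℝ (Fin n)) (τ : ℝ) :
    HasDerivAt (fun t : ℝ => wedgeSq (a + t • A) (b + t • B))
      (dWedgeSq (a + τ • A) (b + τ • B) A B) τ := by
  have := ((hasDerivAt_norm_sq_line a A τ).mul (hasDerivAt_norm_sq_line b B τ)).sub
    ((hasDerivAt_inner_line a b A B τ).pow 2)
  convert! this using 1
  rw [dWedgeSq]
  push_cast
  ring

lemma hasDerivAt_dens (p : ℝ) {m : ℝ} (hm : 0 < m) {f g : ℝ → EuclideanSpace ℝ (Fin n)}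
    (hf : Continuous f) (hg : Continuous g) {u v w τ : ℝ} (hfm : ∀ t, m ≤ ‖f t + τ • g t‖)
    (h : AvgGe m (fun t => f t + τ • g t) u v w) :
    HasDerivAt (fun τ => dens p (fun t => f t + τ • g t) u v w)
      (dDens p (fun t => f t + τ • g t) g u v w) τ := by
  have hne : ∀ e : EuclideanSpace ℝ (Fin n), m ≤ ‖e‖ → e ≠ 0 := fun e he h0 => by
    simp [h0] at he; linarith
  obtain ⟨ha, hb, hd⟩ := h
  simp only [dens, dDens, logDens, zfac, avg_add_smul hf hg] at ha hb hd ⊢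
  have d1 := ((hasDerivAt_norm_line (f u) (g u) (hne _ (hfm u))).mul
    (hasDerivAt_norm_line (f (u + v)) (g (u + v)) (hne _ (hfm _)))).mul
    (hasDerivAt_norm_line (f (u + w)) (g (u + w)) (hne _ (hfm _)))
  have d2 := ((hasDerivAt_norm_sq_rpow_line (-(p / 2)) _ _ (hne _ ha)).mul
    (hasDerivAt_norm_sq_rpow_line (-(p / 2)) _ _ (hne _ hb))).mul
    (hasDerivAt_norm_sq_rpow_line (-(p / 2)) _ _ (hne _ hd))
  have d3 := hasDerivAt_wedgeSq_line (avg f u 0 w) (avg f u 0 v) (avg g u 0 w) (avg g u 0 v) τ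
  have := (d1.mul d2).mul d3
  convert! this using 1
  simp only [Pi.mul_apply]
  ring

/-- The parameter measure: base point in `[0,1)` and offsets in `domainD`. -/
def paramMeasure : Measure (ℝ × ℝ × ℝ) :=
  (volume.restrict (Ico (0:ℝ) 1)).prod (volume.restrict domainD)

lemma ae_paramMeasure : ∀ᵐ z ∂paramMeasure, z.2 ∈ domainD := by
  unfold paramMeasure
  rw [Measure.prod_restrict]
  filter_upwards [ae_restrict_mem (measurableSet_Ico.prod measurableSet_domainD)] with z hz
  exact hz.2

lemma measurable_avg {f : ℝ → EuclideanSpace ℝ (Fin n)} (hf : Continuous f)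
    {x y : ℝ × ℝ × ℝ → ℝ} (hx : Continuous x) (hy : Continuous y) :
    Measurable fun z : ℝ × ℝ × ℝ => avg f z.1 (x z) (y z) :=
  ((continuous_avg hf).comp (continuous_fst.prodMk (hx.prodMk hy))).measurable

lemma measurable_dens (p : ℝ) {f : ℝ → EuclideanSpace ℝ (Fin n)} (hf : Continuous f) :
    Measurable fun z : ℝ × ℝ × ℝ => dens p f z.1 z.2.1 z.2.2 := by
  have ha := measurable_avg hf (x := fun _ => 0) (y := fun z => z.2.2) (by fun_prop) (by fun_prop)
  have hb := measurable_avg hf (x := fun _ => 0) (y := fun z => z.2.1) (by fun_prop) (by fun_prop)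
  have hd := measurable_avg hf (x := fun z => z.2.1) (y := fun z => z.2.2) (by fun_prop)
    (by fun_prop)
  have hm := hf.measurable
  unfold dens zfac wedgeSq
  fun_prop

lemma measurable_dDens (p : ℝ) {f g : ℝ → EuclideanSpace ℝ (Fin n)} (hf : Continuous f)
    (hg : Continuous g) :
    Measurable fun z : ℝ × ℝ × ℝ => dDens p f g z.1 z.2.1 z.2.2 := by
  have ha := measurable_avg hf (x := fun _ => 0) (y := fun z => z.2.2) (by fun_prop) (by fun_prop)
  have hb := measurable_avg hf (x := fun _ => 0) (y := fun z => z.2.1) (by fun_prop) (by fun_prop)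
  have hd := measurable_avg hf (x := fun z => z.2.1) (y := fun z => z.2.2) (by fun_prop)
    (by fun_prop)
  have ha' := measurable_avg hg (x := fun _ => 0) (y := fun z => z.2.2) (by fun_prop) (by fun_prop)
  have hb' := measurable_avg hg (x := fun _ => 0) (y := fun z => z.2.1) (by fun_prop) (by fun_prop)
  have hd' := measurable_avg hg (x := fun z => z.2.1) (y := fun z => z.2.2) (by fun_prop)
    (by fun_prop)
  have hm := hf.measurable
  have hm' := hg.measurable
  unfold dDens zfac wedgeSq dWedgeSq logDens
  fun_prop

lemma integrable_kern_mul_norm_sq {p : ℝ} (hp : p ∈ Ioo (2:ℝ) (8/3)) {G : ℤ → ℝ}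
    (hG0 : ∀ k, 0 ≤ G k) (hG : Summable G) (hG2 : Summable fun k => G k ^ 2)
    (hG3 : Summable fun k => G k ^ 2 * |(k:ℝ)| ^ (3 * p - 6))
    {f : ℝ → EuclideanSpace ℝ (Fin n)} (h : HasCoef G f) :
    Integrable (fun z : ℝ × ℝ × ℝ =>
      kern p z.2 * ‖avg f z.1 0 z.2.2 - avg f z.1 0 z.2.1‖ ^ 2) paramMeasure := by
  have hf := h.continuous hG
  have ha := measurable_avg hf (x := fun _ => 0) (y := fun z => z.2.2) (by fun_prop) (by fun_prop)
  have hb := measurable_avg hf (x := fun _ => 0) (y := fun z => z.2.1) (by fun_prop) (by fun_prop)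
  have hk := measurable_kern p
  have hm : Measurable (fun z : ℝ × ℝ × ℝ =>
      kern p z.2 * ‖avg f z.1 0 z.2.2 - avg f z.1 0 z.2.1‖ ^ 2) := by fun_prop
  have hac : ∀ x y, Continuous fun u => avg f u x y := fun x y =>
    (continuous_avg hf).comp (by fun_prop : Continuous fun u : ℝ => (u, x, y))
  have hG2' : Summable fun k => (wt 0 k * G k) ^ 2 := by simpa [wt_exp_zero] using hG2
  unfold paramMeasure
  rw [integrable_prod_iff' hm.aestronglyMeasurable]
  constructor
  · refine Eventually.of_forall fun x => ?_
    have : Continuous fun u => kern p x * ‖avg f u 0 x.2 - avg f u 0 x.1‖ ^ 2 := by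
      have := hac 0 x.2
      have := hac 0 x.1
      fun_prop
    exact (this.integrableOn_Icc (a := 0) (b := 1)).mono_set Ico_subset_Icc_self
  · refine Integrable.mono' (((integrableOn_kern_mul_modSq hp (σ := 0) hG2'
      (by simpa [wt_exp_zero] using hG3)).const_mul (n:ℝ)))
      (hm.norm.aestronglyMeasurable.prod_swap.integral_prod_right') ?_
    filter_upwards [ae_restrict_mem measurableSet_domainD] with x hx
    have h1 := hx.1.2
    have h2 := hx.2.1.1
    have hX := (h.inX_sub (σ := 0) le_rfl hG0 hG hG2' (h1.trans h2).le).2 0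
    simp only [wt_zero, one_mul, hat, neg_zero, ch_zero, mul_one] at hX
    rw [intervalIntegral.integral_ofReal, Complex.norm_real, Real.norm_eq_abs] at hX
    have hX' := (le_abs_self _).trans hX
    rw [intervalIntegral.integral_of_le zero_le_one, ← integral_Ico_eq_integral_Ioc] at hX'
    rw [Real.norm_of_nonneg (integral_nonneg fun _ => norm_nonneg _)]
    simp only [norm_mul, Real.norm_of_nonneg (kern_nonneg p _), norm_pow, norm_norm]
    rw [integral_const_mul]
    calc _ ≤ kern p x * (n * modSq 0 G (x.2 - x.1)) :=
          mul_le_mul_of_nonneg_left hX' (kern_nonneg _ _)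
      _ = _ := by ring

lemma AvgGe.add_smul {c₀ N τ : ℝ} {f g : ℝ → EuclideanSpace ℝ (Fin n)} (hf : Continuous f)
    (hg : Continuous g) (hgN : ∀ t, ‖g t‖ ≤ N) (hτ : |τ| * N ≤ c₀ / 2) {u v w : ℝ}
    (h : AvgGe c₀ f u v w) : AvgGe (c₀ / 2) (fun t => f t + τ • g t) u v w := by
  have key : ∀ x y, c₀ ≤ ‖avg f u x y‖ → c₀ / 2 ≤ ‖avg (fun t => f t + τ • g t) u x y‖ := by
    intro x y hxy
    rw [avg_add_smul hf hg]
    have h1 := norm_sub_le_norm_add (avg f u x y) (τ • avg g u x y)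
    have h2 : ‖τ • avg g u x y‖ ≤ |τ| * N := by
      rw [norm_smul, Real.norm_eq_abs]
      exact mul_le_mul_of_nonneg_left (norm_avg_le hgN _ _ _) (abs_nonneg _)
    linarith
  exact ⟨key _ _ h.1, key _ _ h.2.1, key _ _ h.2.2⟩

/-- Differentiation of the energy under the integral sign. -/
theorem hasDerivAt_integral_dens {p : ℝ} (hp : p ∈ Ioo (2:ℝ) (8/3)) {G H : ℤ → ℝ}
    (hG0 : ∀ k, 0 ≤ G k) (hG : Summable G) (hG2 : Summable fun k => G k ^ 2)
    (hG3 : Summable fun k => G k ^ 2 * |(k:ℝ)| ^ (3 * p - 6))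
    (hH0 : ∀ k, 0 ≤ H k) (hH : Summable H) (hH2 : Summable fun k => H k ^ 2)
    (hH3 : Summable fun k => H k ^ 2 * |(k:ℝ)| ^ (3 * p - 6))
    {f g : ℝ → EuclideanSpace ℝ (Fin n)} (hf : HasCoef G f) (hg : HasCoef H g)
    (h1 : ∀ u, ‖f u‖ = 1) {N : ℝ} (hgN : ∀ t, ‖g t‖ ≤ N)
    {c₀ : ℝ} (hc₀ : 0 < c₀) (hc : ∀ x ∈ domainD, ∀ u, AvgGe c₀ f u x.1 x.2) :
    Integrable (fun z => kern p z.2 * dDens p f g z.1 z.2.1 z.2.2) paramMeasure ∧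
    HasDerivAt (fun τ : ℝ => ∫ z, kern p z.2 * dens p (fun t => f t + τ • g t) z.1 z.2.1 z.2.2
      ∂paramMeasure)
      (∫ z, kern p z.2 * dDens p f g z.1 z.2.1 z.2.2 ∂paramMeasure) 0 := by
  have hp0 : 0 ≤ p := by linarith [hp.1]
  have hN : 0 ≤ N := (norm_nonneg _).trans (hgN 0)
  have hfc := hf.continuous hG
  have hgc := hg.continuous hH
  have hc1 : c₀ ≤ 1 := by
    have := (hc (-(1/4), 1/4) ⟨by norm_num, by norm_num, by norm_num, by norm_num⟩ 0).1
    exact this.trans (norm_avg_le (fun u => (h1 u).le) _ _ _)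
  set m := c₀ / 2 with hm
  have hm0 : 0 < m := by positivity
  have hFc : ∀ τ : ℝ, Continuous fun t => f t + τ • g t := fun τ => by fun_prop
  have hk := measurable_kern p
  have hcg := integrable_kern_mul_norm_sq hp hG0 hG hG2 hG3 hf
  have hCg := integrable_kern_mul_norm_sq hp hH0 hH hH2 hH3 hg
  set δ := min 1 (m / (N + 1)) with hδ
  have hδ0 : 0 < δ := by positivity
  have hτN : ∀ τ ∈ Metric.ball (0:ℝ) δ, |τ| ≤ 1 ∧ |τ| * N ≤ m := fun τ hτ => by
    rw [mem_ball_zero_iff, Real.norm_eq_abs] at hτ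
    refine ⟨hτ.le.trans (min_le_left _ _), ?_⟩
    have : |τ| ≤ m / (N + 1) := hτ.le.trans (min_le_right _ _)
    rw [le_div_iff₀ (by positivity)] at this
    nlinarith [abs_nonneg τ]
  have hlow : ∀ τ ∈ Metric.ball (0:ℝ) δ, ∀ t, m ≤ ‖f t + τ • g t‖ := fun τ hτ t => by
    have a1 := norm_sub_le_norm_add (f t) (τ • g t)
    have a2 : ‖τ • g t‖ ≤ |τ| * N := by
      rw [norm_smul, Real.norm_eq_abs]
      exact mul_le_mul_of_nonneg_left (hgN t) (abs_nonneg _)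
    rw [h1] at a1
    linarith [(hτN τ hτ).2]
  have hup : ∀ τ ∈ Metric.ball (0:ℝ) δ, ∀ t, ‖f t + τ • g t‖ ≤ 2 := fun τ hτ t => by
    have a1 := norm_add_le (f t) (τ • g t)
    have a2 : ‖τ • g t‖ ≤ |τ| * N := by
      rw [norm_smul, Real.norm_eq_abs]
      exact mul_le_mul_of_nonneg_left (hgN t) (abs_nonneg _)
    rw [h1] at a1
    linarith [(hτN τ hτ).2]
  have havg : ∀ τ ∈ Metric.ball (0:ℝ) δ, ∀ x ∈ domainD, ∀ u,
      AvgGe m (fun t => f t + τ • g t) u x.1 x.2 := fun τ hτ x hx u =>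
    (hc x hx u).add_smul hfc hgc hgN (hτN τ hτ).2
  have hmeas : ∀ τ : ℝ, Measurable fun z : ℝ × ℝ × ℝ =>
      kern p z.2 * dens p (fun t => f t + τ • g t) z.1 z.2.1 z.2.2 := fun τ =>
    (hk.comp measurable_snd).mul (measurable_dens p (hFc τ))
  have hmeas' : Measurable fun z : ℝ × ℝ × ℝ =>
      kern p z.2 * dDens p (fun t => f t + (0:ℝ) • g t) g z.1 z.2.1 z.2.2 :=
    (hk.comp measurable_snd).mul (measurable_dDens p (hFc 0) hgc)
  set K := (2:ℝ) ^ 3 * ((m ^ 2) ^ (-(p / 2))) ^ 3 with hK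
  set K' := 2 * (2:ℝ) ^ 2 + 4 * 2 * N + 2 ^ 2 * ((3 + 3 * p) * (2 * N / m ^ 2)) with hK'
  have hK0 : 0 ≤ K := by positivity
  have hK'0 : 0 ≤ K' := by positivity
  have hmain := hasDerivAt_integral_of_dominated_loc_of_deriv_le (μ := paramMeasure)
    (F := fun τ z => kern p z.2 * dens p (fun t => f t + τ • g t) z.1 z.2.1 z.2.2)
    (F' := fun τ z => kern p z.2 * dDens p (fun t => f t + τ • g t) g z.1 z.2.1 z.2.2)
    (x₀ := (0:ℝ)) (s := Metric.ball 0 δ)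
    (bound := fun z => K * K' * (2 * (kern p z.2 * ‖avg f z.1 0 z.2.2 - avg f z.1 0 z.2.1‖ ^ 2)
      + 3 * (kern p z.2 * ‖avg g z.1 0 z.2.2 - avg g z.1 0 z.2.1‖ ^ 2)))
    (Metric.ball_mem_nhds _ hδ0) (Eventually.of_forall fun τ => (hmeas τ).aestronglyMeasurable)
    ?_ hmeas'.aestronglyMeasurable ?_ (((hcg.const_mul 2).add (hCg.const_mul 3)).const_mul _) ?_
  · simpa using hmain
  · refine Integrable.mono' (hcg.const_mul (K * 2 ^ 2)) (hmeas 0).aestronglyMeasurable ?_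
    filter_upwards [ae_paramMeasure] with z hz
    have h0 : (0:ℝ) ∈ Metric.ball (0:ℝ) δ := Metric.mem_ball_self hδ0
    have := abs_dens_le hp0 hm0 (hup 0 h0) (havg 0 h0 z.2 hz z.1)
    rw [norm_mul, Real.norm_of_nonneg (kern_nonneg p _), Real.norm_eq_abs]
    refine (mul_le_mul_of_nonneg_left this (kern_nonneg p _)).trans_eq ?_
    simp only [zero_smul, add_zero, ← hK]
    ring
  · filter_upwards [ae_paramMeasure] with z hz τ hτ
    have := abs_dDens_le hp0 hm0 (hlow τ hτ) (hup τ hτ) hgN (havg τ hτ z.2 hz z.1)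
    rw [norm_mul, Real.norm_of_nonneg (kern_nonneg p _), Real.norm_eq_abs]
    refine (mul_le_mul_of_nonneg_left this (kern_nonneg p _)).trans ?_
    rw [← hK, ← hK', avg_add_smul hfc hgc, avg_add_smul hfc hgc]
    set c := avg f z.1 0 z.2.2 - avg f z.1 0 z.2.1 with hcdef
    set C := avg g z.1 0 z.2.2 - avg g z.1 0 z.2.1 with hCdef
    have e : avg f z.1 0 z.2.2 + τ • avg g z.1 0 z.2.2
        - (avg f z.1 0 z.2.1 + τ • avg g z.1 0 z.2.1) = c + τ • C := by
      rw [hcdef, hCdef, smul_sub]; abel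
    rw [e]
    have hs : ‖c + τ • C‖ ≤ ‖c‖ + ‖C‖ := by
      refine (norm_add_le _ _).trans ?_
      rw [norm_smul, Real.norm_eq_abs]
      have := (hτN τ hτ).1
      nlinarith [norm_nonneg C]
    have hs2 : ‖c + τ • C‖ ^ 2 ≤ 2 * ‖c‖ ^ 2 + 2 * ‖C‖ ^ 2 := by
      have := norm_nonneg (c + τ • C)
      nlinarith [sq_nonneg (‖c‖ - ‖C‖)]
    calc _ ≤ kern p z.2 * (K * (K' * (2 * ‖c‖ ^ 2 + 2 * ‖C‖ ^ 2 + ‖C‖ ^ 2))) := by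
          have := kern_nonneg p z.2
          gcongr
      _ = _ := by ring
  · filter_upwards [ae_paramMeasure] with z hz τ hτ
    exact (hasDerivAt_dens p hm0 hfc hgc (hlow τ hτ) (havg τ hτ z.2 hz z.1)).const_mul _

lemma integrable_kern_mul_inner {p : ℝ} {f g : ℝ → EuclideanSpace ℝ (Fin n)} (hf : Continuous f)
    (hg : Continuous g)
    (hfi : Integrable (fun z : ℝ × ℝ × ℝ =>
      kern p z.2 * ‖avg f z.1 0 z.2.2 - avg f z.1 0 z.2.1‖ ^ 2) paramMeasure)
    (hgi : Integrable (fun z : ℝ × ℝ × ℝ =>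
      kern p z.2 * ‖avg g z.1 0 z.2.2 - avg g z.1 0 z.2.1‖ ^ 2) paramMeasure) :
    Integrable (fun z : ℝ × ℝ × ℝ => kern p z.2 *
      inner ℝ (avg f z.1 0 z.2.2 - avg f z.1 0 z.2.1) (avg g z.1 0 z.2.2 - avg g z.1 0 z.2.1))
      paramMeasure := by
  have ha := measurable_avg hf (x := fun _ => 0) (y := fun z => z.2.2) (by fun_prop) (by fun_prop)
  have hb := measurable_avg hf (x := fun _ => 0) (y := fun z => z.2.1) (by fun_prop) (by fun_prop)
  have ha' := measurable_avg hg (x := fun _ => 0) (y := fun z => z.2.2) (by fun_prop) (by fun_prop)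
  have hb' := measurable_avg hg (x := fun _ => 0) (y := fun z => z.2.1) (by fun_prop) (by fun_prop)
  have hk := measurable_kern p
  refine Integrable.mono' (hfi.add hgi) (Measurable.aestronglyMeasurable (by fun_prop)) ?_
  refine Eventually.of_forall fun z => ?_
  rw [norm_mul, Real.norm_of_nonneg (kern_nonneg p _), Real.norm_eq_abs, Pi.add_apply, ← mul_add]
  refine mul_le_mul_of_nonneg_left ((abs_real_inner_le_norm _ _).trans ?_) (kern_nonneg p _)
  set s := ‖avg f z.1 0 z.2.2 - avg f z.1 0 z.2.1‖
  set t := ‖avg g z.1 0 z.2.2 - avg g z.1 0 z.2.1‖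
  nlinarith [sq_nonneg (s - t), sq_nonneg (s + t)]

/-- The first variation agrees with the quadratic form up to terms of order `-σ`. -/
theorem exists_remainder_le {p : ℝ} (hp : p ∈ Ioo (2:ℝ) (8/3)) {σ : ℝ} (hσ : 0 ≤ σ) {G : ℤ → ℝ}
    (hG0 : ∀ k, 0 ≤ G k) (hGs : Summable fun k => G k * wt σ k)
    (hG2 : Summable fun k => (wt σ k * G k) ^ 2)
    (hG3 : Summable fun k => (wt σ k * G k) ^ 2 * |(k:ℝ)| ^ (3 * p - 6))
    {f : ℝ → EuclideanSpace ℝ (Fin n)} (hf : HasCoef G f) (h1 : ∀ u, ‖f u‖ = 1)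
    {c₀ : ℝ} (hc₀ : 0 < c₀) (hc : ∀ x ∈ domainD, ∀ u, AvgGe c₀ f u x.1 x.2) :
    ∃ C, 0 ≤ C ∧ ∀ (H : ℤ → ℝ) (g : ℝ → EuclideanSpace ℝ (Fin n)), (∀ k, 0 ≤ H k) →
      HasCoef H g → Summable H → (Summable fun k => H k * wt (-σ) k) →
      Integrable (fun z => kern p z.2 * dDens p f g z.1 z.2.1 z.2.2) paramMeasure →
      Integrable (fun z : ℝ × ℝ × ℝ => kern p z.2 *
        inner ℝ (avg f z.1 0 z.2.2 - avg f z.1 0 z.2.1) (avg g z.1 0 z.2.2 - avg g z.1 0 z.2.1))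
        paramMeasure →
      |(1 / 2) * ∫ z, kern p z.2 * dDens p f g z.1 z.2.1 z.2.2 ∂paramMeasure
        - ∫ z, kern p z.2 * inner ℝ (avg f z.1 0 z.2.2 - avg f z.1 0 z.2.1)
          (avg g z.1 0 z.2.2 - avg g z.1 0 z.2.1) ∂paramMeasure| ≤
        C * ∑' k, H k * wt (-σ) k := by
  obtain ⟨K, hK, hb⟩ := rb_dDens_sub_inner hσ p hG0 hGs hG2 hf h1 hc₀ hc
  have hki := integrableOn_kern_mul_modSq hp hG2 hG3
  refine ⟨K * ∫ x in domainD, kern p x * modSq σ G (x.2 - x.1), mul_nonneg hK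
    (integral_nonneg fun x => mul_nonneg (kern_nonneg p x) (modSq_nonneg _ _ _)),
    fun H g hH0 hg hH hs i1 i2 => ?_⟩
  set S := ∑' k, H k * wt (-σ) k
  rw [← integral_const_mul, ← integral_sub (i1.const_mul _) i2]
  have i3 : Integrable (fun z : ℝ × ℝ × ℝ => 1 / 2 * (kern p z.2 * dDens p f g z.1 z.2.1 z.2.2)
      - kern p z.2 * inner ℝ (avg f z.1 0 z.2.2 - avg f z.1 0 z.2.1)
        (avg g z.1 0 z.2.2 - avg g z.1 0 z.2.1)) paramMeasure := (i1.const_mul (1 / 2)).sub i2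
  unfold paramMeasure at i3 ⊢
  rw [integral_prod_symm _ i3]
  have hle : ∀ᵐ x ∂volume.restrict domainD,
      ‖∫ u in Ico (0:ℝ) 1, ((1 / 2) * (kern p x * dDens p f g u x.1 x.2)
        - kern p x * inner ℝ (avg f u 0 x.2 - avg f u 0 x.1) (avg g u 0 x.2 - avg g u 0 x.1))‖
      ≤ K * S * (kern p x * modSq σ G (x.2 - x.1)) := by
    filter_upwards [ae_restrict_mem measurableSet_domainD] with x hx
    have h2 := (hb ⟨x, hx⟩ H g hH0 hg hH hs).2
    rw [intervalIntegral.integral_of_le zero_le_one, ← integral_Ico_eq_integral_Ioc] at h2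
    have e : ∀ u, (1 / 2) * (kern p x * dDens p f g u x.1 x.2)
        - kern p x * inner ℝ (avg f u 0 x.2 - avg f u 0 x.1) (avg g u 0 x.2 - avg g u 0 x.1) =
        kern p x * (dDens p f g u x.1 x.2 / 2
          - inner ℝ (avg f u 0 x.2 - avg f u 0 x.1) (avg g u 0 x.2 - avg g u 0 x.1)) :=
      fun u => by ring
    simp only [e]
    rw [integral_const_mul, norm_mul, Real.norm_of_nonneg (kern_nonneg p _), Real.norm_eq_abs]
    calc _ ≤ kern p x * (K * modSq σ G (x.2 - x.1) * S) :=
          mul_le_mul_of_nonneg_left h2 (kern_nonneg _ _)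
      _ = _ := by ring
  have := norm_integral_le_of_norm_le (hki.const_mul (K * S)) hle
  rw [integral_const_mul, Real.norm_eq_abs] at this
  refine this.trans_eq ?_
  ring

lemma wt_add_exp (s t : ℝ) (k : ℤ) : wt (s + t) k = wt s k * wt t k :=
  Real.rpow_add (by positivity) _ _

lemma wt_mono {s t : ℝ} (h : s ≤ t) (k : ℤ) : wt s k ≤ wt t k :=
  Real.rpow_le_rpow_of_exponent_le (by linarith [abs_nonneg (k:ℝ)]) h

lemma wt_sq (t : ℝ) (k : ℤ) : wt t k ^ 2 = wt (2 * t) k := by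
  rw [two_mul, wt_add_exp, sq]

lemma summable_wt_sq {t : ℝ} (ht : 1 / 2 < t) : Summable fun k : ℤ => wt (-t) k ^ 2 := by
  have h := Real.summable_abs_int_rpow (b := 2 * t) (by linarith)
  refine Summable.of_norm_bounded_eventually h ?_
  have : ∀ᶠ k : ℤ in cofinite, k ≠ 0 := (Set.finite_singleton (0:ℤ)).eventually_cofinite_notMem
  filter_upwards [this] with k hk
  rw [wt_sq, Real.norm_of_nonneg (wt_pos _ _).le, wt, show 2 * -t = -(2 * t) by ring]
  exact Real.rpow_le_rpow_of_nonpos (by positivity) (by linarith) (by linarith)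

lemma tsum_mul_wt_le {a : ℤ → ℝ} (ha : ∀ k, 0 ≤ a k) {s t : ℝ} (ht : 1 / 2 < t)
    (h : Summable fun k => (wt (t + s) k * a k) ^ 2) :
    (Summable fun k => a k * wt s k) ∧ ∑' k, a k * wt s k ≤
      √(∑' k : ℤ, wt (-t) k ^ 2) * √(∑' k, (wt (t + s) k * a k) ^ 2) := by
  have e : ∀ k, a k * wt s k = wt (-t) k * (wt (t + s) k * a k) := fun k => by
    rw [← mul_assoc, ← wt_add_exp, mul_comm]; ring_nf
  simp only [e]
  have h0 : ∀ k, 0 ≤ wt (t + s) k * a k := fun k => mul_nonneg (wt_pos _ _).le (ha k)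
  have h1 : Summable fun k : ℤ => wt (-t) k ^ (2:ℝ) := by simpa using summable_wt_sq ht
  have h2 : Summable fun k => (wt (t + s) k * a k) ^ (2:ℝ) := by simpa using h
  refine ⟨Real.summable_mul_of_Lp_Lq_of_nonneg Real.HolderConjugate.two_two
    (fun k => (wt_pos _ _).le) h0 h1 h2, ?_⟩
  have := Real.inner_le_Lp_mul_Lq_tsum_of_nonneg Real.HolderConjugate.two_two
    (fun k => (wt_pos _ _).le) h0 h1 h2
  simpa [Real.sqrt_eq_rpow] using this

/-- The size of the Fourier coefficients of the derivative of `γ`. -/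
def dCoef (γ : ℝ → EuclideanSpace ℝ (Fin n)) (k : ℤ) : ℝ :=
  2 * Real.pi * |(k:ℝ)| * ‖fourierCoef γ k‖

lemma dCoef_nonneg (γ : ℝ → EuclideanSpace ℝ (Fin n)) (k : ℤ) : 0 ≤ dCoef γ k := by
  have := Real.pi_pos
  unfold dCoef; positivity

lemma wt_sq_le (t : ℝ) (k : ℤ) : wt t k ^ 2 ≤ 2 ^ |t| * (1 + (k:ℝ) ^ 2) ^ t := by
  have e : wt t k ^ 2 = ((1 + |(k:ℝ)|) ^ 2) ^ t := by
    rw [wt, ← Real.rpow_mul_natCast (by positivity), ← Real.rpow_natCast (1 + _),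
      ← Real.rpow_mul (by positivity), mul_comm]
  have h1 : (1 + |(k:ℝ)|) ^ 2 ≤ 2 * (1 + (k:ℝ) ^ 2) := by
    nlinarith [sq_nonneg (1 - |(k:ℝ)|), sq_abs (k:ℝ)]
  have h2 : 1 + (k:ℝ) ^ 2 ≤ (1 + |(k:ℝ)|) ^ 2 := by nlinarith [abs_nonneg (k:ℝ), sq_abs (k:ℝ)]
  rw [e]
  rcases le_total 0 t with ht | ht
  · rw [abs_of_nonneg ht, ← Real.mul_rpow (by norm_num) (by positivity)]
    exact Real.rpow_le_rpow (by positivity) h1 ht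
  · calc _ ≤ (1 + (k:ℝ) ^ 2) ^ t := Real.rpow_le_rpow_of_nonpos (by positivity) h2 ht
      _ ≤ _ := le_mul_of_one_le_left (by positivity)
        (Real.one_le_rpow (by norm_num) (abs_nonneg _))

lemma wt_mul_dCoef_sq_le (γ : ℝ → EuclideanSpace ℝ (Fin n)) (t : ℝ) (k : ℤ) :
    (wt (t - 1) k * dCoef γ k) ^ 2 ≤
      (2 * Real.pi) ^ 2 * 2 ^ |t| * ((1 + (k:ℝ) ^ 2) ^ t * ‖fourierCoef γ k‖ ^ 2) := by
  have hk : |(k:ℝ)| ≤ wt 1 k := by simp [wt]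
  have h1 : wt (t - 1) k * dCoef γ k ≤ 2 * Real.pi * (wt t k * ‖fourierCoef γ k‖) := by
    have e : wt t k = wt (t - 1) k * wt 1 k := by rw [← wt_add_exp]; ring_nf
    rw [e, dCoef]
    have := Real.pi_pos
    have := (wt_pos (t - 1) k).le
    calc _ = 2 * Real.pi * (wt (t - 1) k * |(k:ℝ)| * ‖fourierCoef γ k‖) := by ring
      _ ≤ _ := by gcongr
  calc _ ≤ (2 * Real.pi * (wt t k * ‖fourierCoef γ k‖)) ^ 2 :=
        pow_le_pow_left₀ (mul_nonneg (wt_pos _ _).le (dCoef_nonneg γ k)) h1 2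
    _ = (2 * Real.pi) ^ 2 * wt t k ^ 2 * ‖fourierCoef γ k‖ ^ 2 := by ring
    _ ≤ (2 * Real.pi) ^ 2 * (2 ^ |t| * (1 + (k:ℝ) ^ 2) ^ t) * ‖fourierCoef γ k‖ ^ 2 := by
        gcongr; exact wt_sq_le t k
    _ = _ := by ring

lemma summable_wt_mul_dCoef_sq {γ : ℝ → EuclideanSpace ℝ (Fin n)} {t : ℝ}
    (h : Summable fun k : ℤ => (1 + (k:ℝ) ^ 2) ^ t * ‖fourierCoef γ k‖ ^ 2) :
    Summable fun k => (wt (t - 1) k * dCoef γ k) ^ 2 :=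
  Summable.of_nonneg_of_le (fun _ => sq_nonneg _) (wt_mul_dCoef_sq_le γ t) (h.mul_left _)

lemma sqrt_tsum_wt_mul_dCoef_sq_le {γ : ℝ → EuclideanSpace ℝ (Fin n)} {t : ℝ}
    (h : Summable fun k : ℤ => (1 + (k:ℝ) ^ 2) ^ t * ‖fourierCoef γ k‖ ^ 2) :
    √(∑' k, (wt (t - 1) k * dCoef γ k) ^ 2) ≤
      √((2 * Real.pi) ^ 2 * 2 ^ |t|) * fourierSobNorm t γ := by
  rw [fourierSobNorm, ← Real.sqrt_mul (by positivity), ← tsum_mul_left]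
  exact Real.sqrt_le_sqrt ((summable_wt_mul_dCoef_sq h).tsum_le_tsum
    (wt_mul_dCoef_sq_le γ t) (h.mul_left _))

/-- The coefficient bounds required of curves in `W^{3p/2-2+σ,2}`. -/
lemma dCoef_summable {γ : ℝ → EuclideanSpace ℝ (Fin n)} {p σ : ℝ} (hp : 7 / 3 < p)
    (h : Summable fun k : ℤ => (1 + (k:ℝ) ^ 2) ^ (3 * p / 2 - 2 + σ) * ‖fourierCoef γ k‖ ^ 2) :
    (Summable fun k => dCoef γ k * wt σ k) ∧ (Summable fun k => (wt σ k * dCoef γ k) ^ 2) ∧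
      Summable fun k => (wt σ k * dCoef γ k) ^ 2 * |(k:ℝ)| ^ (3 * p - 6) := by
  have h0 := summable_wt_mul_dCoef_sq h
  rw [show 3 * p / 2 - 2 + σ - 1 = (3 * p / 2 - 3) + σ by ring] at h0
  refine ⟨(tsum_mul_wt_le (dCoef_nonneg γ) (by linarith) h0).1, ?_, ?_⟩
  · refine Summable.of_nonneg_of_le (fun k => sq_nonneg _) (fun k => ?_) h0
    refine pow_le_pow_left₀ (mul_nonneg (wt_pos _ _).le (dCoef_nonneg γ k)) ?_ 2
    exact mul_le_mul_of_nonneg_right (wt_mono (by linarith) k) (dCoef_nonneg γ k)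
  · refine Summable.of_nonneg_of_le (fun k => by positivity) (fun k => ?_) h0
    rw [wt_add_exp, mul_assoc (wt _ k), mul_pow (wt (3 * p / 2 - 3) k), mul_comm]
    refine mul_le_mul_of_nonneg_right ?_ (sq_nonneg _)
    rw [wt_sq, wt, show 2 * (3 * p / 2 - 3) = 3 * p - 6 by ring]
    exact Real.rpow_le_rpow (abs_nonneg _) (by linarith) (by linarith)

lemma hasSum_fourierCoef {γ : ℝ → EuclideanSpace ℝ (Fin n)} (hc : Continuous γ)
    (hper : Function.Periodic γ 1) (hs : Summable (dCoef γ)) (i : Fin n) (u : ℝ) :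
    HasSum (fun k => fourierCoef γ k i * ch k u) ((γ u i : ℝ) : ℂ) := by
  have : Fact ((0:ℝ) < 1) := ⟨one_pos⟩
  have hper' : Function.Periodic (fun x => ((γ x i : ℝ) : ℂ)) 1 := fun x => by
    simp only [hper x]
  let F : C(AddCircle (1:ℝ), ℂ) :=
    ⟨hper'.lift, continuous_coinduced_dom.mpr (by
      have : Continuous fun x => ((γ x i : ℝ) : ℂ) := by fun_prop
      exact this)⟩
  have hF : ∀ x : ℝ, F (x : AddCircle (1:ℝ)) = ((γ x i : ℝ) : ℂ) := fun x => hper'.lift_coe x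
  have hch : ∀ (k : ℤ) (x : ℝ), fourier k (x : AddCircle (1:ℝ)) = ch k x := fun k x => by
    rw [fourier_coe_apply, ch]; congr 1; push_cast; ring
  have hcoef : ∀ k, fourierCoeff F k = fourierCoef γ k i := fun k => by
    rw [fourierCoeff_eq_intervalIntegral _ _ 0, zero_add,
      intervalIntegral.integral_of_le zero_le_one, ← integral_Ico_eq_integral_Ioc]
    simp only [hF, hch, one_div, inv_one, one_smul, smul_eq_mul]
    refine integral_congr_ae (Eventually.of_forall fun x => ?_)
    simp only [ch]
    rw [mul_comm]
    congr 2; push_cast; ring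
  have hle : ∀ᶠ k : ℤ in cofinite, ‖fourierCoef γ k i‖ ≤ dCoef γ k := by
    have : ∀ᶠ k : ℤ in cofinite, k ≠ 0 := (Set.finite_singleton (0:ℤ)).eventually_cofinite_notMem
    filter_upwards [this] with k hk
    have h1 : (1:ℝ) ≤ |(k:ℝ)| := by exact_mod_cast Int.one_le_abs hk
    have h2 := Real.two_le_pi
    calc ‖fourierCoef γ k i‖ ≤ ‖fourierCoef γ k‖ := PiLp.norm_apply_le _ _
      _ ≤ _ := le_mul_of_one_le_left (norm_nonneg _) (by nlinarith)
  have hsum : Summable (fourierCoeff F) := by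
    rw [show fourierCoeff F = fun k => fourierCoef γ k i from funext hcoef]
    exact Summable.of_norm_bounded_eventually hs hle
  have := has_pointwise_sum_fourier_series_of_summable hsum (u : AddCircle (1:ℝ))
  simpa only [hcoef, hch, hF, smul_eq_mul] using this

lemma exists_hasCoef_deriv {γ : ℝ → EuclideanSpace ℝ (Fin n)} (hc : Continuous γ)
    (hper : Function.Periodic γ 1) (hs : Summable (dCoef γ)) :
    ∃ f, HasCoef (dCoef γ) f ∧ ∀ u, HasDerivAt γ (f u) u := by
  let b : Fin n → ℤ → ℂ := fun i k => 2 * Real.pi * k * Complex.I * fourierCoef γ k i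
  have hb : ∀ i k, ‖b i k‖ ≤ dCoef γ k := fun i k => by
    simp only [b, dCoef, norm_mul, Complex.norm_I, mul_one, Complex.norm_ofNat,
      Complex.norm_real, Complex.norm_intCast, Real.norm_of_nonneg Real.pi_pos.le]
    exact mul_le_mul_of_nonneg_left (PiLp.norm_apply_le _ _) (by positivity)
  have hd : ∀ i u, HasDerivAt (fun u => ((γ u i : ℝ) : ℂ)) (∑' k, b i k * ch k u) u := fun i u => by
    have h := hasDerivAt_tsum (g := fun k u => fourierCoef γ k i * ch k u)
      (g' := fun k u => b i k * ch k u) (y₀ := 0) hs (fun k u => by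
        have := (hasDerivAt_ch k u).const_mul (fourierCoef γ k i)
        refine this.congr_deriv ?_
        simp only [b]; ring) (fun k u => by rw [norm_mul, norm_ch, mul_one]; exact hb i k)
      (hasSum_fourierCoef hc hper hs i 0).summable u
    refine h.congr_of_eventuallyEq (Eventually.of_forall fun u => ?_)
    exact (hasSum_fourierCoef hc hper hs i u).tsum_eq.symm
  have hre : ∀ i u, HasDerivAt (fun u => γ u i) (∑' k, b i k * ch k u).re u := fun i u => by
    exact Complex.reCLM.hasFDerivAt.comp_hasDerivAt u (hd i u)
  refine ⟨fun u => WithLp.toLp 2 fun i => (∑' k, b i k * ch k u).re, fun i => ?_, fun u => ?_⟩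
  · refine ⟨b i, hb i, fun u => ?_⟩
    have hsum : Summable fun k => b i k * ch k u :=
      Summable.of_norm_bounded hs fun k => by rw [norm_mul, norm_ch, mul_one]; exact hb i k
    have e := (hd i u).unique (hre i u).ofReal_comp
    simp only [id]
    rw [← e]
    exact hsum.hasSum
  · have := hasDerivAt_pi.2 fun i => hre i u
    exact (PiLp.continuousLinearEquiv 2 ℝ (fun _ : Fin n => ℝ)).symm.hasFDerivAt.comp_hasDerivAt u
      this

lemma CurvePair.continuous {γ γ' : ℝ → EuclideanSpace ℝ (Fin n)} (h : CurvePair γ γ')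
    (hi : IntervalIntegrable γ' volume 0 1) : Continuous γ := by
  have hi' := h.periodic'.intervalIntegrable₀ one_ne_zero hi
  rw [funext h.primitive]
  exact continuous_const.add (intervalIntegral.continuous_primitive hi' 0)

lemma CurvePair.ae_eq_deriv {γ γ' f : ℝ → EuclideanSpace ℝ (Fin n)} (h : CurvePair γ γ')
    (hi : IntervalIntegrable γ' volume 0 1) (hf : ∀ u, HasDerivAt γ (f u) u) : γ' =ᵐ[volume] f := by
  have hi' := h.periodic'.intervalIntegrable₀ one_ne_zero hi
  have hloc : LocallyIntegrable γ' volume := by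
    rw [locallyIntegrable_iff]
    intro K hK
    obtain ⟨a, ha⟩ := hK.bddBelow
    obtain ⟨b, hb⟩ := hK.bddAbove
    have := hi' a (max a b)
    rw [intervalIntegrable_iff_integrableOn_Icc_of_le (le_max_left a b)] at this
    exact this.mono_set fun x hx => ⟨ha hx, (hb hx).trans (le_max_right a b)⟩
  filter_upwards [LocallyIntegrable.ae_hasDerivAt_integral hloc] with x hx
  have h1 := (hx 0).const_add (γ 0)
  rw [← funext h.primitive] at h1
  exact h1.unique (hf x)

lemma sub_eq_smul_avg {γ f : ℝ → EuclideanSpace ℝ (Fin n)} (hc : Continuous f)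
    (hf : ∀ u, HasDerivAt γ (f u) u) (u x y : ℝ) :
    γ (u + y) - γ (u + x) = (y - x) • avg f u x y := by
  have h1 : (y - x) • avg f u x y = ∫ t in (u + x)..(u + y), f t := by
    have := intervalIntegral.smul_integral_comp_add_mul (a := 0) (b := 1) f (y - x) (u + x)
    rw [show u + x + (y - x) * 0 = u + x by ring, show u + x + (y - x) * 1 = u + y by ring] at this
    rw [← this, avg]
    congr 1
    refine intervalIntegral.integral_congr fun θ _ => ?_
    exact congrArg f (by ring)
  rw [h1, intervalIntegral.integral_eq_sub_of_hasDerivAt (fun t _ => hf t)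
    (hc.intervalIntegrable _ _)]

lemma periodic_deriv {γ f : ℝ → EuclideanSpace ℝ (Fin n)} (h : Function.Periodic γ 1)
    (hf : ∀ u, HasDerivAt γ (f u) u) : Function.Periodic f 1 := fun u => by
  have h1 := (hf (u + 1)).comp_add_const u 1
  rw [show (fun x => γ (x + 1)) = γ from funext h] at h1
  exact h1.unique (hf u)

lemma avg_ne_zero {γ f : ℝ → EuclideanSpace ℝ (Fin n)} (hc : Continuous f)
    (hf : ∀ u, HasDerivAt γ (f u) u) (h1 : ∀ u, ‖f u‖ = 1) (hinj : InjCircle γ) {u x y : ℝ}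
    (hxy : |y - x| < 1) : avg f u x y ≠ 0 := by
  intro h0
  rcases eq_or_ne x y with rfl | hne
  · rw [avg_self] at h0
    have := h1 (u + x)
    rw [h0, norm_zero] at this
    exact zero_ne_one this
  · have h2 := sub_eq_smul_avg hc hf u x y
    rw [h0, smul_zero, sub_eq_zero] at h2
    obtain ⟨k, hk⟩ := hinj _ _ h2
    have hk' : y - x = -(k:ℝ) := by linarith
    rw [hk', abs_neg] at hxy
    have : k = 0 := by
      rw [← Int.abs_lt_one_iff]
      exact_mod_cast hxy
    rw [this] at hk'
    apply hne
    push_cast at hk'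
    linarith

lemma periodic_avg {f : ℝ → EuclideanSpace ℝ (Fin n)} (hf : Function.Periodic f 1) (x y : ℝ) :
    Function.Periodic (fun u => avg f u x y) 1 := fun u => by
  unfold avg
  refine intervalIntegral.integral_congr fun θ _ => ?_
  rw [show u + 1 + (x + θ * (y - x)) = u + (x + θ * (y - x)) + 1 by ring, hf]

/-- An injective closed unit speed curve satisfies a chord-arc bound. -/
lemma exists_avgGe {γ f : ℝ → EuclideanSpace ℝ (Fin n)} (hc : Continuous f)
    (hper : Function.Periodic γ 1) (hf : ∀ u, HasDerivAt γ (f u) u) (h1 : ∀ u, ‖f u‖ = 1)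
    (hinj : InjCircle γ) : ∃ c₀, 0 < c₀ ∧ ∀ x ∈ domainD, ∀ u, AvgGe c₀ f u x.1 x.2 := by
  have hf1 := periodic_deriv hper hf
  have hpos : ∀ q ∈ {q : ℝ × ℝ × ℝ | |q.2.2 - q.2.1| ≤ 2 / 3}, 0 < ‖avg f q.1 q.2.1 q.2.2‖ :=
    fun q hq => norm_pos_iff.2 (avg_ne_zero hc hf h1 hinj (lt_of_le_of_lt hq (by norm_num)))
  have hcl : IsClosed {q : ℝ × ℝ × ℝ | |q.2.2 - q.2.1| ≤ 2 / 3} :=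
    isClosed_le (by fun_prop) continuous_const
  have hS := (isCompact_Icc (a := (0:ℝ)) (b := 1)).prod
    ((isCompact_Icc (a := (-1:ℝ)) (b := 1)).prod (isCompact_Icc (a := (-1:ℝ)) (b := 1)))
      |>.inter_right hcl
  obtain ⟨c₀, hc0, hle⟩ := hS.exists_forall_le' (continuous_avg hc).norm.continuousOn
    fun q hq => hpos q hq.2
  have key : ∀ u x y : ℝ, x ∈ Icc (-1:ℝ) 1 → y ∈ Icc (-1:ℝ) 1 → |y - x| ≤ 2 / 3 →
      c₀ ≤ ‖avg f u x y‖ := fun u x y hx hy hxy => by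
    obtain ⟨v, hv, he⟩ := (periodic_avg hf1 x y).exists_mem_Ico₀ one_pos u
    rw [he]
    exact hle (v, x, y) ⟨⟨⟨hv.1, hv.2.le⟩, hx, hy⟩, hxy⟩
  refine ⟨c₀, hc0, fun x hx u => ?_⟩
  obtain ⟨⟨a1, a2⟩, ⟨b1, b2⟩, h3, h4⟩ := hx
  refine ⟨key u 0 x.2 (by constructor <;> linarith) (by constructor <;> linarith) ?_,
    key u 0 x.1 (by constructor <;> linarith) (by constructor <;> linarith) ?_,
    key u x.1 x.2 (by constructor <;> linarith) (by constructor <;> linarith) ?_⟩ <;>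
  · rw [abs_le]
    constructor <;> linarith

lemma lintegral_add_left_of_periodic {φ : ℝ → ℝ≥0∞} (hφ : Function.Periodic φ 1) (a : ℝ) :
    ∫⁻ x in Ico (0:ℝ) 1, φ (a + x) = ∫⁻ x in Ico (0:ℝ) 1, φ x := by
  have h1 : ∫⁻ x in Ico (0:ℝ) 1, φ (a + x) = ∫⁻ x in Ioc a (a + 1), φ x := by
    rw [← restrict_Ico_eq_restrict_Ioc]
    have := (measurePreserving_add_left volume a).setLIntegral_comp_preimage_emb
      (measurableEmbedding_addLeft a) φ (Ico a (a + 1))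
    rw [← this]
    congr 2
    ext x
    simp
  rw [h1, ← zero_add (1:ℝ), restrict_Ico_eq_restrict_Ioc, zero_add]
  have h2 := (isAddFundamentalDomain_Ioc (one_pos (α := ℝ)) a).setLIntegral_eq
    (isAddFundamentalDomain_Ioc (one_pos (α := ℝ)) 0) φ (fun g x => by
      obtain ⟨k, hk⟩ := AddSubgroup.mem_zmultiples_iff.1 g.2
      rw [AddSubgroup.vadd_def, vadd_eq_add, ← hk, add_comm]
      exact hφ.zsmul k x)
  simpa using h2

/-- The triangle `0 < x < y < 1`. -/
def triangle : Set (ℝ × ℝ) := {q | 0 < q.1 ∧ q.1 < q.2 ∧ q.2 < 1}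

lemma measurableSet_triangle : MeasurableSet triangle :=
  (measurableSet_lt measurable_const measurable_fst).inter
    ((measurableSet_lt measurable_fst measurable_snd).inter
      (measurableSet_lt measurable_snd measurable_const))

section Triangle

variable {J : ℝ × ℝ → ℝ≥0∞}

lemma lintegral_comp_neg_sub (hJ : Measurable J) : ∫⁻ q : ℝ × ℝ, J (-q.1, q.2 - q.1) = ∫⁻ q, J q := by
  rw [Measure.volume_eq_prod, lintegral_prod _ (by fun_prop), lintegral_prod _ (by fun_prop)]
  simp only
  rw [← lintegral_neg_eq_self (μ := volume) fun x => ∫⁻ y, J (x, y)]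
  exact lintegral_congr fun x => lintegral_sub_right_eq_self (fun y => J (-x, y)) x

lemma lintegral_comp_sub_one_swap (hJ : Measurable J) :
    ∫⁻ q : ℝ × ℝ, J (q.2 - 1, q.1) = ∫⁻ q, J q := by
  rw [Measure.volume_eq_prod, lintegral_prod _ (by fun_prop), lintegral_prod_symm _ (by fun_prop)]
  exact lintegral_congr fun x => lintegral_sub_right_eq_self (fun y => J (y, x)) 1

lemma lintegral_comp_sub_one_sub (hJ : Measurable J) :
    ∫⁻ q : ℝ × ℝ, J (q.1 - q.2, 1 - q.2) = ∫⁻ q, J q := by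
  rw [Measure.volume_eq_prod, lintegral_prod_symm _ (by fun_prop),
    lintegral_prod_symm _ (by fun_prop)]
  simp only
  rw [← lintegral_sub_left_eq_self (μ := volume) (fun y => ∫⁻ x, J (x, y)) 1]
  exact lintegral_congr fun y => lintegral_sub_right_eq_self (fun x => J (x, 1 - y)) y

lemma ae_linear_ne (a b c : ℝ) (h : a ≠ 0 ∨ b ≠ 0) :
    ∀ᵐ q : ℝ × ℝ, a * q.1 + b * q.2 ≠ c := by
  have hm : MeasurableSet {q : ℝ × ℝ | a * q.1 + b * q.2 ≠ c} :=
    (measurableSet_eq_fun (by fun_prop) measurable_const).compl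
  have hs : ∀ {r s : ℝ}, r ≠ 0 → ∀ᵐ y : ℝ, r * y + s ≠ c := fun {r s} hr => by
    have h0 : volume {(c - s) / r} = 0 := Real.volume_singleton
    filter_upwards [compl_mem_ae_iff.2 h0] with y hy hy'
    exact hy (by rw [mem_singleton_iff, eq_div_iff hr]; linarith)
  rcases eq_or_ne b 0 with hb | hb
  · have ha : a ≠ 0 := by simpa [hb] using h
    have := Measure.quasiMeasurePreserving_fst (μ := (volume : Measure ℝ))
      (ν := (volume : Measure ℝ)) |>.ae (hs (s := 0) ha)
    filter_upwards [this] with q hq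
    simpa [hb] using hq
  · rw [Measure.volume_eq_prod, Measure.ae_prod_iff_ae_ae hm]
    refine Eventually.of_forall fun x => ?_
    filter_upwards [hs (s := a * x) hb] with y hy
    rwa [add_comm] at hy

/-- Up to a null set, the triangle `0 < x < y < 1` splits according to the longest of the arcs
between `0`, `x` and `y`; the three parts are images of `domainD`. -/
lemma setLIntegral_triangle (hJ : Measurable J) (hsymm : ∀ x y, J (x, y) = J (y, x))
    (hper : ∀ x y, J (x + 1, y) = J (x, y)) (hshift : ∀ x y, J (x, y) = J (-x, y - x)) :
    ∫⁻ q in triangle, J q = 3 * ∫⁻ q in domainD, J q := by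
  set K : ℝ × ℝ → ℝ≥0∞ := domainD.indicator J with hKdef
  have hK : Measurable K := hJ.indicator measurableSet_domainD
  have mK : ∀ q ∈ domainD, J q = K q := fun q hq => (indicator_of_mem hq J).symm
  have hA : ∀ x y, J (y - 1, x) = J (x, y) := fun x y => by
    rw [← hper, sub_add_cancel, hsymm]
  have hC : ∀ x y, J (x - y, 1 - y) = J (x, y) := fun x y => by
    rw [hsymm, show 1 - y = -y + 1 by ring, hper, ← hshift, hsymm]
  have key : (triangle.indicator J) =ᵐ[volume] fun q =>
      K (q.2 - 1, q.1) + (K (-q.1, q.2 - q.1) + K (q.1 - q.2, 1 - q.2)) := by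
    filter_upwards [ae_linear_ne 2 (-1) 0 (by norm_num), ae_linear_ne (-1) 2 1 (by norm_num),
      ae_linear_ne 1 1 1 (by norm_num)] with q h1 h2 h3
    obtain ⟨x, y⟩ := q
    simp only at h1 h2 h3 ⊢
    have zA : ¬ (0 < x ∧ x < y ∧ y < 1 ∧ x ≤ y - x ∧ 1 - y ≤ y - x) → K (y - 1, x) = 0 :=
      fun h => indicator_of_notMem (fun hm => h ?_) _
    have zB : ¬ (0 < x ∧ x < y ∧ y < 1 ∧ x ≤ 1 - y ∧ y - x ≤ 1 - y) → K (-x, y - x) = 0 :=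
      fun h => indicator_of_notMem (fun hm => h ?_) _
    have zC : ¬ (0 < x ∧ x < y ∧ y < 1 ∧ y - x ≤ x ∧ 1 - y ≤ x) → K (x - y, 1 - y) = 0 :=
      fun h => indicator_of_notMem (fun hm => h ?_) _
    rotate_left
    iterate 3
      obtain ⟨⟨a1, a2⟩, ⟨b1, b2⟩, c1, c2⟩ := hm
      simp only at a1 a2 b1 b2 c1 c2
      refine ⟨?_, ?_, ?_, ?_, ?_⟩ <;> linarith
    by_cases hq : (x, y) ∈ triangle
    · rw [indicator_of_mem hq]
      obtain ⟨t1, t2, t3⟩ := hq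
      simp only at t1 t2 t3
      rcases le_total (y - x) x with hab | hab
      · rw [zA fun h => h1 (by linarith [h.2.2.2.1]), zero_add]
        rcases le_total (1 - y) x with hac | hac
        · rw [zB fun h => h3 (by linarith [h.2.2.2.1]), zero_add, ← hC]
          refine mK _ ⟨⟨?_, ?_⟩, ⟨?_, ?_⟩, ?_, ?_⟩ <;> simp only <;> linarith
        · rw [zC fun h => h3 (by linarith [h.2.2.2.2]), add_zero, hshift]
          refine mK _ ⟨⟨?_, ?_⟩, ⟨?_, ?_⟩, ?_, ?_⟩ <;> simp only <;> linarith
      · rw [zC fun h => h1 (by linarith [h.2.2.2.1]), add_zero]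
        rcases le_total (1 - y) (y - x) with hac | hac
        · rw [zB fun h => h2 (by linarith [h.2.2.2.2]), add_zero, ← hA]
          refine mK _ ⟨⟨?_, ?_⟩, ⟨?_, ?_⟩, ?_, ?_⟩ <;> simp only <;> linarith
        · rw [zA fun h => h2 (by linarith [h.2.2.2.2]), zero_add, hshift]
          refine mK _ ⟨⟨?_, ?_⟩, ⟨?_, ?_⟩, ?_, ?_⟩ <;> simp only <;> linarith
    · rw [indicator_of_notMem hq, zA fun h => hq ⟨h.1, h.2.1, h.2.2.1⟩,
        zB fun h => hq ⟨h.1, h.2.1, h.2.2.1⟩, zC fun h => hq ⟨h.1, h.2.1, h.2.2.1⟩, add_zero, add_zero]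
  rw [← lintegral_indicator measurableSet_triangle, lintegral_congr_ae key, lintegral_add_left (by fun_prop),
    lintegral_add_left (by fun_prop), lintegral_comp_neg_sub hK, lintegral_comp_sub_one_swap hK,
    lintegral_comp_sub_one_sub hK, hKdef, lintegral_indicator measurableSet_domainD]
  ring

lemma setLIntegral_square (hJ : Measurable J) (hsymm : ∀ x y, J (x, y) = J (y, x)) :
    ∫⁻ q in Ico (0:ℝ) 1 ×ˢ Ico (0:ℝ) 1, J q =
      2 * ∫⁻ q in triangle, J q := by
  have key : ((Ico (0:ℝ) 1 ×ˢ Ico (0:ℝ) 1).indicator J) =ᵐ[volume] fun q =>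
      triangle.indicator J q + triangle.indicator J q.swap := by
    filter_upwards [ae_linear_ne 1 (-1) 0 (by norm_num), ae_linear_ne 1 0 0 (by norm_num),
      ae_linear_ne 0 1 0 (by norm_num)] with q h1 h2 h3
    obtain ⟨x, y⟩ := q
    simp only [Prod.swap_prod_mk] at h1 h2 h3 ⊢
    by_cases hq : (x, y) ∈ Ico (0:ℝ) 1 ×ˢ Ico (0:ℝ) 1
    · rw [indicator_of_mem hq]
      obtain ⟨⟨x0, x1⟩, y0, y1⟩ := hq
      simp only at x0 x1 y0 y1
      have x0' : 0 < x := lt_of_le_of_ne x0 fun h => h2 (by linarith)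
      have y0' : 0 < y := lt_of_le_of_ne y0 fun h => h3 (by linarith)
      rcases lt_trichotomy x y with hxy | hxy | hxy
      · rw [indicator_of_mem (show (x, y) ∈ triangle from ⟨x0', hxy, y1⟩),
          indicator_of_notMem (show (y, x) ∉ triangle from fun h => hxy.not_gt h.2.1), add_zero]
      · exact absurd (by linarith) h1
      · rw [indicator_of_mem (show (y, x) ∈ triangle from ⟨y0', hxy, x1⟩),
          indicator_of_notMem (show (x, y) ∉ triangle from fun h => hxy.not_gt h.2.1), zero_add, hsymm]
    · rw [indicator_of_notMem hq, indicator_of_notMem, indicator_of_notMem, add_zero]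
      · rintro ⟨t1, t2, t3⟩
        exact hq ⟨⟨(t1.trans t2).le, t3⟩, t1.le, t2.trans t3⟩
      · rintro ⟨t1, t2, t3⟩
        exact hq ⟨⟨t1.le, t2.trans t3⟩, (t1.trans t2).le, t3⟩
  rw [← lintegral_indicator (measurableSet_Ico.prod measurableSet_Ico), lintegral_congr_ae key,
    lintegral_add_left (hJ.indicator measurableSet_triangle), Measure.volume_eq_prod, lintegral_prod_swap,
    lintegral_indicator measurableSet_triangle]
  ring

end Triangle

/-- A symmetric triple integral over the circle is six times the integral over those triples
whose first point is opposite to the longest arc. -/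
lemma lintegral_triple {Φ : ℝ → ℝ → ℝ → ℝ≥0∞}
    (hΦ : Measurable fun z : ℝ × ℝ × ℝ => Φ z.1 z.2.1 z.2.2)
    (h12 : ∀ a b c, Φ a b c = Φ b a c) (h23 : ∀ a b c, Φ a b c = Φ a c b)
    (hper : ∀ a b c, Φ (a + 1) b c = Φ a b c) :
    ∫⁻ u₁ in Ico (0:ℝ) 1, ∫⁻ u₂ in Ico (0:ℝ) 1, ∫⁻ u₃ in Ico (0:ℝ) 1, Φ u₁ u₂ u₃ =
      6 * ∫⁻ z, Φ z.1 (z.1 + z.2.1) (z.1 + z.2.2) ∂paramMeasure := by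
  have hper2 : ∀ a b c, Φ a (b + 1) c = Φ a b c := fun a b c => by rw [h12, hper, h12]
  have hper3 : ∀ a b c, Φ a b (c + 1) = Φ a b c := fun a b c => by rw [h23, hper2, h23]
  have hm : Measurable fun z : ℝ × ℝ × ℝ => Φ z.1 (z.1 + z.2.1) (z.1 + z.2.2) :=
    hΦ.comp (g := fun z : ℝ × ℝ × ℝ => Φ z.1 z.2.1 z.2.2)
      (f := fun z : ℝ × ℝ × ℝ => (z.1, z.1 + z.2.1, z.1 + z.2.2)) (by fun_prop)
  set J : ℝ × ℝ → ℝ≥0∞ := fun q => ∫⁻ u in Ico (0:ℝ) 1, Φ u (u + q.1) (u + q.2) with hJdef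
  have hJ : Measurable J := hm.lintegral_prod_left'
  have hsymm : ∀ x y, J (x, y) = J (y, x) := fun x y => lintegral_congr fun u => h23 _ _ _
  have hJper : ∀ x y, J (x + 1, y) = J (x, y) := fun x y => lintegral_congr fun u => by
    simp only
    rw [← add_assoc, hper2]
  have hshift : ∀ x y, J (x, y) = J (-x, y - x) := fun x y => by
    have hψ : Function.Periodic (fun u => Φ u (u + x) (u + y)) 1 := fun u => by
      simp only
      rw [add_right_comm u 1 x, add_right_comm u 1 y, hper, hper2, hper3]
    simp only [hJdef]
    rw [← lintegral_add_left_of_periodic hψ (-x)]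
    refine lintegral_congr fun u => ?_
    rw [h12, show -x + u + x = u by ring, show -x + u = u + -x by ring,
      show u + -x + y = u + (y - x) by ring]
  have e1 : ∀ u, ∫⁻ u₂ in Ico (0:ℝ) 1, ∫⁻ u₃ in Ico (0:ℝ) 1, Φ u u₂ u₃ =
      ∫⁻ q in Ico (0:ℝ) 1 ×ˢ Ico (0:ℝ) 1, Φ u (u + q.1) (u + q.2) := fun u => by
    have hmu : Measurable fun q : ℝ × ℝ => Φ u (u + q.1) (u + q.2) :=
      hm.comp (f := fun q : ℝ × ℝ => (u, q)) (by fun_prop)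
    rw [Measure.volume_eq_prod, ← Measure.prod_restrict, lintegral_prod _ hmu.aemeasurable,
      ← lintegral_add_left_of_periodic (φ := fun u₂ => ∫⁻ u₃ in Ico (0:ℝ) 1, Φ u u₂ u₃)
        (fun b => lintegral_congr fun c => hper2 u b c) u]
    refine lintegral_congr fun x => ?_
    exact (lintegral_add_left_of_periodic (φ := fun u₃ => Φ u (u + x) u₃)
      (fun c => hper3 u (u + x) c) u).symm
  simp only [e1]
  rw [lintegral_lintegral_swap hm.aemeasurable]
  change ∫⁻ q in Ico (0:ℝ) 1 ×ˢ Ico (0:ℝ) 1, J q = _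
  rw [setLIntegral_square hJ hsymm, setLIntegral_triangle hJ hsymm hJper hshift, paramMeasure,
    lintegral_prod_symm _ hm.aemeasurable, ← mul_assoc]
  norm_num
  rfl


lemma invR_symm₁₂ (p q : ℝ) (x y z : EuclideanSpace ℝ (Fin n)) : invR p q x y z = invR p q y x z := by
  have h : wedgeSq (y - x) (z - x) = wedgeSq (x - y) (z - y) := by
    have e1 : y - x = -(x - y) := by abel
    have e2 : z - x = (z - y) - (x - y) := by abel
    rw [e1, e2]
    generalize x - y = a
    generalize z - y = b
    unfold wedgeSq
    rw [norm_neg, norm_sub_sq_real b a, inner_neg_left, inner_sub_right, real_inner_comm b a,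
      real_inner_self_eq_norm_sq]
    ring
  unfold invR wedgeNorm
  unfold wedgeSq at h
  rw [h, norm_sub_rev y x, norm_sub_rev y z, norm_sub_rev x z]
  congr 2
  ring

lemma invR_symm₂₃ (p q : ℝ) (x y z : EuclideanSpace ℝ (Fin n)) : invR p q x y z = invR p q x z y := by
  unfold invR wedgeNorm
  rw [real_inner_comm, norm_sub_rev z y, mul_comm (‖y - x‖ ^ 2)]
  congr 2
  ring

lemma speed_mul_invR_eq {γ f : ℝ → EuclideanSpace ℝ (Fin n)} (hc : Continuous f)
    (hf : ∀ u, HasDerivAt γ (f u) u) (p u : ℝ) {v w : ℝ} (hv : v < 0) (hw : 0 < w) :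
    ‖f u‖ * ‖f (u + v)‖ * ‖f (u + w)‖ * invR p 2 (γ u) (γ (u + v)) (γ (u + w)) =
      kern p (v, w) * dens p f u v w := by
  have e1 : γ (u + v) - γ u = v • avg f u 0 v := by
    simpa using sub_eq_smul_avg hc hf u 0 v
  have e2 : γ (u + w) - γ u = w • avg f u 0 w := by
    simpa using sub_eq_smul_avg hc hf u 0 w
  have e3 : ‖γ (u + v) - γ (u + w)‖ = |v - w| * ‖avg f u v w‖ := by
    rw [norm_sub_rev, sub_eq_smul_avg hc hf u v w, norm_smul, Real.norm_eq_abs, abs_sub_comm]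
  have e4 : wedgeNorm (v • avg f u 0 v) (w • avg f u 0 w) ^ (2:ℝ) =
      |v| ^ 2 * |w| ^ 2 * wedgeSq (avg f u 0 w) (avg f u 0 v) := by
    have : ‖v • avg f u 0 v‖ ^ 2 * ‖w • avg f u 0 w‖ ^ 2
        - inner ℝ (v • avg f u 0 v) (w • avg f u 0 w) ^ 2 =
        |v| ^ 2 * |w| ^ 2 * wedgeSq (avg f u 0 w) (avg f u 0 v) := by
      rw [norm_smul, norm_smul, real_inner_smul_left, real_inner_smul_right, real_inner_comm,
        wedgeSq, Real.norm_eq_abs, Real.norm_eq_abs]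
      simp only [mul_pow, sq_abs]
      ring
    rw [wedgeNorm, this, Real.rpow_two, Real.sq_sqrt]
    exact mul_nonneg (by positivity) (wedgeSq_nonneg _ _)
  have hz : ∀ a : EuclideanSpace ℝ (Fin n), (‖a‖ ^ 2) ^ (-(p / 2)) = (‖a‖ ^ p)⁻¹ := fun a => by
    rw [← Real.rpow_natCast, ← Real.rpow_mul (norm_nonneg _), ← Real.rpow_neg (norm_nonneg _)]
    congr 1
    push_cast
    ring
  have hv' : 0 < |v| := abs_pos.2 hv.ne
  have hw' : 0 < |w| := abs_pos.2 hw.ne'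
  rw [invR, e1, e2, e3, e4, norm_smul, norm_smul, kern, dens, zfac, hz, hz, hz,
    Real.rpow_sub hv', Real.rpow_sub hw', Real.rpow_two, Real.rpow_two, Real.norm_eq_abs,
    Real.norm_eq_abs, Real.mul_rpow (by positivity) (by positivity),
    Real.mul_rpow (by positivity) (by positivity), Real.mul_rpow (by positivity) (by positivity),
    Real.mul_rpow (by positivity) (by positivity), Real.mul_rpow (by positivity) (by positivity)]
  have h1 := (Real.rpow_pos_of_pos hv' p).ne'
  have h2 := (Real.rpow_pos_of_pos hw' p).ne'
  simp only [mul_inv, div_eq_mul_inv, inv_inv]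
  ring

lemma measurable_invR (p q : ℝ) :
    Measurable fun z : EuclideanSpace ℝ (Fin n) × EuclideanSpace ℝ (Fin n) ×
      EuclideanSpace ℝ (Fin n) => invR p q z.1 z.2.1 z.2.2 := by
  unfold invR wedgeNorm
  fun_prop

lemma menger_congr {γ γ' f : ℝ → EuclideanSpace ℝ (Fin n)} (p q : ℝ) (h : γ' =ᵐ[volume] f) :
    menger p q γ γ' = menger p q γ f := by
  have h' : γ' =ᵐ[volume.restrict (Ico (0:ℝ) 1)] f := ae_restrict_of_ae h
  refine lintegral_congr_ae (h'.mono fun u₁ e1 => ?_)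
  refine lintegral_congr_ae (h'.mono fun u₂ e2 => ?_)
  refine lintegral_congr_ae (h'.mono fun u₃ e3 => ?_)
  simp only [e1, e2, e3]

lemma menger_eq {γ f : ℝ → EuclideanSpace ℝ (Fin n)} (hper : Function.Periodic γ 1)
    (hc : Continuous f) (hf : ∀ u, HasDerivAt γ (f u) u) (p : ℝ) :
    menger p 2 γ f = 6 * ∫⁻ z, ENNReal.ofReal (kern p z.2 * dens p f z.1 z.2.1 z.2.2)
      ∂paramMeasure := by
  have hγc : Continuous γ := continuous_iff_continuousAt.2 fun u => (hf u).continuousAt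
  have hfper := periodic_deriv hper hf
  have hm : Measurable fun z : ℝ × ℝ × ℝ => invR p 2 (γ z.1) (γ z.2.1) (γ z.2.2) :=
    (measurable_invR p 2).comp (f := fun z : ℝ × ℝ × ℝ => (γ z.1, γ z.2.1, γ z.2.2))
      (Continuous.measurable (by fun_prop))
  have hfm := hc.measurable
  rw [menger, lintegral_triple (Φ := fun u₁ u₂ u₃ => ENNReal.ofReal
    (‖f u₁‖ * ‖f u₂‖ * ‖f u₃‖ * invR p 2 (γ u₁) (γ u₂) (γ u₃)))]
  · congr 1
    refine lintegral_congr_ae ?_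
    filter_upwards [ae_paramMeasure] with z hz
    rw [speed_mul_invR_eq hc hf p z.1 hz.1.2 hz.2.1.1]
  · fun_prop
  · intro a b c
    rw [invR_symm₁₂, mul_comm ‖f a‖]
  · intro a b c
    rw [invR_symm₂₃, mul_right_comm ‖f a‖]
  · intro a b c
    rw [hper, hfper]

lemma dens_nonneg (p : ℝ) (f : ℝ → EuclideanSpace ℝ (Fin n)) (u v w : ℝ) : 0 ≤ dens p f u v w :=
  mul_nonneg (mul_nonneg (by positivity) (zfac_nonneg _ _ _ _)) (wedgeSq_nonneg _ _)

lemma toReal_menger {γ f : ℝ → EuclideanSpace ℝ (Fin n)} (hper : Function.Periodic γ 1)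
    (hc : Continuous f) (hf : ∀ u, HasDerivAt γ (f u) u) (p : ℝ) :
    (menger p 2 γ f).toReal = 6 * ∫ z, kern p z.2 * dens p f z.1 z.2.1 z.2.2 ∂paramMeasure := by
  have hk := measurable_kern p
  have hd := measurable_dens p hc
  rw [menger_eq hper hc hf, ENNReal.toReal_mul, integral_eq_lintegral_of_nonneg_ae]
  · simp
  · exact Eventually.of_forall fun z => mul_nonneg (kern_nonneg _ _) (dens_nonneg _ _ _ _ _)
  · exact Measurable.aestronglyMeasurable (by fun_prop)

lemma inv_smul_sub_eq_avg {γ f : ℝ → EuclideanSpace ℝ (Fin n)} (hc : Continuous f)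
    (hf : ∀ u, HasDerivAt γ (f u) u) {u y : ℝ} (hy : y ≠ 0) :
    y⁻¹ • (γ (u + y) - γ u) = avg f u 0 y := by
  have := sub_eq_smul_avg hc hf u 0 y
  rw [add_zero, sub_zero] at this
  rw [this, inv_smul_smul₀ hy]

lemma Qform_eq {γ h f g : ℝ → EuclideanSpace ℝ (Fin n)} (hfc : Continuous f) (hgc : Continuous g)
    (hf : ∀ u, HasDerivAt γ (f u) u) (hg : ∀ u, HasDerivAt h (g u) u) {p : ℝ}
    (hi : Integrable (fun z : ℝ × ℝ × ℝ => kern p z.2 *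
      inner ℝ (avg f z.1 0 z.2.2 - avg f z.1 0 z.2.1) (avg g z.1 0 z.2.2 - avg g z.1 0 z.2.1))
      paramMeasure) :
    Qform p γ h = ∫ z, kern p z.2 * inner ℝ (avg f z.1 0 z.2.2 - avg f z.1 0 z.2.1)
      (avg g z.1 0 z.2.2 - avg g z.1 0 z.2.1) ∂paramMeasure := by
  unfold paramMeasure at hi ⊢
  rw [Qform, integral_prod _ hi]
  refine integral_congr_ae (Eventually.of_forall fun u => ?_)
  refine setIntegral_congr_fun measurableSet_domainD fun x hx => ?_
  simp only [inv_smul_sub_eq_avg hfc hf hx.1.2.ne, inv_smul_sub_eq_avg hfc hf hx.2.1.1.ne', inv_smul_sub_eq_avg hgc hg hx.1.2.ne,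
    inv_smul_sub_eq_avg hgc hg hx.2.1.1.ne', kern]
  rw [div_eq_inv_mul]

lemma exists_norm_le_of_periodic {f : ℝ → EuclideanSpace ℝ (Fin n)} (hc : Continuous f)
    (hper : Function.Periodic f 1) : ∃ N, ∀ t, ‖f t‖ ≤ N := by
  obtain ⟨N, hN⟩ := (isCompact_Icc (a := (0:ℝ)) (b := 1)).exists_bound_of_continuousOn
    hc.continuousOn
  refine ⟨N, fun t => ?_⟩
  obtain ⟨y, hy, e⟩ := hper.exists_mem_Ico₀ one_pos t
  rw [e]
  exact hN y (Ico_subset_Icc_self hy)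

lemma dCoef_summable_zero {γ : ℝ → EuclideanSpace ℝ (Fin n)} {p : ℝ} (hp : 7 / 3 < p)
    (h : Summable fun k : ℤ => (1 + (k:ℝ) ^ 2) ^ (3 * p / 2 - 2) * ‖fourierCoef γ k‖ ^ 2) :
    Summable (dCoef γ) ∧ (Summable fun k => dCoef γ k ^ 2) ∧
      Summable fun k => dCoef γ k ^ 2 * |(k:ℝ)| ^ (3 * p - 6) := by
  simpa [wt_exp_zero] using dCoef_summable (σ := 0) hp (by simpa using h)

/-- The remainder estimate for variations with integrable derivative. -/
theorem exists_remainder_le_sobNorm {p σ ε : ℝ} (hp : p ∈ Ioo (7/3 : ℝ) (8/3)) (hσ : 0 ≤ σ)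
    (hε : 0 < ε) {γ f : ℝ → EuclideanSpace ℝ (Fin n)} (hper : Function.Periodic γ 1)
    (hf : ∀ u, HasDerivAt γ (f u) u) (hfc : HasCoef (dCoef γ) f) (h1 : ∀ u, ‖f u‖ = 1)
    (hinj : InjCircle γ)
    (hreg : Summable fun k : ℤ =>
      (1 + (k:ℝ) ^ 2) ^ (3 * p / 2 - 2 + σ) * ‖fourierCoef γ k‖ ^ 2) :
    ∃ C, 0 ≤ C ∧ ∀ h h' : ℝ → EuclideanSpace ℝ (Fin n), CurvePair h h' →
      IntervalIntegrable h' volume 0 1 →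
      (Summable fun k : ℤ => (1 + (k:ℝ) ^ 2) ^ (3 * p / 2 - 2) * ‖fourierCoef h k‖ ^ 2) →
      (Summable fun k : ℤ => (1 + (k:ℝ) ^ 2) ^ (3 / 2 - σ + ε) * ‖fourierCoef h k‖ ^ 2) →
      ∀ L : ℝ, Tendsto (fun τ : ℝ =>
          ((menger p 2 (fun u => γ u + τ • h u) (fun u => f u + τ • h' u)).toReal
            - (menger p 2 γ f).toReal) / τ) (𝓝[≠] (0:ℝ)) (𝓝 L) →
        |(1 / 12) * L - Qform p γ h| ≤ C * fourierSobNorm (3 / 2 - σ + ε) h := by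
  have hp2 : p ∈ Ioo (2:ℝ) (8/3) := ⟨by linarith [hp.1], hp.2⟩
  obtain ⟨hGs, hG2, hG3⟩ := dCoef_summable hp.1 hreg
  obtain ⟨hG0, hG02, hG03⟩ := dCoef_summable_zero hp.1 (γ := γ) <| by
    refine Summable.of_nonneg_of_le (fun k => by positivity) (fun k => ?_) hreg
    gcongr
    · linarith [sq_nonneg (k:ℝ)]
    · linarith
  have hf0 := hfc.continuous hG0
  obtain ⟨c₀, hc₀, hc⟩ := exists_avgGe hf0 hper hf h1 hinj
  obtain ⟨C, hC, hb⟩ := exists_remainder_le hp2 hσ (dCoef_nonneg γ) hGs hG2 hG3 hfc h1 hc₀ hc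
  refine ⟨C * (√(∑' k : ℤ, wt (-(1 / 2 + ε)) k ^ 2) *
    √((2 * Real.pi) ^ 2 * 2 ^ |3 / 2 - σ + ε|)), by positivity, ?_⟩
  intro h h' hh hi hs hsn L hL
  obtain ⟨hH0, hH02, hH03⟩ := dCoef_summable_zero hp.1 hs
  obtain ⟨g, hgc, hg⟩ := exists_hasCoef_deriv (hh.continuous hi) hh.periodic hH0
  have hg0 := hgc.continuous hH0
  have hae := hh.ae_eq_deriv hi hg
  obtain ⟨N, hN⟩ := exists_norm_le_of_periodic hg0 (periodic_deriv hh.periodic hg)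
  obtain ⟨hid, hder⟩ := hasDerivAt_integral_dens hp2 (dCoef_nonneg γ) hG0 hG02 hG03
    (dCoef_nonneg h) hH0 hH02 hH03 hfc hgc h1 hN hc₀ hc
  have hii := integrable_kern_mul_inner hf0 hg0
    (integrable_kern_mul_norm_sq hp2 (dCoef_nonneg γ) hG0 hG02 hG03 hfc)
    (integrable_kern_mul_norm_sq hp2 (dCoef_nonneg h) hH0 hH02 hH03 hgc)
  have hm : ∀ τ : ℝ, (menger p 2 (fun u => γ u + τ • h u) (fun u => f u + τ • h' u)).toReal =
      6 * ∫ z, kern p z.2 * dens p (fun t => f t + τ • g t) z.1 z.2.1 z.2.2 ∂paramMeasure := by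
    intro τ
    rw [menger_congr p 2 (f := fun u => f u + τ • g u) (hae.mono fun u hu => by simp only [hu])]
    have hτ : Function.Periodic (fun u => γ u + τ • h u) 1 := fun u => by
      simp only [hper u, hh.periodic u]
    exact toReal_menger hτ (by fun_prop) (fun u => (hf u).add ((hg u).const_smul τ)) p
  have hm0 := hm 0
  simp only [zero_smul, add_zero] at hm0
  have hL' := (hder.const_mul 6).tendsto_slope_zero
  have hLe : L = 6 * ∫ z, kern p z.2 * dDens p f g z.1 z.2.1 z.2.2 ∂paramMeasure := by
    refine tendsto_nhds_unique hL (hL'.congr fun τ => ?_)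
    rw [hm τ, hm0, smul_eq_mul, div_eq_inv_mul, zero_add]
    simp only [zero_smul, add_zero]
  have hsum : Summable fun k => (wt (1 / 2 + ε + -σ) k * dCoef h k) ^ 2 := by
    simpa [show 3 / 2 - σ + ε - 1 = 1 / 2 + ε + -σ by ring] using summable_wt_mul_dCoef_sq hsn
  obtain ⟨hw, hwle⟩ := tsum_mul_wt_le (dCoef_nonneg h) (s := -σ) (t := 1 / 2 + ε)
    (by linarith) hsum
  have hsq := sqrt_tsum_wt_mul_dCoef_sq_le hsn
  rw [show 3 / 2 - σ + ε - 1 = 1 / 2 + ε + -σ by ring] at hsq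
  have hmain := hb (dCoef h) g (dCoef_nonneg h) hgc hH0 hw hid hii
  rw [Qform_eq hf0 hg0 hf hg hii, hLe, ← mul_assoc, show (1 / 12 * 6 : ℝ) = 1 / 2 by norm_num]
  refine hmain.trans ?_
  rw [mul_assoc, mul_assoc]
  gcongr
  refine hwle.trans ?_
  gcongr

lemma CurvePair.eq_const {h h' : ℝ → EuclideanSpace ℝ (Fin n)} (hh : CurvePair h h')
    (hi : ¬ IntervalIntegrable h' volume 0 1) (u : ℝ) : h u = h 0 := by
  obtain ⟨k, hk⟩ := exists_nat_ge (1 - u)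
  have hk' : 1 ≤ u + k := by linarith
  have h1 : h (u + k) = h u := by simpa using hh.periodic.nat_mul k u
  rw [← h1, hh.primitive, intervalIntegral.integral_undef, add_zero]
  intro hc
  refine hi (hc.mono_set ?_)
  rw [uIcc_of_le zero_le_one, uIcc_of_le (by linarith)]
  exact Icc_subset_Icc_right hk'

lemma Qform_const (p : ℝ) (γ : ℝ → EuclideanSpace ℝ (Fin n)) {h : ℝ → EuclideanSpace ℝ (Fin n)}
    (hh : ∀ u, h u = h 0) : Qform p γ h = 0 := by
  unfold Qform
  have : ∀ a b, h a - h b = 0 := fun a b => by rw [hh a, hh b, sub_self]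
  simp [this]

lemma menger_add_const (p q : ℝ) (γ F : ℝ → EuclideanSpace ℝ (Fin n))
    (c : EuclideanSpace ℝ (Fin n)) : menger p q (fun u => γ u + c) F = menger p q γ F := by
  simp [menger, invR]

lemma smul_eq_smul_of_wedgeNorm_eq_zero {a e : EuclideanSpace ℝ (Fin n)}
    (h : wedgeNorm a e = 0) : ‖e‖ ^ 2 • a = (inner ℝ a e : ℝ) • e := by
  have h0 : wedgeSq a e = 0 := le_antisymm (Real.sqrt_eq_zero'.1 h) (wedgeSq_nonneg a e)
  rw [← sub_eq_zero, ← norm_eq_zero, ← sq_eq_zero_iff, norm_sub_sq_real, norm_smul, norm_smul,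
    real_inner_smul_left, real_inner_smul_right]
  simp only [Real.norm_eq_abs, mul_pow, sq_abs]
  rw [wedgeSq] at h0
  linear_combination ‖e‖ ^ 2 * h0

/-- A simple closed curve is not contained in a line. -/
lemma exists_wedgeNorm_pos {γ : ℝ → EuclideanSpace ℝ (Fin n)} (hc : Continuous γ)
    (hper : Function.Periodic γ 1) (hinj : InjCircle γ) (u₀ : ℝ) :
    ∃ u ∈ Ico (0:ℝ) 1, ∃ v ∈ Ico (0:ℝ) 1, 0 < wedgeNorm (γ u - γ u₀) (γ v - γ u₀) := by
  have half : ∀ u, γ (u + 1 / 2) ≠ γ u := fun u hu => by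
    obtain ⟨k, hk⟩ := hinj _ _ hu
    have h2 : (2 * k + 1 : ℝ) = 0 := by linarith
    have h3 : 2 * k + 1 = 0 := by exact_mod_cast h2
    omega
  by_contra! hcon
  have hcol : ∀ u v, wedgeNorm (γ u - γ u₀) (γ v - γ u₀) = 0 := fun u v => by
    obtain ⟨u', hu', e⟩ := hper.exists_mem_Ico₀ one_pos u
    obtain ⟨v', hv', e'⟩ := hper.exists_mem_Ico₀ one_pos v
    rw [e, e']
    exact le_antisymm (hcon u' hu' v' hv') (Real.sqrt_nonneg _)
  set e := γ (u₀ + 1 / 2) - γ u₀ with he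
  have he0 : e ≠ 0 := sub_ne_zero.2 (half u₀)
  let ψ : ℝ → ℝ := fun u => inner ℝ (γ (u + 1 / 2) - γ u) e
  have hψ : Continuous ψ := by fun_prop
  have hψ1 : ψ (1 / 2) = -ψ 0 := by
    have : γ (1 / 2 + 1 / 2) = γ 0 := by rw [← hper 0]; norm_num
    simp only [ψ, this, zero_add, ← inner_neg_left, neg_sub]
  obtain ⟨u, hu⟩ : ∃ u, ψ u = 0 := by
    rcases le_total (ψ 0) 0 with h | h
    · exact mem_range_of_exists_le_of_exists_ge hψ ⟨0, h⟩ ⟨1 / 2, by linarith⟩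
    · exact mem_range_of_exists_le_of_exists_ge hψ ⟨1 / 2, by linarith⟩ ⟨0, h⟩
  have h1 := smul_eq_smul_of_wedgeNorm_eq_zero (hcol (u + 1 / 2) (u₀ + 1 / 2))
  have h2 := smul_eq_smul_of_wedgeNorm_eq_zero (hcol u (u₀ + 1 / 2))
  rw [← he] at h1 h2
  have h3 : inner ℝ (γ (u + 1 / 2) - γ u₀) e = inner ℝ (γ u - γ u₀) e := by
    rw [← sub_eq_zero, ← inner_sub_left, sub_sub_sub_cancel_right]
    exact hu
  rw [h3, ← h2] at h1
  exact half u (sub_left_injective (smul_right_injective _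
    (pow_ne_zero 2 (norm_ne_zero_iff.2 he0)) h1))

lemma ne_of_wedgeNorm_pos {x y z : EuclideanSpace ℝ (Fin n)}
    (h : 0 < wedgeNorm (y - x) (z - x)) : 0 < ‖y - z‖ * ‖y - x‖ * ‖z - x‖ := by
  have h1 : y - z ≠ 0 := fun e => by
    rw [sub_eq_zero.1 e, wedgeNorm, real_inner_self_eq_norm_sq] at h
    ring_nf at h
    simp at h
  have h2 : y - x ≠ 0 := fun e => by simp [e, wedgeNorm] at h
  have h3 : z - x ≠ 0 := fun e => by simp [e, wedgeNorm] at h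
  positivity

lemma exists_nhds_le_of_continuousAt {F : ℝ × ℝ × ℝ → ℝ} {a b c : ℝ}
    (hF : ContinuousAt F (a, b, c)) {δ : ℝ} (hδ : δ < F (a, b, c)) :
    ∃ A ∈ 𝓝 a, ∃ B ∈ 𝓝 b, ∃ C ∈ 𝓝 c, ∀ x ∈ A, ∀ y ∈ B, ∀ z ∈ C, δ ≤ F (x, y, z) := by
  have hev := hF.eventually_const_le hδ
  rw [nhds_prod_eq, nhds_prod_eq] at hev
  obtain ⟨A, hA, S, hS, hAS⟩ := eventually_prod_iff.1 hev
  obtain ⟨B, hB, C, hC, hBC⟩ := eventually_prod_iff.1 hS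
  exact ⟨{x | A x}, hA, {y | B y}, hB, {z | C z}, hC, fun x hx y hy z hz => hAS hx (hBC hy hz)⟩

lemma exists_nhds_le_invR (p : ℝ) {γ : ℝ → EuclideanSpace ℝ (Fin n)} (hc : Continuous γ)
    {a b c : ℝ} (h : 0 < wedgeNorm (γ b - γ a) (γ c - γ a)) :
    ∃ δ > 0, ∃ A ∈ 𝓝 a, ∃ B ∈ 𝓝 b, ∃ C ∈ 𝓝 c, ∀ x ∈ A, ∀ y ∈ B, ∀ z ∈ C,
      δ ≤ invR p 2 (γ x) (γ y) (γ z) := by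
  have hd := ne_of_wedgeNorm_pos h
  have hpos : 0 < invR p 2 (γ a) (γ b) (γ c) :=
    div_pos (Real.rpow_pos_of_pos h _) (Real.rpow_pos_of_pos hd _)
  have hw : Continuous fun t : ℝ × ℝ × ℝ =>
      wedgeNorm (γ t.2.1 - γ t.1) (γ t.2.2 - γ t.1) := by
    unfold wedgeNorm
    fun_prop
  have hn : Continuous fun t : ℝ × ℝ × ℝ =>
      ‖γ t.2.1 - γ t.2.2‖ * ‖γ t.2.1 - γ t.1‖ * ‖γ t.2.2 - γ t.1‖ := by fun_prop
  have hw' := hw.continuousAt.rpow_const (x := (a, b, c)) (p := 2) (Or.inl h.ne')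
  have hn' := hn.continuousAt.rpow_const (x := (a, b, c)) (p := p) (Or.inl hd.ne')
  exact ⟨_, half_pos hpos, exists_nhds_le_of_continuousAt
    (F := fun t => invR p 2 (γ t.1) (γ t.2.1) (γ t.2.2))
    (hw'.div hn' (Real.rpow_pos_of_pos hd _).ne') (half_lt_self hpos)⟩

lemma eventually_setLIntegral_ne_zero {f g : ℝ → EuclideanSpace ℝ (Fin n)} (hf : Measurable f)
    (hg : Measurable g) (hf0 : ∀ u, f u ≠ 0) {A : Set ℝ} (hA : volume A ≠ 0) :
    ∀ᶠ τ : ℝ in 𝓝[≠] 0, ∫⁻ u in A, ‖f u + τ • g u‖ₑ ≠ 0 := by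
  have hS : {τ : ℝ | ∫⁻ u in A, ‖f u + τ • g u‖ₑ = 0}.Subsingleton := by
    intro τ hτ τ' hτ'
    simp only [mem_ofPred_eq] at hτ hτ'
    rw [lintegral_eq_zero_iff (by fun_prop)] at hτ hτ'
    by_contra hne
    refine hA ?_
    have : ∀ᵐ u ∂volume.restrict A, False := by
      filter_upwards [hτ, hτ'] with u h1 h2
      simp only [Pi.zero_apply, enorm_eq_zero] at h1 h2
      have h3 : (τ - τ') • g u = 0 := by
        rw [sub_smul, ← sub_eq_zero.2 (h1.trans h2.symm)]
        abel
      rcases smul_eq_zero.1 h3 with h | h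
      · exact hne (sub_eq_zero.1 h)
      · rw [h, smul_zero, add_zero] at h1
        exact hf0 u h1
    simpa [ae_iff] using this
  exact nhdsNE_le_cofinite 0 hS.finite.eventually_cofinite_notMem

lemma volume_inter_Ico_ne_zero {b : ℝ} (hb : b ∈ Ico (0:ℝ) 1) {B : Set ℝ} (hB : B ∈ 𝓝 b) :
    volume (B ∩ Ico (0:ℝ) 1) ≠ 0 := by
  obtain ⟨c, hc, hs⟩ := mem_nhdsGE_iff_exists_Ico_subset.1
    (inter_mem (mem_nhdsWithin_of_mem_nhds hB) (Ico_mem_nhdsGE hb.2))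
  refine ((by simpa using hc : 0 < volume (Ico b c)).trans_le (measure_mono ?_)).ne'
  exact fun x hx => ⟨(hs hx).1, hb.1.trans hx.1, (hs hx).2.2⟩

lemma le_menger {p δ : ℝ} {γ F : ℝ → EuclideanSpace ℝ (Fin n)} (hF : Measurable F)
    {A B C : Set ℝ}
    (h : ∀ x ∈ A, ∀ y ∈ B, ∀ z ∈ C, δ ≤ invR p 2 (γ x) (γ y) (γ z)) (hA : MeasurableSet A)
    (hB : MeasurableSet B) (hC : MeasurableSet C) (hA1 : A ⊆ Ico 0 1) (hB1 : B ⊆ Ico 0 1)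
    (hC1 : C ⊆ Ico 0 1) :
    (∫⁻ u in A, ‖F u‖ₑ) * ((∫⁻ u in B, ‖F u‖ₑ) * ((∫⁻ u in C, ‖F u‖ₑ) * ENNReal.ofReal δ)) ≤
      menger p 2 γ F := by
  have hm : Measurable fun u => ‖F u‖ₑ := by fun_prop
  rw [← lintegral_mul_const _ hm]
  refine le_trans ?_ (lintegral_mono_set hA1)
  refine setLIntegral_mono' hA fun x hx => ?_
  rw [← lintegral_mul_const _ hm, ← lintegral_const_mul _ (by fun_prop)]
  refine le_trans ?_ (lintegral_mono_set hB1)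
  refine setLIntegral_mono' hB fun y hy => ?_
  rw [← lintegral_mul_const _ hm, ← lintegral_const_mul _ (by fun_prop),
    ← lintegral_const_mul _ (by fun_prop)]
  refine le_trans ?_ (lintegral_mono_set hC1)
  refine setLIntegral_mono' hC fun z hz => ?_
  rw [ENNReal.ofReal_mul (by positivity), ENNReal.ofReal_mul (by positivity),
    ENNReal.ofReal_mul (by positivity), ofReal_norm, ofReal_norm, ofReal_norm, mul_assoc, mul_assoc]
  gcongr
  exact h x hx y hy z hz

/-- If the derivative of the variation is not integrable, the energy of the perturbed curve is
infinite. -/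
lemma eventually_menger_eq_top (p : ℝ) {γ f h' : ℝ → EuclideanSpace ℝ (Fin n)} (hγ : Continuous γ)
    (hper : Function.Periodic γ 1) (hinj : InjCircle γ) (hf : Continuous f) (hf0 : ∀ u, f u ≠ 0)
    (hh : Measurable h') (hi : ¬ IntervalIntegrable h' volume 0 1) :
    ∀ᶠ τ : ℝ in 𝓝[≠] 0, menger p 2 γ (fun u => f u + τ • h' u) = ∞ := by
  obtain ⟨a, -, ha⟩ : ∃ a ∈ Icc (0:ℝ) 1, ¬ IntegrableAtFilter h' (𝓝[Icc 0 1] a) := by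
    by_contra! hcon
    refine hi ((intervalIntegrable_iff_integrableOn_Icc_of_le zero_le_one).2 ?_)
    exact LocallyIntegrableOn.integrableOn_isCompact hcon isCompact_Icc
  obtain ⟨b, hb, c, hc, hw⟩ := exists_wedgeNorm_pos hγ hper hinj a
  obtain ⟨δ, hδ, A, hA, B, hB, C, hC, hge⟩ := exists_nhds_le_invR p hγ hw
  obtain ⟨A', hA', hAo, haA⟩ := mem_nhds_iff.1 hA
  obtain ⟨B', hB', hBo, hbB⟩ := mem_nhds_iff.1 hB
  obtain ⟨C', hC', hCo, hcC⟩ := mem_nhds_iff.1 hC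
  have hm := hf.measurable
  filter_upwards [self_mem_nhdsWithin,
    eventually_setLIntegral_ne_zero hm hh hf0 (volume_inter_Ico_ne_zero hb (hBo.mem_nhds hbB)),
    eventually_setLIntegral_ne_zero hm hh hf0 (volume_inter_Ico_ne_zero hc (hCo.mem_nhds hcC))]
    with τ hτ h2 h3
  have hFm : Measurable fun u => f u + τ • h' u := by fun_prop
  have h1 : ∫⁻ u in A' ∩ Ico 0 1, ‖f u + τ • h' u‖ₑ = ∞ := by
    by_contra hfin
    refine ha ⟨A' ∩ Icc 0 1, inter_mem (mem_nhdsWithin_of_mem_nhds (hAo.mem_nhds haA))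
      self_mem_nhdsWithin, ?_⟩
    have hF : IntegrableOn (fun u => f u + τ • h' u) (A' ∩ Ico 0 1) :=
      ⟨hFm.aestronglyMeasurable, lt_top_iff_ne_top.2 hfin⟩
    have hf1 : IntegrableOn f (A' ∩ Ico 0 1) :=
      (hf.integrableOn_Icc (a := 0) (b := 1)).mono_set fun x hx => Ico_subset_Icc_self hx.2
    have hh1 : IntegrableOn h' (A' ∩ Ico 0 1) := by
      refine ((hF.sub hf1).smul τ⁻¹).congr (Eventually.of_forall fun u => ?_)
      simp [inv_smul_smul₀ (show τ ≠ 0 from hτ)]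
    exact hh1.congr_set_ae ((ae_eq_refl A').inter Ico_ae_eq_Icc.symm)
  have hle := le_menger (p := p) (γ := γ) hFm (A := A' ∩ Ico 0 1) (B := B' ∩ Ico 0 1)
    (C := C' ∩ Ico 0 1) (fun x hx y hy z hz => hge x (hA' hx.1) y (hB' hy.1) z (hC' hz.1))
    (hAo.measurableSet.inter measurableSet_Ico) (hBo.measurableSet.inter measurableSet_Ico)
    (hCo.measurableSet.inter measurableSet_Ico) inter_subset_right inter_subset_right
    inter_subset_right
  rw [h1, ENNReal.top_mul (mul_ne_zero h2 (mul_ne_zero h3 (by simpa using hδ)))] at hle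
  exact top_le_iff.1 hle

lemma eq_zero_of_tendsto_div {E L : ℝ} (h : Tendsto (fun τ : ℝ => E / τ) (𝓝[≠] 0) (𝓝 L)) :
    L = 0 := by
  have h0 : Tendsto (fun τ : ℝ => τ) (𝓝[≠] 0) (𝓝 0) := tendsto_nhdsWithin_of_tendsto_nhds tendsto_id
  have h1 : Tendsto (fun τ : ℝ => E / τ * τ) (𝓝[≠] 0) (𝓝 (L * 0)) := h.mul h0
  have h2 : Tendsto (fun τ : ℝ => E / τ * τ) (𝓝[≠] 0) (𝓝 E) :=
    tendsto_const_nhds.congr' (eventually_mem_nhdsWithin.mono fun τ hτ =>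
      (div_mul_cancel₀ E hτ).symm)
  have hE : E = 0 := by simpa using tendsto_nhds_unique h2 h1
  simpa [hE, eq_comm] using h

end Development

/-- **Regularity of the remainder term.** For `p ∈ (7/3,8/3)`, `σ ≥ 0`,
`ε > 0` and an injective arc-length parametrized curve
`γ ∈ W^{(3p-4)/2+σ,2}(ℝ/ℤ,ℝⁿ)`, the remainder
`R^p(γ;h) = (1/12) δE_{p,2}(γ;h) - Q^{(p)}(γ,h)` satisfies
`|R^p(γ;h)| ≤ C ‖h‖_{W^{3/2-σ+ε,2}}` with `C` independent of `h`; i.e. it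
extends to a bounded linear functional on `W^{3/2-σ+ε,2}(ℝ/ℤ,ℝⁿ)`. -/
theorem remainder_is_lower_order (n : ℕ) (p σ ε : ℝ)
    (hp : p ∈ Ioo (7/3 : ℝ) (8/3)) (hσ : 0 ≤ σ) (hε : 0 < ε)
    (γ γ' : ℝ → EuclideanSpace ℝ (Fin n))
    (hγ : CurvePair γ γ') (harc : ∀ᵐ u : ℝ, ‖γ' u‖ = 1) (hinj : InjCircle γ)
    (hreg : Summable (fun k : ℤ =>
      (1 + (k:ℝ)^2) ^ ((3*p - 4)/2 + σ) * ‖fourierCoef γ k‖^2)) :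
    ∃ C : ℝ, ∀ h h' : ℝ → EuclideanSpace ℝ (Fin n),
      CurvePair h h' →
      Summable (fun k : ℤ =>
        (1 + (k:ℝ)^2) ^ (3*p/2 - 2) * ‖fourierCoef h k‖^2) →
      Summable (fun k : ℤ =>
        (1 + (k:ℝ)^2) ^ (3/2 - σ + ε) * ‖fourierCoef h k‖^2) →
      ∀ L : ℝ,
        Tendsto (fun τ : ℝ =>
            ((menger p 2 (fun u => γ u + τ • h u) (fun u => γ' u + τ • h' u)).toReal
              - (menger p 2 γ γ').toReal) / τ)
          (𝓝[≠] (0:ℝ)) (𝓝 L) →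
        |(1/12) * L - Qform p γ h| ≤ C * fourierSobNorm (3/2 - σ + ε) h := by

  have hreg' : Summable fun k : ℤ =>
      (1 + (k:ℝ) ^ 2) ^ (3 * p / 2 - 2 + σ) * ‖fourierCoef γ k‖ ^ 2 := by
    simpa [show (3 * p - 4) / 2 + σ = 3 * p / 2 - 2 + σ by ring] using hreg
  have hγi : IntervalIntegrable γ' volume 0 1 := by
    rw [intervalIntegrable_iff_integrableOn_Icc_of_le zero_le_one]
    refine Integrable.of_bound hγ.meas'.aestronglyMeasurable 1 (ae_restrict_of_ae ?_)
    exact harc.mono fun u hu => hu.le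
  have hγc := hγ.continuous hγi
  have hs : Summable (dCoef γ) := by
    refine Summable.of_nonneg_of_le (dCoef_nonneg γ) (fun k => ?_) (dCoef_summable hp.1 hreg').1
    have := wt_mono hσ k
    rw [wt_exp_zero] at this
    exact le_mul_of_one_le_right (dCoef_nonneg γ k) this
  obtain ⟨f, hfc, hf⟩ := exists_hasCoef_deriv hγc hγ.periodic hs
  have hf0 := hfc.continuous hs
  have hae := hγ.ae_eq_deriv hγi hf
  have h1 : ∀ u, ‖f u‖ = 1 := by
    refine congrFun ((Continuous.ae_eq_iff_eq volume hf0.norm continuous_const).1 ?_)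
    filter_upwards [harc, hae] with u hu hu'
    rw [← hu', hu]
  obtain ⟨C, hC, hb⟩ := exists_remainder_le_sobNorm hp hσ hε hγ.periodic hf hfc h1 hinj hreg'
  refine ⟨C, fun h h' hh hs1 hs2 L hL => ?_⟩
  have hm : ∀ τ : ℝ, menger p 2 (fun u => γ u + τ • h u) (fun u => γ' u + τ • h' u) =
      menger p 2 (fun u => γ u + τ • h u) (fun u => f u + τ • h' u) := fun τ =>
    menger_congr p 2 (hae.mono fun u hu => by simp only [hu])
  simp only [hm, menger_congr p 2 hae] at hL
  by_cases hi : IntervalIntegrable h' volume 0 1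
  · exact hb h h' hh hi hs1 hs2 L hL
  have hconst := hh.eq_const hi
  have hL0 : L = 0 := by
    refine eq_zero_of_tendsto_div (E := -(menger p 2 γ f).toReal) (hL.congr' ?_)
    filter_upwards [eventually_menger_eq_top p hγc hγ.periodic hinj hf0
      (fun u => norm_ne_zero_iff.1 ((h1 u).trans_ne one_ne_zero)) hh.meas' hi] with τ hτ
    have : (fun u => γ u + τ • h u) = fun u => γ u + τ • h 0 := funext fun u => by rw [hconst u]
    rw [this, menger_add_const, hτ, ENNReal.toReal_top, zero_sub]
  rw [hL0, Qform_const p γ hconst, mul_zero, sub_zero, abs_zero]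
  exact mul_nonneg hC (Real.sqrt_nonneg _)
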